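/- arXiv:1706.09924 — 9 statements merged into one kernel-verified Lean document; each statement's English description precedes it below -/
import Mathlib

section
/- For every x ∈ ℝ^d with x ≠ 0, the function y ↦ π^{-d/2} (Γ(d/2)^2 / (Γ((d-α)/2) Γ(α/2))) · (|x|^2 - |y|^2)^{α/2} / (|x - y|^d |y|^α) on {y ∈ ℝ^d : 0 < |y| < |x|} is a probability density; that is, ∫_{0<|y|<|x|} (|x|^2 - |y|^2)^{α/2} / (|x - y|^d |y|^α) dy = π^{d/2} Γ((d-α)/2) Γ(α/2) / Γ(d/2)^2. (This is the total-mass identity for the law of the point of closest reach to the origin in Theorem 1.1.) -/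
open MeasureTheory Real Set

/-! In polar coordinates about a point `p` with `‖p‖ < a`, the integral of `‖y - p‖ ^ (-n)` over the
shell `a < ‖y‖ ≤ b` of an `n`-dimensional space is the spherical integral of `log (ℓ b / ℓ a)`,
where `ℓ R` is the length of the part inside the ball of radius `R` of a ray from `p`. The
reflection `y ↦ -y` exchanges the rays from `p` and from `-p` in a given direction, whose lengths
multiply to the power `R ^ 2 - ‖p‖ ^ 2` of `p`; this evaluates the spherical integral.
Differentiating in `b` gives the integral of `‖y - p‖ ^ (-n)` over a sphere enclosing `p`. Since
`‖x - r • θ‖ = ‖‖x‖ • θ - (r / ‖x‖) • x‖` for unit vectors `θ`, integrating a radial weight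
against `‖x - y‖ ^ (-n)` over `‖y‖ < ‖x‖` becomes a one-dimensional problem, which for the weight
at hand is a beta integral in `(‖y‖ / ‖x‖) ^ 2`. -/

open Metric Module
open scoped ENNReal

section PolarCoordinates

variable {E : Type*} [NormedAddCommGroup E] [NormedSpace ℝ E] [FiniteDimensional ℝ E]
  [Nontrivial E] [MeasurableSpace E] [BorelSpace E] (μ : Measure E) [μ.IsAddHaarMeasure]

theorem lintegral_eq_lintegral_toSphere_lintegral_Ioi {f : E → ℝ≥0∞} (hf : Measurable f) :
    ∫⁻ y, f y ∂μ = ∫⁻ θ : sphere (0 : E) 1, (∫⁻ r in Ioi (0 : ℝ),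
      ENNReal.ofReal (r ^ (finrank ℝ E - 1)) * f (r • (θ : E))) ∂μ.toSphere := by
  have hpolar : Measurable fun q : sphere (0 : E) 1 × Ioi (0 : ℝ) => f (q.2.1 • (q.1 : E)) :=
    hf.comp (by fun_prop)
  calc ∫⁻ y, f y ∂μ = ∫⁻ y : ({0}ᶜ : Set E), f y ∂(μ.comap Subtype.val) := by
        rw [lintegral_subtype_comap (measurableSet_singleton _).compl, restrict_compl_singleton]
    _ = ∫⁻ q, f (q.2.1 • (q.1 : E)) ∂(μ.toSphere.prod (.volumeIoiPow (finrank ℝ E - 1))) := by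
        rw [← μ.measurePreserving_homeomorphUnitSphereProd.lintegral_comp hpolar]
        refine lintegral_congr fun y => congrArg f ?_
        exact (congrArg Subtype.val ((homeomorphUnitSphereProd E).symm_apply_apply y)).symm
    _ = ∫⁻ θ : sphere (0 : E) 1, (∫⁻ r, f (r.1 • (θ : E))
          ∂(.volumeIoiPow (finrank ℝ E - 1))) ∂μ.toSphere :=
        lintegral_prod _ hpolar.aemeasurable
    _ = _ := by
        refine lintegral_congr fun θ => ?_
        have hray : Measurable fun r : Ioi (0 : ℝ) => f (r.1 • (θ : E)) := hf.comp (by fun_prop)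
        rw [Measure.volumeIoiPow, lintegral_withDensity_eq_lintegral_mul _ (by fun_prop) hray]
        exact lintegral_subtype_comap measurableSet_Ioi fun r : ℝ =>
          ENNReal.ofReal (r ^ (finrank ℝ E - 1)) * f (r • (θ : E))

theorem setLIntegral_preimage_norm_eq_lintegral_lintegral_toSphere {f : E → ℝ≥0∞}
    (hf : Measurable f) {s : Set ℝ} (hs : MeasurableSet s) (hs0 : s ⊆ Ioi 0) :
    ∫⁻ y in norm ⁻¹' s, f y ∂μ = ∫⁻ r in s,
      ENNReal.ofReal (r ^ (finrank ℝ E - 1)) * ∫⁻ θ, f (r • (θ : E)) ∂μ.toSphere := by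
  have hA : MeasurableSet (norm ⁻¹' s : Set E) := measurable_norm hs
  have hindicator : ∀ r ∈ Ioi (0 : ℝ), ∀ θ : sphere (0 : E) 1,
      (norm ⁻¹' s).indicator f (r • (θ : E)) = s.indicator (fun r => f (r • (θ : E))) r := by
    intro r hr θ
    have hnorm : ‖r • (θ : E)‖ = r := by
      rw [norm_smul, norm_eq_of_mem_sphere θ, mul_one, norm_of_nonneg (mem_Ioi.1 hr).le]
    by_cases h : r ∈ s <;> simp [h, hnorm]
  have hfi := hf.indicator hA
  rw [← lintegral_indicator hA, lintegral_eq_lintegral_toSphere_lintegral_Ioi μ hfi,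
    lintegral_lintegral_swap (by fun_prop), ← inter_eq_left.2 hs0,
    ← Measure.restrict_restrict hs, ← lintegral_indicator hs, inter_eq_left.2 hs0]
  refine setLIntegral_congr_fun measurableSet_Ioi fun r hr => ?_
  simp only [hindicator r hr]
  by_cases h : r ∈ s
  · simp only [indicator_of_mem h]
    exact lintegral_const_mul _ (by fun_prop)
  · simp [indicator_of_notMem h]

end PolarCoordinates

section RayExitTime

variable {E : Type*} [NormedAddCommGroup E] [InnerProductSpace ℝ E]

/-- The time at which the unit speed ray `t ↦ p + t • v`, `0 ≤ t`, leaves the closed ball of radius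
`R` about the origin: the positive root of `‖p + t • v‖ ^ 2 = R ^ 2` when `‖v‖ = 1` and
`‖p‖ < R`. -/
noncomputable def rayExitTime (p v : E) (R : ℝ) : ℝ :=
  √(inner ℝ p v ^ 2 + (R ^ 2 - ‖p‖ ^ 2)) - inner ℝ p v

theorem rayExitTime_pos {p : E} (v : E) {R : ℝ} (hR : ‖p‖ < R) : 0 < rayExitTime p v R := by
  have hpow : 0 < R ^ 2 - ‖p‖ ^ 2 := by nlinarith [norm_nonneg p]
  refine sub_pos.2 ((le_abs_self _).trans_lt ?_)
  rw [← sqrt_sq_eq_abs]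
  exact sqrt_lt_sqrt (sq_nonneg _) (by linarith)

theorem rayExitTime_le_rayExitTime (p v : E) {a b : ℝ} (ha : 0 ≤ a) (hab : a ≤ b) :
    rayExitTime p v a ≤ rayExitTime p v b := by
  unfold rayExitTime
  gcongr

theorem norm_add_smul_le_iff_le_rayExitTime {p v : E} (hv : ‖v‖ = 1) {R t : ℝ} (hR : ‖p‖ < R)
    (ht : 0 ≤ t) : ‖p + t • v‖ ≤ R ↔ t ≤ rayExitTime p v R := by
  have hR0 : 0 ≤ R := (norm_nonneg p).trans hR.le
  have hexpand : ‖p + t • v‖ ^ 2 = ‖p‖ ^ 2 - inner ℝ p v ^ 2 + (t + inner ℝ p v) ^ 2 := by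
    rw [norm_add_sq_real, inner_smul_right, norm_smul, hv, mul_one, norm_eq_abs, sq_abs]
    ring
  have hdisc : 0 ≤ inner ℝ p v ^ 2 + (R ^ 2 - ‖p‖ ^ 2) := by nlinarith [norm_nonneg p]
  have hlower : -√(inner ℝ p v ^ 2 + (R ^ 2 - ‖p‖ ^ 2)) ≤ t + inner ℝ p v := by
    have := rayExitTime_pos (-v) hR
    simp only [rayExitTime, inner_neg_right, neg_sq] at this
    linarith
  calc
    ‖p + t • v‖ ≤ R ↔ (t + inner ℝ p v) ^ 2 ≤ inner ℝ p v ^ 2 + (R ^ 2 - ‖p‖ ^ 2) := by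
        rw [← sq_le_sq₀ (norm_nonneg _) hR0, hexpand]
        constructor <;> intro h <;> linarith
    _ ↔ t ≤ rayExitTime p v R := by
        rw [Real.sq_le hdisc, and_iff_right hlower, rayExitTime, le_sub_iff_add_le]

theorem norm_add_smul_mem_Ioc_iff {p v : E} (hv : ‖v‖ = 1) {a b t : ℝ} (ha : ‖p‖ < a)
    (hab : a ≤ b) (ht : 0 ≤ t) :
    ‖p + t • v‖ ∈ Ioc a b ↔ t ∈ Ioc (rayExitTime p v a) (rayExitTime p v b) := by
  simp only [mem_Ioc, ← not_le, norm_add_smul_le_iff_le_rayExitTime hv ha ht,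
    norm_add_smul_le_iff_le_rayExitTime hv (ha.trans_le hab) ht]

/-- The two exit times cut the chord through `p` in direction `v`, so their product is the power of
the point `p` whatever the direction. -/
theorem rayExitTime_mul_rayExitTime_neg {p : E} (v : E) {R : ℝ} (hR : ‖p‖ ≤ R) :
    rayExitTime p v R * rayExitTime (-p) v R = R ^ 2 - ‖p‖ ^ 2 := by
  have hpow : 0 ≤ R ^ 2 - ‖p‖ ^ 2 := by nlinarith [norm_nonneg p]
  simp only [rayExitTime, inner_neg_left, norm_neg, neg_sq]
  linear_combination sq_sqrt (add_nonneg (sq_nonneg (inner ℝ p v)) hpow)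

theorem log_rayExitTime_div_add_log_rayExitTime_neg_div {p : E} (v : E) {a b : ℝ} (ha : ‖p‖ < a)
    (hb : ‖p‖ < b) :
    log (rayExitTime p v b / rayExitTime p v a) + log (rayExitTime (-p) v b / rayExitTime (-p) v a)
      = log ((b ^ 2 - ‖p‖ ^ 2) / (a ^ 2 - ‖p‖ ^ 2)) := by
  have hpos : ∀ {R}, ‖p‖ < R → 0 < rayExitTime p v R ∧ 0 < rayExitTime (-p) v R := fun hR =>
    ⟨rayExitTime_pos v hR, rayExitTime_pos v (by rwa [norm_neg])⟩
  rw [← log_mul (div_pos (hpos hb).1 (hpos ha).1).ne' (div_pos (hpos hb).2 (hpos ha).2).ne',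
    div_mul_div_comm, rayExitTime_mul_rayExitTime_neg v ha.le,
    rayExitTime_mul_rayExitTime_neg v hb.le]

end RayExitTime

section Shell

theorem lintegral_Ioc_inv {a b : ℝ} (ha : 0 < a) (hab : a ≤ b) :
    ∫⁻ t in Ioc a b, ENNReal.ofReal t⁻¹ = ENNReal.ofReal (log (b / a)) := by
  have hint : IntervalIntegrable (fun t : ℝ => t⁻¹) volume a b :=
    intervalIntegral.intervalIntegrable_inv (fun t ht => by
      rw [uIcc_of_le hab] at ht
      exact (ha.trans_le ht.1).ne') continuousOn_id
  rw [← integral_inv_of_pos ha (ha.trans_le hab), intervalIntegral.integral_of_le hab,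
    ofReal_integral_eq_lintegral_ofReal hint.1]
  filter_upwards [ae_restrict_mem measurableSet_Ioc] with t ht
  exact inv_nonneg.2 (ha.trans ht.1).le

theorem setLIntegral_preimage_norm_comp_norm_sub_neg {E : Type*} [NormedAddCommGroup E]
    [MeasurableSpace E] [BorelSpace E] (μ : Measure E) [μ.IsNegInvariant] (s : Set ℝ)
    (f : ℝ → ℝ≥0∞) (p : E) :
    ∫⁻ y in norm ⁻¹' s, f ‖y - -p‖ ∂μ = ∫⁻ y in norm ⁻¹' s, f ‖y - p‖ ∂μ := by
  rw [← (Measure.measurePreserving_neg μ).setLIntegral_comp_preimage_emb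
    (MeasurableEquiv.neg E).measurableEmbedding, ← preimage_comp]
  simp only [Function.comp_def, norm_neg, neg_sub_neg, norm_sub_rev p]

variable {E : Type*} [NormedAddCommGroup E] [InnerProductSpace ℝ E] [FiniteDimensional ℝ E]
  [Nontrivial E] [MeasurableSpace E] [BorelSpace E] (μ : Measure E) [μ.IsAddHaarMeasure]

theorem setLIntegral_shell_inv_norm_sub_pow_eq_lintegral_log {p : E} {a b : ℝ} (ha : ‖p‖ < a)
    (hab : a ≤ b) :
    ∫⁻ y in norm ⁻¹' Ioc a b, ENNReal.ofReal (‖y - p‖ ^ finrank ℝ E)⁻¹ ∂μ =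
      ∫⁻ θ : sphere (0 : E) 1,
        ENNReal.ofReal (log (rayExitTime p θ b / rayExitTime p θ a)) ∂μ.toSphere := by
  have hshell : MeasurableSet (norm ⁻¹' Ioc a b : Set E) := measurable_norm measurableSet_Ioc
  have hmeas : Measurable fun y : E => (norm ⁻¹' Ioc a b).indicator
      (fun y => ENNReal.ofReal (‖y - p‖ ^ finrank ℝ E)⁻¹) (p + y) :=
    (Measurable.indicator (by fun_prop) hshell).comp (measurable_const_add p)
  rw [← lintegral_indicator hshell, ← lintegral_add_left_eq_self _ p,
    lintegral_eq_lintegral_toSphere_lintegral_Ioi μ hmeas]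
  refine lintegral_congr fun θ => ?_
  have hθ := norm_eq_of_mem_sphere θ
  have hexit := rayExitTime_pos (θ : E) ha
  have hradial : ∀ t ∈ Ioi (0 : ℝ), ENNReal.ofReal (t ^ (finrank ℝ E - 1)) *
      (norm ⁻¹' Ioc a b).indicator
        (fun y => ENNReal.ofReal (‖y - p‖ ^ finrank ℝ E)⁻¹) (p + t • (θ : E)) =
      (Ioc (rayExitTime p θ a) (rayExitTime p θ b)).indicator (fun t => ENNReal.ofReal t⁻¹) t := by
    intro t (ht : 0 < t)
    have hjacobian : t ^ (finrank ℝ E - 1) * (‖p + t • (θ : E) - p‖ ^ finrank ℝ E)⁻¹ = t⁻¹ := by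
      rw [add_sub_cancel_left, norm_smul, hθ, mul_one, norm_of_nonneg ht.le,
        ← pow_sub_one_mul (finrank_pos (R := ℝ) (M := E)).ne' t]
      field_simp
    have hmem := norm_add_smul_mem_Ioc_iff hθ ha hab ht.le
    by_cases h : t ∈ Ioc (rayExitTime p θ a) (rayExitTime p θ b)
    · rw [indicator_of_mem (mem_preimage.2 (hmem.2 h)), indicator_of_mem h,
        ← ENNReal.ofReal_mul (by positivity), hjacobian]
    · rw [indicator_of_notMem (mt mem_preimage.1 (mt hmem.1 h)), indicator_of_notMem h, mul_zero]
  rw [setLIntegral_congr_fun measurableSet_Ioi hradial, setLIntegral_indicator measurableSet_Ioc,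
    inter_eq_left.2 (Ioc_subset_Ioi_self.trans (Ioi_subset_Ioi hexit.le)),
    lintegral_Ioc_inv hexit (rayExitTime_le_rayExitTime _ _ ((norm_nonneg p).trans ha.le) hab)]

theorem setLIntegral_shell_inv_norm_sub_pow {p : E} {a b : ℝ} (ha : ‖p‖ < a) (hab : a ≤ b) :
    ∫⁻ y in norm ⁻¹' Ioc a b, ENNReal.ofReal (‖y - p‖ ^ finrank ℝ E)⁻¹ ∂μ =
      ENNReal.ofReal (μ.toSphere.real univ / 2 *
        log ((b ^ 2 - ‖p‖ ^ 2) / (a ^ 2 - ‖p‖ ^ 2))) := by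
  have hneg : ‖-p‖ < a := by rwa [norm_neg]
  have hlog : ∀ {q : E} (v : E), ‖q‖ < a → 0 ≤ log (rayExitTime q v b / rayExitTime q v a) :=
    fun v hq => log_nonneg ((one_le_div (rayExitTime_pos v hq)).2
      (rayExitTime_le_rayExitTime _ v ((norm_nonneg _).trans hq.le) hab))
  set I := ∫⁻ y in norm ⁻¹' Ioc a b, ENNReal.ofReal (‖y - p‖ ^ finrank ℝ E)⁻¹ ∂μ with hI
  have hdouble : I + I = ENNReal.ofReal (log ((b ^ 2 - ‖p‖ ^ 2) / (a ^ 2 - ‖p‖ ^ 2))) *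
      μ.toSphere univ :=
    calc I + I = I + ∫⁻ y in norm ⁻¹' Ioc a b, ENNReal.ofReal (‖y - -p‖ ^ finrank ℝ E)⁻¹ ∂μ :=
          congrArg (I + ·) (setLIntegral_preimage_norm_comp_norm_sub_neg μ _
            (fun t => ENNReal.ofReal (t ^ finrank ℝ E)⁻¹) p).symm
      _ = ∫⁻ θ : sphere (0 : E) 1, (ENNReal.ofReal (log (rayExitTime p θ b / rayExitTime p θ a)) +
            ENNReal.ofReal (log (rayExitTime (-p) θ b / rayExitTime (-p) θ a))) ∂μ.toSphere := by
          rw [lintegral_add_left (by unfold rayExitTime; fun_prop), hI,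
            setLIntegral_shell_inv_norm_sub_pow_eq_lintegral_log μ ha hab,
            setLIntegral_shell_inv_norm_sub_pow_eq_lintegral_log μ hneg hab]
      _ = _ := by
          rw [← lintegral_const]
          refine lintegral_congr fun θ => ?_
          rw [← ENNReal.ofReal_add (hlog _ ha) (hlog _ hneg),
            log_rayExitTime_div_add_log_rayExitTime_neg_div _ ha (ha.trans_le hab)]
  calc I = (I + I) / 2 := by rw [ENNReal.add_div, ENNReal.add_halves]
    _ = _ := by
      rw [hdouble, ← ofReal_measureReal, ← ENNReal.ofReal_mul' measureReal_nonneg,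
        ← ENNReal.ofReal_ofNat 2, ← ENNReal.ofReal_div_of_pos two_pos]
      congr 1
      ring

end Shell

section SphericalMean

variable {E : Type*} [NormedAddCommGroup E] [NormedSpace ℝ E]

theorem continuousOn_inv_norm_smul_sub_pow (p : E) (n : ℕ) :
    ContinuousOn (fun q : ℝ × sphere (0 : E) 1 => (‖q.1 • (q.2 : E) - p‖ ^ n)⁻¹)
      (Ioi ‖p‖ ×ˢ univ) := by
  refine ContinuousOn.inv₀ (by fun_prop) fun q hq => pow_ne_zero _ (norm_ne_zero_iff.2 ?_)
  intro h
  have hnorm := congrArg norm (sub_eq_zero.1 h)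
  rw [norm_smul, norm_eq_of_mem_sphere q.2, mul_one] at hnorm
  exact ((le_abs_self q.1).trans_eq hnorm).not_gt hq.1

variable [FiniteDimensional ℝ E] [MeasurableSpace E] [BorelSpace E] (μ : Measure E)
  [μ.IsAddHaarMeasure]

theorem lintegral_toSphere_inv_norm_smul_sub_pow {p : E} {R : ℝ} (hR : ‖p‖ < R) (n : ℕ) :
    ∫⁻ θ, ENNReal.ofReal (‖R • (θ : E) - p‖ ^ n)⁻¹ ∂μ.toSphere =
      ENNReal.ofReal (∫ θ, (‖R • (θ : E) - p‖ ^ n)⁻¹ ∂μ.toSphere) := by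
  have hcont : Continuous fun θ : sphere (0 : E) 1 => (‖R • (θ : E) - p‖ ^ n)⁻¹ :=
    (continuousOn_inv_norm_smul_sub_pow p n).comp_continuous (f := fun θ => (R, θ))
      (by fun_prop) fun _ => ⟨hR, mem_univ _⟩
  exact (ofReal_integral_eq_lintegral_ofReal
    (hcont.integrable_of_hasCompactSupport (.of_compactSpace _))
    (.of_forall fun _ => by positivity)).symm

theorem continuousOn_integral_toSphere_inv_norm_smul_sub_pow (p : E) (n : ℕ) :
    ContinuousOn (fun R : ℝ => ∫ θ, (‖R • (θ : E) - p‖ ^ n)⁻¹ ∂μ.toSphere) (Ioi ‖p‖) :=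
  continuousOn_integral_of_compact_support isCompact_univ
    (continuousOn_inv_norm_smul_sub_pow p n) (by simp)

end SphericalMean

section PoissonKernel

variable {E : Type*} [NormedAddCommGroup E] [InnerProductSpace ℝ E] [FiniteDimensional ℝ E]
  [Nontrivial E] [MeasurableSpace E] [BorelSpace E] (μ : Measure E) [μ.IsAddHaarMeasure]

theorem intervalIntegral_integral_toSphere_inv_norm_smul_sub_pow {p : E} {a b : ℝ} (ha : ‖p‖ < a)
    (hab : a ≤ b) :
    ∫ R in a..b, R ^ (finrank ℝ E - 1) *
        ∫ θ, (‖R • (θ : E) - p‖ ^ finrank ℝ E)⁻¹ ∂μ.toSphere =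
      μ.toSphere.real univ / 2 * log ((b ^ 2 - ‖p‖ ^ 2) / (a ^ 2 - ‖p‖ ^ 2)) := by
  have hpos : ∀ R ∈ Ioc a b, 0 ≤ R := fun R hR => (norm_nonneg p).trans (ha.trans hR.1).le
  have hp : 0 < a ^ 2 - ‖p‖ ^ 2 := by nlinarith [norm_nonneg p]
  have hlog : 0 ≤ log ((b ^ 2 - ‖p‖ ^ 2) / (a ^ 2 - ‖p‖ ^ 2)) :=
    log_nonneg ((one_le_div hp).2 (by nlinarith [norm_nonneg p]))
  have hcont : ContinuousOn (fun R => R ^ (finrank ℝ E - 1) *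
      ∫ θ, (‖R • (θ : E) - p‖ ^ finrank ℝ E)⁻¹ ∂μ.toSphere) (Icc a b) :=
    ((continuous_id.pow _).continuousOn.mul
      (continuousOn_integral_toSphere_inv_norm_smul_sub_pow μ p _)).mono
        fun R hR => ha.trans_le hR.1
  rw [intervalIntegral.integral_of_le hab, integral_eq_lintegral_of_nonneg_ae,
    ← ENNReal.toReal_ofReal (mul_nonneg (div_nonneg measureReal_nonneg zero_le_two) hlog),
    ← setLIntegral_shell_inv_norm_sub_pow μ ha hab,
    setLIntegral_preimage_norm_eq_lintegral_lintegral_toSphere μ (by fun_prop) measurableSet_Ioc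
      (Ioc_subset_Ioi_self.trans (Ioi_subset_Ioi ((norm_nonneg p).trans ha.le)))]
  · congr 1
    refine setLIntegral_congr_fun measurableSet_Ioc fun R hR => ?_
    rw [lintegral_toSphere_inv_norm_smul_sub_pow μ (ha.trans hR.1),
      ENNReal.ofReal_mul (pow_nonneg (hpos R hR) _)]
  · filter_upwards [ae_restrict_mem measurableSet_Ioc] with R hR
    exact mul_nonneg (pow_nonneg (hpos R hR) _) (integral_nonneg fun _ => by positivity)
  · exact (hcont.mono Ioc_subset_Icc_self).aestronglyMeasurable measurableSet_Ioc

theorem integral_toSphere_inv_norm_smul_sub_pow {p : E} {R : ℝ} (hR : ‖p‖ < R) :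
    ∫ θ, (‖R • (θ : E) - p‖ ^ finrank ℝ E)⁻¹ ∂μ.toSphere =
      μ.toSphere.real univ * R ^ 2 / (R ^ finrank ℝ E * (R ^ 2 - ‖p‖ ^ 2)) := by
  obtain ⟨a, ha, haR⟩ := exists_between hR
  have hR0 : 0 < R := (norm_nonneg p).trans_lt hR
  have hp : ∀ {c}, ‖p‖ < c → 0 < c ^ 2 - ‖p‖ ^ 2 := fun hc => by nlinarith [norm_nonneg p]
  have hcont : ContinuousOn (fun R => R ^ (finrank ℝ E - 1) *
      ∫ θ, (‖R • (θ : E) - p‖ ^ finrank ℝ E)⁻¹ ∂μ.toSphere) (Ioi ‖p‖) :=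
    (continuous_id.pow _).continuousOn.mul
      (continuousOn_integral_toSphere_inv_norm_smul_sub_pow μ p _)
  have hderiv := intervalIntegral.integral_hasDerivAt_right
    ((hcont.mono fun u hu => ha.trans_le (uIcc_of_le haR.le ▸ hu).1).intervalIntegrable)
    (hcont.stronglyMeasurableAtFilter isOpen_Ioi R hR) (hcont.continuousAt (Ioi_mem_nhds hR))
  have hderiv' : HasDerivAt (fun b => μ.toSphere.real univ / 2 *
      log ((b ^ 2 - ‖p‖ ^ 2) / (a ^ 2 - ‖p‖ ^ 2)))
      (μ.toSphere.real univ * R / (R ^ 2 - ‖p‖ ^ 2)) R := by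
    have h := (((hasDerivAt_pow 2 R).sub_const (‖p‖ ^ 2)).div_const (a ^ 2 - ‖p‖ ^ 2)).log
      (div_pos (hp hR) (hp ha)).ne'
    refine (h.const_mul _).congr_deriv ?_
    have := (hp hR).ne'
    have := (hp ha).ne'
    field_simp
    simp
  have heq := hderiv.unique (hderiv'.congr_of_eventuallyEq (Filter.eventually_of_mem
    (Ioi_mem_nhds haR) fun b hb =>
      intervalIntegral_integral_toSphere_inv_norm_smul_sub_pow μ ha (le_of_lt hb)))
  have := (hp hR).ne'
  rw [eq_div_iff (by positivity)] at heq ⊢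
  rw [← pow_sub_one_mul (finrank_pos (R := ℝ) (M := E)).ne' R]
  linear_combination R * heq

theorem norm_sub_smul_eq_norm_smul_sub_smul {E : Type*} [NormedAddCommGroup E]
    [InnerProductSpace ℝ E] {x θ : E} (hx : x ≠ 0) (hθ : ‖θ‖ = 1) (r : ℝ) :
    ‖x - r • θ‖ = ‖‖x‖ • θ - (r / ‖x‖) • x‖ := by
  have hx' : ‖x‖ ≠ 0 := norm_ne_zero_iff.2 hx
  rw [← sq_eq_sq₀ (norm_nonneg _) (norm_nonneg _), norm_sub_sq_real, norm_sub_sq_real]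
  simp only [norm_smul, hθ, mul_pow, norm_eq_abs, sq_abs, inner_smul_left, inner_smul_right,
    conj_trivial, real_inner_comm x θ]
  field_simp

theorem lintegral_toSphere_inv_norm_sub_smul_pow {x : E} {r : ℝ} (hr0 : 0 ≤ r) (hr : r < ‖x‖) :
    ∫⁻ θ, ENNReal.ofReal (‖x - r • (θ : E)‖ ^ finrank ℝ E)⁻¹ ∂μ.toSphere =
      ENNReal.ofReal
        (μ.toSphere.real univ * ‖x‖ ^ 2 / (‖x‖ ^ finrank ℝ E * (‖x‖ ^ 2 - r ^ 2))) := by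
  have hx : 0 < ‖x‖ := hr0.trans_lt hr
  have hp : ‖(r / ‖x‖) • x‖ = r := by
    rw [norm_smul, norm_of_nonneg (by positivity), div_mul_cancel₀ _ hx.ne']
  have hp' : ‖(r / ‖x‖) • x‖ < ‖x‖ := by rwa [hp]
  simp only [norm_sub_smul_eq_norm_smul_sub_smul (norm_pos_iff.1 hx) (norm_eq_of_mem_sphere _)]
  rw [lintegral_toSphere_inv_norm_smul_sub_pow μ hp', integral_toSphere_inv_norm_smul_sub_pow μ hp',
    hp]

theorem setLIntegral_radial_mul_inv_norm_sub_pow {w : ℝ → ℝ≥0∞} (hw : Measurable w) (x : E) :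
    ∫⁻ y in norm ⁻¹' Ioo 0 ‖x‖, w ‖y‖ * ENNReal.ofReal (‖x - y‖ ^ finrank ℝ E)⁻¹ ∂μ =
      ∫⁻ r in Ioo 0 ‖x‖, ENNReal.ofReal (r ^ (finrank ℝ E - 1)) * (w r * ENNReal.ofReal
        (μ.toSphere.real univ * ‖x‖ ^ 2 / (‖x‖ ^ finrank ℝ E * (‖x‖ ^ 2 - r ^ 2)))) := by
  rw [setLIntegral_preimage_norm_eq_lintegral_lintegral_toSphere μ (by fun_prop) measurableSet_Ioo
    Ioo_subset_Ioi_self]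
  refine setLIntegral_congr_fun measurableSet_Ioo fun r hr => ?_
  have hnorm : ∀ θ : sphere (0 : E) 1, ‖r • (θ : E)‖ = r := fun θ => by
    rw [norm_smul, norm_eq_of_mem_sphere θ, mul_one, norm_of_nonneg hr.1.le]
  simp only [hnorm]
  rw [lintegral_const_mul _ (by fun_prop), lintegral_toSphere_inv_norm_sub_smul_pow μ hr.1.le hr.2]

end PoissonKernel

section Beta

open ProbabilityTheory (beta beta_pos lintegral_betaPDF lintegral_betaPDF_eq_one)

theorem lintegral_Ioo_rpow_mul_one_sub_rpow {u v : ℝ} (hu : 0 < u) (hv : 0 < v) :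
    ∫⁻ t in Ioo (0 : ℝ) 1, ENNReal.ofReal (t ^ (u - 1) * (1 - t) ^ (v - 1)) =
      ENNReal.ofReal (beta u v) := by
  have hB := beta_pos hu hv
  have hpdf := lintegral_betaPDF_eq_one hu hv
  simp only [lintegral_betaPDF, mul_assoc, ENNReal.ofReal_mul (one_div_pos.2 hB).le] at hpdf
  rw [lintegral_const_mul _ (by fun_prop), one_div, ENNReal.ofReal_inv_of_pos hB, mul_comm] at hpdf
  simpa using ENNReal.eq_inv_of_mul_eq_one_left hpdf

theorem lintegral_Ioo_sq_div {ρ : ℝ} (hρ : 0 < ρ) (g : ℝ → ℝ≥0∞) :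
    ∫⁻ r in Ioo 0 ρ, ENNReal.ofReal (2 * r / ρ ^ 2) * g ((r / ρ) ^ 2) =
      ∫⁻ t in Ioo (0 : ℝ) 1, g t := by
  have himage : (fun r => (r / ρ) ^ 2) '' Ioo 0 ρ = Ioo (0 : ℝ) 1 := by
    ext t
    constructor
    · rintro ⟨r, hr, rfl⟩
      have hpos : 0 < r / ρ := div_pos hr.1 hρ
      exact ⟨by positivity, pow_lt_one₀ hpos.le ((div_lt_one hρ).2 hr.2) two_ne_zero⟩
    · intro ht
      refine ⟨ρ * √t, ⟨mul_pos hρ (sqrt_pos.2 ht.1), ?_⟩, ?_⟩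
      · exact mul_lt_of_lt_one_right hρ ((sqrt_lt' one_pos).2 (by simpa using ht.2))
      · simp only
        rw [mul_div_cancel_left₀ _ hρ.ne', sq_sqrt ht.1.le]
  have hinj : InjOn (fun r => (r / ρ) ^ 2) (Ioo 0 ρ) := fun a ha b hb hab =>
    (div_left_inj' hρ.ne').1 ((sq_eq_sq₀ (div_pos ha.1 hρ).le (div_pos hb.1 hρ).le).1 hab)
  have hderiv : ∀ r ∈ Ioo 0 ρ,
      HasDerivWithinAt (fun r => (r / ρ) ^ 2) (2 * r / ρ ^ 2) (Ioo 0 ρ) r := fun r _ => by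
    refine ((((hasDerivAt_id r).div_const ρ).pow 2).congr_deriv ?_).hasDerivWithinAt
    simp only [id, Nat.cast_ofNat, Nat.add_one_sub_one, pow_one]
    field_simp
  rw [← himage, lintegral_image_eq_lintegral_abs_deriv_mul measurableSet_Ioo hderiv hinj]
  refine setLIntegral_congr_fun measurableSet_Ioo fun r hr => ?_
  have : 0 < r := hr.1
  rw [abs_of_pos (by positivity)]

theorem rpow_mul_sq_sub_sq_rpow_eq {ρ r : ℝ} (hr : r ∈ Ioo 0 ρ) (u v : ℝ) :
    r ^ (u - 1) * (ρ ^ 2 - r ^ 2) ^ (v - 1) = ρ ^ (u + 2 * v - 2) / 2 *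
      (2 * r / ρ ^ 2 * (((r / ρ) ^ 2) ^ (u / 2 - 1) * (1 - (r / ρ) ^ 2) ^ (v - 1))) := by
  have hρ : 0 < ρ := hr.1.trans hr.2
  obtain ⟨t, rfl⟩ : ∃ t, r = ρ * t := ⟨r / ρ, by field_simp⟩
  have ht : 0 < t := pos_of_mul_pos_right hr.1 hρ.le
  have ht1 : t < 1 := (mul_lt_iff_lt_one_right hρ).1 hr.2
  have hone : 0 < 1 - t ^ 2 := by nlinarith
  have hsq : ∀ {a : ℝ}, 0 < a → ∀ e : ℝ, (a ^ 2) ^ e = a ^ (2 * e) := fun ha e => by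
    rw [← rpow_natCast, ← rpow_mul ha.le, Nat.cast_ofNat]
  have htu : (t ^ 2) ^ (u / 2 - 1) * t = t ^ (u - 1) := by
    rw [hsq ht, ← rpow_add_one ht.ne']
    ring_nf
  have hρv : ρ ^ (u - 1) * (ρ ^ 2) ^ (v - 1) = ρ ^ (u + 2 * v - 2) / ρ := by
    rw [hsq hρ, ← rpow_add hρ, ← rpow_sub_one hρ.ne']
    ring_nf
  rw [mul_div_cancel_left₀ _ hρ.ne', show ρ ^ 2 - (ρ * t) ^ 2 = ρ ^ 2 * (1 - t ^ 2) by ring,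
    mul_rpow (by positivity) hone.le, mul_rpow hρ.le ht.le, ← htu]
  field_simp at hρv ⊢
  linear_combination hρv

theorem lintegral_Ioo_rpow_mul_sq_sub_sq_rpow {ρ u v : ℝ} (hρ : 0 < ρ) (hu : 0 < u) (hv : 0 < v) :
    ∫⁻ r in Ioo 0 ρ, ENNReal.ofReal (r ^ (u - 1) * (ρ ^ 2 - r ^ 2) ^ (v - 1)) =
      ENNReal.ofReal (ρ ^ (u + 2 * v - 2) / 2 * beta (u / 2) v) := by
  rw [ENNReal.ofReal_mul (by positivity), ← lintegral_Ioo_rpow_mul_one_sub_rpow (half_pos hu) hv,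
    ← lintegral_Ioo_sq_div hρ, ← lintegral_const_mul _ (by fun_prop)]
  refine setLIntegral_congr_fun measurableSet_Ioo fun r hr => ?_
  have : 0 < r := hr.1
  rw [rpow_mul_sq_sub_sq_rpow_eq hr, ENNReal.ofReal_mul (by positivity),
    ENNReal.ofReal_mul (by positivity)]

end Beta

section TotalMass

open ProbabilityTheory (beta beta_pos)

variable {E : Type*} [NormedAddCommGroup E] [InnerProductSpace ℝ E] [FiniteDimensional ℝ E]
  [MeasurableSpace E] [BorelSpace E]

theorem setLIntegral_sq_sub_sq_rpow_div (μ : Measure E) [μ.IsAddHaarMeasure] {x : E} (hx : x ≠ 0)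
    {a b : ℝ} (ha : a < finrank ℝ E) (hb : 0 < b) :
    ∫⁻ y in norm ⁻¹' Ioo 0 ‖x‖, ENNReal.ofReal
        ((‖x‖ ^ 2 - ‖y‖ ^ 2) ^ b / (‖x - y‖ ^ finrank ℝ E * ‖y‖ ^ a)) ∂μ =
      ENNReal.ofReal
        (μ.toSphere.real univ / 2 * ‖x‖ ^ (2 * b - a) * beta ((finrank ℝ E - a) / 2) b) := by
  have : Nontrivial E := ⟨x, 0, hx⟩
  have hρ : 0 < ‖x‖ := norm_pos_iff.2 hx
  have hsub : ∀ r ∈ Ioo 0 ‖x‖, 0 < ‖x‖ ^ 2 - r ^ 2 := fun r hr => by nlinarith [hr.1, hr.2]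
  have hsplit : ∀ y ∈ (norm ⁻¹' Ioo 0 ‖x‖ : Set E), ENNReal.ofReal
      ((‖x‖ ^ 2 - ‖y‖ ^ 2) ^ b / (‖x - y‖ ^ finrank ℝ E * ‖y‖ ^ a)) =
      ENNReal.ofReal ((‖x‖ ^ 2 - ‖y‖ ^ 2) ^ b / ‖y‖ ^ a) *
        ENNReal.ofReal (‖x - y‖ ^ finrank ℝ E)⁻¹ := fun y hy => by
    have := hsub _ hy
    rw [← ENNReal.ofReal_mul (by positivity), ← div_eq_mul_inv, div_div, mul_comm (‖y‖ ^ a)]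
  rw [setLIntegral_congr_fun (measurable_norm measurableSet_Ioo) hsplit,
    setLIntegral_radial_mul_inv_norm_sub_pow μ
      (w := fun r => ENNReal.ofReal ((‖x‖ ^ 2 - r ^ 2) ^ b / r ^ a)) (by fun_prop)]
  have hradial : ∀ r ∈ Ioo 0 ‖x‖, ENNReal.ofReal (r ^ (finrank ℝ E - 1)) *
      (ENNReal.ofReal ((‖x‖ ^ 2 - r ^ 2) ^ b / r ^ a) * ENNReal.ofReal
        (μ.toSphere.real univ * ‖x‖ ^ 2 / (‖x‖ ^ finrank ℝ E * (‖x‖ ^ 2 - r ^ 2)))) =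
      ENNReal.ofReal (μ.toSphere.real univ * ‖x‖ ^ 2 / ‖x‖ ^ finrank ℝ E) *
        ENNReal.ofReal (r ^ ((finrank ℝ E - a) - 1) * (‖x‖ ^ 2 - r ^ 2) ^ (b - 1)) := by
    intro r hr
    have hr0 : 0 < r := hr.1
    have := hsub r hr
    rw [← ENNReal.ofReal_mul (by positivity), ← ENNReal.ofReal_mul (by positivity),
      ← ENNReal.ofReal_mul (by positivity), sub_right_comm, rpow_sub hr0, rpow_sub_one this.ne',
      ← Nat.cast_pred finrank_pos, rpow_natCast]
    congr 1
    field_simp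
  rw [setLIntegral_congr_fun measurableSet_Ioo hradial, lintegral_const_mul _ (by fun_prop),
    lintegral_Ioo_rpow_mul_sq_sub_sq_rpow hρ (sub_pos.2 ha) hb,
    ← ENNReal.ofReal_mul (by positivity),
    show finrank ℝ E - a + 2 * b - 2 = finrank ℝ E + (2 * b - a) - 2 by ring,
    rpow_sub hρ, rpow_add hρ, rpow_natCast, rpow_two]
  congr 1
  field_simp

theorem toSphere_volume_real_univ [Nontrivial E] : (volume : Measure E).toSphere.real univ =
    2 * π ^ ((finrank ℝ E : ℝ) / 2) / Gamma ((finrank ℝ E : ℝ) / 2) := by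
  have hpos : (0 : ℝ) < finrank ℝ E := Nat.cast_pos.2 finrank_pos
  have := Gamma_pos_of_pos (half_pos hpos)
  rw [Measure.toSphere_real_apply_univ, measureReal_def, InnerProductSpace.volume_ball,
    Gamma_add_one (by positivity), sqrt_eq_rpow, ← rpow_natCast (π ^ (1 / 2 : ℝ)),
    ← rpow_mul pi_pos.le]
  simp only [ENNReal.ofReal_one, one_pow, one_mul]
  rw [ENNReal.toReal_ofReal (by positivity), one_div_mul_eq_div]
  field_simp

theorem closest_reach_density_total_mass_general {x : E} (hx : x ≠ 0) {α : ℝ} (hα0 : 0 < α)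
    (hα : α < finrank ℝ E) :
    ∫ y in {y : E | 0 < ‖y‖ ∧ ‖y‖ < ‖x‖},
        (‖x‖ ^ 2 - ‖y‖ ^ 2) ^ (α / 2) / (‖x - y‖ ^ finrank ℝ E * ‖y‖ ^ α)
      = π ^ ((finrank ℝ E : ℝ) / 2) * Gamma ((finrank ℝ E - α) / 2) * Gamma (α / 2) /
          Gamma ((finrank ℝ E : ℝ) / 2) ^ 2 := by
  have : Nontrivial E := ⟨x, 0, hx⟩
  have hshell : MeasurableSet {y : E | 0 < ‖y‖ ∧ ‖y‖ < ‖x‖} := measurable_norm measurableSet_Ioo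
  rw [integral_eq_lintegral_of_nonneg_ae]
  · have hbeta : 0 < beta ((finrank ℝ E - α) / 2) (α / 2) :=
      beta_pos (half_pos (sub_pos.2 hα)) (half_pos hα0)
    have h := setLIntegral_sq_sub_sq_rpow_div volume hx hα (half_pos hα0)
    rw [mul_div_cancel₀ _ two_ne_zero, sub_self, rpow_zero, mul_one] at h
    refine (congrArg ENNReal.toReal h).trans ?_
    rw [ENNReal.toReal_ofReal (by positivity), toSphere_volume_real_univ, beta, ← add_div,
      sub_add_cancel]
    ring
  · filter_upwards [ae_restrict_mem hshell] with y hy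
    have : 0 < ‖x‖ ^ 2 - ‖y‖ ^ 2 := by nlinarith [hy.1, hy.2]
    exact div_nonneg (by positivity) (by positivity)
  · exact Measurable.aestronglyMeasurable (by fun_prop)

end TotalMass

theorem closest_reach_density_total_mass
    (d : ℕ) (hd : 2 ≤ d) (α : ℝ) (hα0 : 0 < α) (hα2 : α < 2)
    (x : EuclideanSpace ℝ (Fin d)) (hx : x ≠ 0) :
    ∫ y in {y : EuclideanSpace ℝ (Fin d) | 0 < ‖y‖ ∧ ‖y‖ < ‖x‖},
        (‖x‖ ^ 2 - ‖y‖ ^ 2) ^ (α / 2) / (‖x - y‖ ^ d * ‖y‖ ^ α)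
      = π ^ ((d : ℝ) / 2) * Real.Gamma (((d : ℝ) - α) / 2) * Real.Gamma (α / 2) /
          Real.Gamma ((d : ℝ) / 2) ^ 2 := by
  have hαd : α < d := hα2.trans_le (Nat.ofNat_le_cast.2 hd)
  simpa only [finrank_euclideanSpace_fin] using
    closest_reach_density_total_mass_general hx hα0 (by rwa [finrank_euclideanSpace_fin])
end

section
/- For every x ∈ ℝ^d and every real r with 0 < r < |x|, ∫_{r<|y|<|x|} (|x|^2 - |y|^2)^{α/2} / (|x - y|^d |y|^α) dy = (π^{d/2} / Γ(d/2)) ∫_0^{(|x|^2/r^2)-1} (u+1)^{-d/2} u^{α/2-1} du. (This identity equates the mass that the closest-reach density of Theorem 1.1 assigns to the annulus {r < |y| < |x|} with the explicit Blumenthal–Getoor–Ray formula for the probability of never entering the ball of radius r.) -/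
open MeasureTheory Real Set

/-!
Inversion in the sphere of radius `‖x‖` about the origin fixes `x`, and it turns the integral into
one of `g (‖z‖ ^ 2 - ‖x‖ ^ 2) / ‖x - z‖ ^ n` over the exterior `‖x‖ < ‖z‖`, where `n` is the
dimension. On a ray `z = x + s • v` with `‖v‖ = 1`, put `q = ⟪x, v⟫` and `t = s + q`. Then
`u = ‖z‖ ^ 2 - ‖x‖ ^ 2 = t ^ 2 - q ^ 2`, the exterior is `|q| < t`, and the polar density leaves
`ds / s = dt / (t - q)`. The opposite ray contributes `dt / (t + q)`. Since
`1 / (t - q) + 1 / (t + q) = 2 * t / (t ^ 2 - q ^ 2)`, the two add up to `g u * du / u`, whatever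
the direction `v`: only the total mass of the sphere is left to multiply `∫ g u * du / u`.
-/

open Module (finrank)

section PolarCoordinates

variable {E : Type*} [NormedAddCommGroup E] [NormedSpace ℝ E] [FiniteDimensional ℝ E]
  [MeasurableSpace E] [BorelSpace E]

theorem lintegral_eq_lintegral_toSphere [Nontrivial E] (μ : Measure E) [μ.IsAddHaarMeasure]
    {f : E → ENNReal} (hf : Measurable f) :
    ∫⁻ z, f z ∂μ = ∫⁻ v : Metric.sphere (0 : E) 1, (∫⁻ s in Ioi (0 : ℝ),
      ENNReal.ofReal (s ^ (finrank ℝ E - 1)) * f (s • (v : E))) ∂μ.toSphere := by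
  have hf_polar : Measurable fun p : Metric.sphere (0 : E) 1 × Ioi (0 : ℝ) =>
      f ((p.2 : ℝ) • (p.1 : E)) := by fun_prop
  calc ∫⁻ z, f z ∂μ = ∫⁻ z : ({0}ᶜ : Set E), f z ∂(μ.comap (↑)) := by
        rw [lintegral_subtype_comap (measurableSet_singleton _).compl, restrict_compl_singleton]
    _ = ∫⁻ p, f ((p.2 : ℝ) • (p.1 : E))
          ∂(μ.toSphere.prod (.volumeIoiPow (finrank ℝ E - 1))) := by
        rw [← μ.measurePreserving_homeomorphUnitSphereProd.lintegral_comp hf_polar]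
        refine lintegral_congr fun z => ?_
        have hz : ‖(z : E)‖ ≠ 0 := norm_ne_zero_iff.2 z.2
        simp [smul_smul, hz]
    _ = _ := by
        rw [lintegral_prod _ hf_polar.aemeasurable]
        refine lintegral_congr fun v => ?_
        rw [Measure.volumeIoiPow, lintegral_withDensity_eq_lintegral_mul _ (by fun_prop)
          (show Measurable fun s : Ioi (0 : ℝ) => f ((s : ℝ) • (v : E)) by fun_prop)]
        exact lintegral_subtype_comap measurableSet_Ioi fun s : ℝ =>
          ENNReal.ofReal (s ^ (finrank ℝ E - 1)) * f (s • (v : E))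

theorem two_mul_lintegral_eq_lintegral_toSphere_opposite_rays [Nontrivial E] (μ : Measure E)
    [μ.IsAddHaarMeasure] {f : E → ENNReal} (hf : Measurable f) (c : E) :
    2 * ∫⁻ z, f z ∂μ = ∫⁻ v : Metric.sphere (0 : E) 1, (∫⁻ s in Ioi (0 : ℝ),
      ENNReal.ofReal (s ^ (finrank ℝ E - 1)) *
        (f (c + s • (v : E)) + f (c + s • -(v : E)))) ∂μ.toSphere := by
  have hsymm : 2 * ∫⁻ z, f z ∂μ = ∫⁻ w, (f (c + w) + f (c - w)) ∂μ := by
    rw [lintegral_add_left (by fun_prop), lintegral_add_left_eq_self f c,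
      lintegral_sub_left_eq_self f c, two_mul]
  rw [hsymm, lintegral_eq_lintegral_toSphere μ (by fun_prop)]
  simp only [smul_neg, ← sub_eq_add_neg]

end PolarCoordinates

section Chord

theorem lintegral_Ioi_comp_sq_sub_sq (q : ℝ) (F : ℝ → ENNReal) :
    ∫⁻ t in Ioi |q|, ENNReal.ofReal (2 * t) * F (t ^ 2 - q ^ 2) = ∫⁻ u in Ioi 0, F u := by
  have himage : (fun t => t ^ 2 - q ^ 2) '' Ioi |q| = Ioi 0 := by
    ext u
    simp only [mem_image, mem_Ioi]
    constructor
    · rintro ⟨t, ht, rfl⟩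
      exact sub_pos.2 (sq_lt_sq.2 (ht.trans_le (le_abs_self t)))
    · intro hu
      refine ⟨√(u + q ^ 2), ?_, ?_⟩
      · rw [lt_sqrt (abs_nonneg q), sq_abs]
        linarith
      · rw [sq_sqrt (by positivity), add_sub_cancel_right]
  have hderiv (t : ℝ) : HasDerivAt (fun t => t ^ 2 - q ^ 2) (2 * t) t := by
    simpa using (hasDerivAt_pow 2 t).sub_const (q ^ 2)
  have hmono : MonotoneOn (fun t => t ^ 2 - q ^ 2) (Ioi |q|) := fun s hs t _ hst =>
    sub_le_sub_right (pow_le_pow_left₀ ((abs_nonneg q).trans (le_of_lt hs)) hst 2) _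
  rw [← himage, lintegral_image_eq_lintegral_deriv_mul_of_monotoneOn measurableSet_Ioi
    (fun t _ => (hderiv t).hasDerivWithinAt) hmono]

theorem lintegral_Ioi_inv_mul_comp_mul_left {c : ℝ} (hc : 0 < c) (g : ℝ → ENNReal) :
    ∫⁻ u in Ioi 0, ENNReal.ofReal u⁻¹ * g (c * u) = ∫⁻ u in Ioi 0, ENNReal.ofReal u⁻¹ * g u := by
  have himage : (fun u => c * u) '' Ioi 0 = Ioi 0 := by rw [image_mul_left_Ioi hc, mul_zero]
  conv_rhs => rw [← himage, lintegral_image_eq_lintegral_deriv_mul_of_monotoneOn measurableSet_Ioi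
    (fun u _ => (hasDerivAt_const_mul c).hasDerivWithinAt)
    ((monotone_mul_left_of_nonneg hc.le).monotoneOn _)]
  refine lintegral_congr fun u => ?_
  rw [← mul_assoc, ← ENNReal.ofReal_mul hc.le, mul_inv, mul_inv_cancel_left₀ hc.ne']

theorem lintegral_Ioi_inv_mul_indicator_comp_sq_add (q : ℝ) (g : ℝ → ENNReal) :
    ∫⁻ s in Ioi 0, ENNReal.ofReal s⁻¹ * (Ioi 0).indicator g (s ^ 2 + 2 * q * s) =
      ∫⁻ t in Ioi |q|, ENNReal.ofReal (t - q)⁻¹ * g (t ^ 2 - q ^ 2) := by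
  rw [← lintegral_indicator measurableSet_Ioi, ← lintegral_indicator measurableSet_Ioi,
    ← lintegral_sub_right_eq_self _ q]
  refine lintegral_congr fun t => ?_
  have hsq : (t - q) ^ 2 + 2 * q * (t - q) = t ^ 2 - q ^ 2 := by ring
  have hmem : t ∈ Ioi |q| ↔ t - q ∈ Ioi 0 ∧ t ^ 2 - q ^ 2 ∈ Ioi 0 := by
    rw [show t ^ 2 - q ^ 2 = (t - q) * (t - -q) by ring]
    rw [mem_Ioi, mem_Ioi, mem_Ioi, abs_lt, neg_lt, ← sub_pos (a := t) (b := -q), ← sub_pos (b := q)]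
    exact ⟨fun ⟨h, h'⟩ => ⟨h', mul_pos h' h⟩, fun ⟨h, h'⟩ => ⟨(pos_iff_pos_of_mul_pos h').1 h, h⟩⟩
  by_cases h : t - q ∈ Ioi 0 <;> by_cases h' : t ^ 2 - q ^ 2 ∈ Ioi 0 <;>
    simp [indicator, hsq, hmem, h, h', -mem_Ioi]

theorem lintegral_Ioi_opposite_rays {g : ℝ → ENNReal} (hg : Measurable g) (q : ℝ) :
    ∫⁻ s in Ioi 0, ENNReal.ofReal s⁻¹ *
        ((Ioi 0).indicator g (s ^ 2 + 2 * q * s) + (Ioi 0).indicator g (s ^ 2 + 2 * -q * s)) =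
      ∫⁻ u in Ioi 0, ENNReal.ofReal u⁻¹ * g u := by
  have hg_ind : Measurable ((Ioi 0).indicator g) := hg.indicator measurableSet_Ioi
  simp only [mul_add]
  rw [lintegral_add_left (by fun_prop), lintegral_Ioi_inv_mul_indicator_comp_sq_add,
    lintegral_Ioi_inv_mul_indicator_comp_sq_add, abs_neg, neg_sq,
    ← lintegral_add_left (by fun_prop), ← lintegral_Ioi_comp_sq_sub_sq q]
  refine setLIntegral_congr_fun measurableSet_Ioi fun t (ht : |q| < t) => ?_
  obtain ⟨hneg, hpos⟩ := abs_lt.1 ht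
  have : 0 < t - q := by linarith
  have : 0 < t - -q := by linarith
  have hpartial : (t - q)⁻¹ + (t - -q)⁻¹ = 2 * t * (t ^ 2 - q ^ 2)⁻¹ := by
    rw [show t ^ 2 - q ^ 2 = (t - q) * (t - -q) by ring]
    field_simp
    ring
  rw [← add_mul, ← ENNReal.ofReal_add (by positivity) (by positivity), hpartial, ← mul_assoc,
    ENNReal.ofReal_mul (by linarith)]

end Chord

section PoissonKernel

variable {E : Type*} [NormedAddCommGroup E] [InnerProductSpace ℝ E] [FiniteDimensional ℝ E]
  [MeasurableSpace E] [BorelSpace E]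

theorem setLIntegral_exterior_comp_norm_sq_sub [Nontrivial E] (μ : Measure E)
    [μ.IsAddHaarMeasure] {g : ℝ → ENNReal} (hg : Measurable g) (x : E) :
    2 * ∫⁻ z in {z : E | ‖x‖ < ‖z‖},
        ENNReal.ofReal (‖x - z‖ ^ finrank ℝ E)⁻¹ * g (‖z‖ ^ 2 - ‖x‖ ^ 2) ∂μ =
      μ.toSphere univ * ∫⁻ u in Ioi 0, ENNReal.ofReal u⁻¹ * g u := by
  set n := finrank ℝ E
  have hg_ind : Measurable ((Ioi 0).indicator g) := hg.indicator measurableSet_Ioi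
  let F (z : E) : ENNReal :=
    ENNReal.ofReal (‖x - z‖ ^ n)⁻¹ * (Ioi 0).indicator g (‖z‖ ^ 2 - ‖x‖ ^ 2)
  have hF : Measurable F := by fun_prop
  have hset : ∫⁻ z in {z : E | ‖x‖ < ‖z‖},
      ENNReal.ofReal (‖x - z‖ ^ n)⁻¹ * g (‖z‖ ^ 2 - ‖x‖ ^ 2) ∂μ = ∫⁻ z, F z ∂μ := by
    rw [← lintegral_indicator (measurableSet_lt measurable_const measurable_norm)]
    refine lintegral_congr fun z => ?_
    by_cases h : ‖x‖ < ‖z‖ <;> simp [F, indicator, h, sq_lt_sq]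
  have hray (s : ℝ) (hs : 0 < s) (v : E) (hv : ‖v‖ = 1) :
      ENNReal.ofReal (s ^ (n - 1)) * F (x + s • v) =
        ENNReal.ofReal s⁻¹ * (Ioi 0).indicator g (s ^ 2 + 2 * inner ℝ x v * s) := by
    have hnorm : ‖x + s • v‖ ^ 2 - ‖x‖ ^ 2 = s ^ 2 + 2 * inner ℝ x v * s := by
      rw [norm_add_sq_real, inner_smul_right, norm_smul, hv, mul_one, norm_eq_abs, sq_abs]
      ring
    have hpow : s ^ n = s ^ (n - 1) * s := by
      rw [← pow_succ, Nat.sub_add_cancel Module.finrank_pos]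
    simp only [F, hnorm, sub_add_cancel_left, norm_neg, norm_smul, hv, mul_one, norm_eq_abs,
      abs_of_pos hs]
    rw [← mul_assoc, ← ENNReal.ofReal_mul (by positivity), hpow, mul_inv,
      mul_inv_cancel_left₀ (by positivity)]
  rw [hset, two_mul_lintegral_eq_lintegral_toSphere_opposite_rays μ hF x, mul_comm,
    ← lintegral_const]
  refine lintegral_congr fun v => ?_
  rw [← lintegral_Ioi_opposite_rays hg (inner ℝ x (v : E))]
  refine setLIntegral_congr_fun measurableSet_Ioi fun s hs => ?_
  have hv : ‖(v : E)‖ = 1 := norm_eq_of_mem_sphere v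
  rw [mul_add, mul_add, hray s hs v hv, hray s hs (-v) (by rwa [norm_neg]), inner_neg_right]

theorem setLIntegral_exterior_comp_norm_sq_div (μ : Measure E) [μ.IsAddHaarMeasure]
    {g : ℝ → ENNReal} (hg : Measurable g) {x : E} (hx : x ≠ 0) :
    2 * ∫⁻ z in {z : E | ‖x‖ < ‖z‖},
        ENNReal.ofReal (‖x - z‖ ^ finrank ℝ E)⁻¹ * g (‖z‖ ^ 2 / ‖x‖ ^ 2 - 1) ∂μ =
      μ.toSphere univ * ∫⁻ u in Ioi 0, ENNReal.ofReal u⁻¹ * g u := by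
  have : Nontrivial E := nontrivial_of_ne x 0 hx
  have hx2 : ‖x‖ ^ 2 ≠ 0 := by positivity
  have key := setLIntegral_exterior_comp_norm_sq_sub μ
    (g := fun u => g (u / ‖x‖ ^ 2)) (by fun_prop) x
  rw [← lintegral_Ioi_inv_mul_comp_mul_left (by positivity : 0 < ‖x‖ ^ 2)] at key
  simpa only [sub_div, div_self hx2, mul_div_cancel_left₀ _ hx2] using key

end PoissonKernel

section Inversion

open EuclideanGeometry (inversion)

variable {E : Type*} [NormedAddCommGroup E] [InnerProductSpace ℝ E]

theorem norm_inversion_zero (R : ℝ) (y : E) : ‖inversion 0 R y‖ = R ^ 2 / ‖y‖ := by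
  simpa only [dist_zero_right] using EuclideanGeometry.dist_inversion_center 0 y R

theorem norm_sub_inversion_zero {x z : E} (hx : x ≠ 0) (hz : z ≠ 0) :
    ‖x - inversion 0 ‖x‖ z‖ = ‖x‖ / ‖z‖ * ‖x - z‖ := by
  have h := EuclideanGeometry.dist_inversion_inversion hx hz ‖x‖
  have hx' : ‖x‖ ≠ 0 := norm_ne_zero_iff.2 hx
  rw [EuclideanGeometry.inversion_of_mem_sphere (by simp), dist_zero_right, dist_zero_right,
    dist_eq_norm, dist_eq_norm] at h
  rw [h, sq, mul_div_mul_left _ _ hx']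

theorem jacobian_mul_kernel_inversion {x z : E} (hx : x ≠ 0) (hz : z ≠ 0) (n : ℕ) :
    ((‖x‖ / ‖z‖) ^ 2) ^ n * (‖x - inversion 0 ‖x‖ z‖ ^ n)⁻¹ =
      (‖x - z‖ ^ n)⁻¹ * (‖z‖ ^ 2 / ‖x‖ ^ 2 - 1 + 1) ^ (-(n : ℝ) / 2) := by
  have hratio : 0 < ‖x‖ / ‖z‖ := by positivity
  have hpow : (‖z‖ ^ 2 / ‖x‖ ^ 2 - 1 + 1) ^ (-(n : ℝ) / 2) = (‖x‖ / ‖z‖) ^ n := by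
    rw [sub_add_cancel, ← div_pow, ← rpow_natCast _ 2, ← rpow_mul (by positivity),
      Nat.cast_ofNat, mul_div_cancel₀ _ two_ne_zero, rpow_neg (by positivity), rpow_natCast,
      ← inv_pow, inv_div]
  rw [hpow, norm_sub_inversion_zero hx hz]
  generalize ‖x‖ / ‖z‖ = t at *
  rw [← pow_mul, mul_comm 2, pow_mul, mul_pow]
  field_simp

theorem image_inversion_zero_exterior {R : ℝ} (hR : 0 < R) :
    inversion (0 : E) R '' {z | R < ‖z‖} = {y | 0 < ‖y‖ ∧ ‖y‖ < R} := by
  rw [(EuclideanGeometry.inversion_involutive (0 : E) hR.ne').image_eq_preimage_symm]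
  ext y
  rw [mem_preimage, mem_ofPred_eq, norm_inversion_zero, mem_ofPred_eq]
  rcases (norm_nonneg y).eq_or_lt with hy | hy
  · simp [← hy, hR.le]
  · rw [lt_div_iff₀ hy, sq, mul_lt_mul_iff_right₀ hR, and_iff_right hy]

variable [FiniteDimensional ℝ E]

theorem abs_det_fderiv_inversion {c z : E} (hz : z ≠ c) (R : ℝ) :
    |(fderiv ℝ (inversion c R) z).det| = ((R / dist z c) ^ 2) ^ finrank ℝ E := by
  have hrefl := congrArg abs (ℝ ∙ (z - c))ᗮ.det_reflection
  rw [abs_neg_one_pow] at hrefl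
  rw [(EuclideanGeometry.hasFDerivAt_inversion hz).fderiv, ContinuousLinearMap.det,
    ContinuousLinearMap.toLinearMap_smul, LinearMap.det_smul, abs_mul,
    abs_of_nonneg (by positivity)]
  exact (congrArg _ hrefl).trans (mul_one _)

variable [MeasurableSpace E] [BorelSpace E]

theorem setLIntegral_image_inversion (μ : Measure E) [μ.IsAddHaarMeasure] {c : E} {R : ℝ}
    (hR : R ≠ 0) {s : Set E} (hs : MeasurableSet s) (hc : c ∉ s) (f : E → ENNReal) :
    ∫⁻ y in inversion c R '' s, f y ∂μ =
      ∫⁻ z in s, ENNReal.ofReal (((R / dist z c) ^ 2) ^ finrank ℝ E) * f (inversion c R z) ∂μ := by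
  have hne : ∀ z ∈ s, z ≠ c := fun z hz => ne_of_mem_of_not_mem hz hc
  have hderiv (z : E) (hz : z ∈ s) :
      HasFDerivWithinAt (inversion c R) (fderiv ℝ (inversion c R) z) s z :=
    (EuclideanGeometry.hasFDerivAt_inversion
      (hne z hz)).differentiableAt.hasFDerivAt.hasFDerivWithinAt
  rw [lintegral_image_eq_lintegral_abs_det_fderiv_mul μ hs hderiv
    (EuclideanGeometry.inversion_injective c hR).injOn]
  refine setLIntegral_congr_fun hs fun z hz => ?_
  rw [abs_det_fderiv_inversion (hne z hz)]

theorem setLIntegral_punctured_ball_comp_norm_sq_div (μ : Measure E) [μ.IsAddHaarMeasure]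
    {g : ℝ → ENNReal} (hg : Measurable g) {x : E} (hx : x ≠ 0) :
    2 * ∫⁻ y in {y : E | 0 < ‖y‖ ∧ ‖y‖ < ‖x‖},
        ENNReal.ofReal (‖x - y‖ ^ finrank ℝ E)⁻¹ * g (‖x‖ ^ 2 / ‖y‖ ^ 2 - 1) ∂μ =
      μ.toSphere univ * ∫⁻ u in Ioi 0,
        ENNReal.ofReal ((u + 1) ^ (-(finrank ℝ E : ℝ) / 2) * u⁻¹) * g u := by
  set n := finrank ℝ E
  have hR : 0 < ‖x‖ := norm_pos_iff.2 hx
  have hext : MeasurableSet {z : E | ‖x‖ < ‖z‖} :=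
    measurableSet_lt measurable_const measurable_norm
  have hG : Measurable fun u : ℝ => ENNReal.ofReal ((u + 1) ^ (-(n : ℝ) / 2)) * g u := by fun_prop
  rw [← image_inversion_zero_exterior hR, setLIntegral_image_inversion μ hR.ne' hext (by simp)]
  convert setLIntegral_exterior_comp_norm_sq_div μ hG hx using 2
  · refine setLIntegral_congr_fun hext fun z (hz : ‖x‖ < ‖z‖) => ?_
    have hratio : ‖x‖ ^ 2 / (‖x‖ ^ 2 / ‖z‖) ^ 2 = ‖z‖ ^ 2 / ‖x‖ ^ 2 := by field_simp
    rw [dist_zero_right, norm_inversion_zero, hratio, ← mul_assoc, ← mul_assoc,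
      ← ENNReal.ofReal_mul (by positivity), ← ENNReal.ofReal_mul (by positivity),
      jacobian_mul_kernel_inversion hx (norm_pos_iff.1 (hR.trans hz))]
  · refine setLIntegral_congr_fun measurableSet_Ioi fun u (hu : 0 < u) => ?_
    rw [← mul_assoc, mul_comm (_ ^ _), ENNReal.ofReal_mul (by positivity)]

theorem setLIntegral_annulus_comp_norm_sq_div (μ : Measure E) [μ.IsAddHaarMeasure]
    {g : ℝ → ENNReal} (hg : Measurable g) {x : E} {r : ℝ} (hr : 0 < r) (hrx : r < ‖x‖) :
    2 * ∫⁻ y in {y : E | r < ‖y‖ ∧ ‖y‖ < ‖x‖},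
        ENNReal.ofReal (‖x - y‖ ^ finrank ℝ E)⁻¹ * g (‖x‖ ^ 2 / ‖y‖ ^ 2 - 1) ∂μ =
      μ.toSphere univ * ∫⁻ u in Ioo 0 (‖x‖ ^ 2 / r ^ 2 - 1),
        ENNReal.ofReal ((u + 1) ^ (-(finrank ℝ E : ℝ) / 2) * u⁻¹) * g u := by
  have hx : 0 < ‖x‖ := hr.trans hrx
  have hset : {y : E | r < ‖y‖ ∧ ‖y‖ < ‖x‖} =
      {y | r < ‖y‖} ∩ {y | 0 < ‖y‖ ∧ ‖y‖ < ‖x‖} := by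
    ext y
    exact ⟨fun h => ⟨h.1, hr.trans h.1, h.2⟩, fun h => ⟨h.1, h.2.2⟩⟩
  have hball : MeasurableSet {y : E | 0 < ‖y‖ ∧ ‖y‖ < ‖x‖} := by measurability
  have hball' : MeasurableSet {y : E | r < ‖y‖} := by measurability
  rw [hset, ← Iio_inter_Ioi, ← setLIntegral_indicator hball', ← setLIntegral_indicator
    measurableSet_Iio]
  convert setLIntegral_punctured_ball_comp_norm_sq_div μ (hg.indicator (measurableSet_Iio
    (a := ‖x‖ ^ 2 / r ^ 2 - 1))) (norm_pos_iff.1 hx) using 2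
  · refine setLIntegral_congr_fun hball fun y ⟨hy, _⟩ => ?_
    have hmem : ‖x‖ ^ 2 / ‖y‖ ^ 2 - 1 < ‖x‖ ^ 2 / r ^ 2 - 1 ↔ r < ‖y‖ := by
      rw [sub_lt_sub_iff_right, div_lt_div_iff_of_pos_left (by positivity) (by positivity)
        (by positivity), pow_lt_pow_iff_left₀ hr.le hy.le two_ne_zero]
    simp [indicator, hmem]
  · refine lintegral_congr fun u => ?_
    exact indicator_mul_right _ _ _

end Inversion

section ClosestReach

theorem sq_sub_sq_rpow_div_rpow {R s : ℝ} (hs : 0 < s) (hsR : s < R) (α : ℝ) :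
    (R ^ 2 - s ^ 2) ^ (α / 2) / s ^ α = (R ^ 2 / s ^ 2 - 1) ^ (α / 2) := by
  have hsα : s ^ α = (s ^ 2) ^ (α / 2) := by
    rw [← rpow_natCast s 2, ← rpow_mul hs.le, Nat.cast_ofNat, mul_div_cancel₀ _ two_ne_zero]
  have hdiff : 0 ≤ R ^ 2 - s ^ 2 := by nlinarith
  rw [hsα, ← div_rpow hdiff (by positivity), sub_div, div_self (by positivity)]

theorem integrableOn_Ioo_add_one_rpow_mul_rpow (p : ℝ) {s : ℝ} (hs : -1 < s) (b : ℝ) :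
    IntegrableOn (fun u : ℝ => (u + 1) ^ p * u ^ s) (Ioo 0 b) := by
  rcases le_or_gt b 0 with hb | hb
  · simp [hb]
  have hcont : ContinuousOn (fun u : ℝ => (u + 1) ^ p) (Icc 0 b) :=
    (continuousOn_id.add continuousOn_const).rpow_const fun u hu =>
      Or.inl (by simpa using (add_pos_of_nonneg_of_pos hu.1 one_pos).ne')
  exact ((intervalIntegral.integrableOn_Ioo_rpow_iff hb).2 hs).continuousOn_mul_of_subset hcont
    isCompact_Icc measurableSet_Ioo Ioo_subset_Icc_self

theorem integrable_and_integral_eq_of_lintegral_ofReal_eq {X Y : Type*} [MeasurableSpace X]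
    [MeasurableSpace Y] {μ : Measure X} {ν : Measure Y} {f : X → ℝ} {h : Y → ℝ} {C : ℝ}
    (hfm : AEStronglyMeasurable f μ) (hf : 0 ≤ᵐ[μ] f) (hh : 0 ≤ᵐ[ν] h) (hC : 0 ≤ C)
    (hint : Integrable h ν)
    (heq : ∫⁻ a, ENNReal.ofReal (f a) ∂μ = ENNReal.ofReal C * ∫⁻ b, ENNReal.ofReal (h b) ∂ν) :
    Integrable f μ ∧ ∫ a, f a ∂μ = C * ∫ b, h b ∂ν := by
  rw [← ofReal_integral_eq_lintegral_ofReal hint hh, ← ENNReal.ofReal_mul hC] at heq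
  refine ⟨(lintegral_ofReal_ne_top_iff_integrable hfm hf).1 (heq ▸ ENNReal.ofReal_ne_top), ?_⟩
  rw [integral_eq_lintegral_of_nonneg_ae hf hfm, heq,
    ENNReal.toReal_ofReal (mul_nonneg hC (integral_nonneg_of_ae hh))]

variable {E : Type*} [NormedAddCommGroup E] [InnerProductSpace ℝ E] [FiniteDimensional ℝ E]
  [MeasurableSpace E] [BorelSpace E]

theorem toSphere_volume_univ [Nontrivial E] :
    (volume : Measure E).toSphere univ = 2 * ENNReal.ofReal
      (π ^ ((finrank ℝ E : ℝ) / 2) / Real.Gamma ((finrank ℝ E : ℝ) / 2)) := by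
  have hn : (0 : ℝ) < finrank ℝ E := by exact_mod_cast Module.finrank_pos
  have : 0 < Real.Gamma ((finrank ℝ E : ℝ) / 2) := Real.Gamma_pos_of_pos (by positivity)
  rw [Measure.toSphere_apply_univ, InnerProductSpace.volume_ball, ENNReal.ofReal_one, one_pow,
    one_mul, ← ENNReal.ofReal_natCast, ← ENNReal.ofReal_mul (by positivity), ← ENNReal.ofReal_ofNat,
    ← ENNReal.ofReal_mul (by positivity), Real.Gamma_add_one (by positivity), sqrt_eq_rpow,
    ← rpow_natCast, ← rpow_mul pi_pos.le, one_div_mul_eq_div]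
  congr 1
  field_simp

theorem lintegral_closest_reach_annulus (α : ℝ) {x : E} {r : ℝ} (hr : 0 < r) (hrx : r < ‖x‖) :
    ∫⁻ y in {y : E | r < ‖y‖ ∧ ‖y‖ < ‖x‖}, ENNReal.ofReal
        ((‖x‖ ^ 2 - ‖y‖ ^ 2) ^ (α / 2) / (‖x - y‖ ^ finrank ℝ E * ‖y‖ ^ α)) =
      ENNReal.ofReal (π ^ ((finrank ℝ E : ℝ) / 2) / Real.Gamma ((finrank ℝ E : ℝ) / 2)) *
        ∫⁻ u in Ioo 0 (‖x‖ ^ 2 / r ^ 2 - 1),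
          ENNReal.ofReal ((u + 1) ^ (-(finrank ℝ E : ℝ) / 2) * u ^ (α / 2 - 1)) := by
  have : Nontrivial E := nontrivial_of_ne x 0 (norm_pos_iff.1 (hr.trans hrx))
  have hannulus : MeasurableSet {y : E | r < ‖y‖ ∧ ‖y‖ < ‖x‖} := by measurability
  have key := setLIntegral_annulus_comp_norm_sq_div volume
    (g := fun u => ENNReal.ofReal (u ^ (α / 2))) (by fun_prop) hr hrx
  rw [toSphere_volume_univ, mul_assoc, ENNReal.mul_right_inj two_ne_zero ENNReal.ofNat_ne_top]
    at key
  have hleft (y : E) (hy : r < ‖y‖ ∧ ‖y‖ < ‖x‖) :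
      ENNReal.ofReal ((‖x‖ ^ 2 - ‖y‖ ^ 2) ^ (α / 2) / (‖x - y‖ ^ finrank ℝ E * ‖y‖ ^ α)) =
        ENNReal.ofReal (‖x - y‖ ^ finrank ℝ E)⁻¹ *
          ENNReal.ofReal ((‖x‖ ^ 2 / ‖y‖ ^ 2 - 1) ^ (α / 2)) := by
    rw [← ENNReal.ofReal_mul (by positivity), ← sq_sub_sq_rpow_div_rpow (hr.trans hy.1) hy.2,
      inv_mul_eq_div, div_div, mul_comm (‖y‖ ^ α)]
  have hright (u : ℝ) (hu : 0 < u) :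
      ENNReal.ofReal ((u + 1) ^ (-(finrank ℝ E : ℝ) / 2) * u ^ (α / 2 - 1)) =
        ENNReal.ofReal ((u + 1) ^ (-(finrank ℝ E : ℝ) / 2) * u⁻¹) *
          ENNReal.ofReal (u ^ (α / 2)) := by
    rw [← ENNReal.ofReal_mul (by positivity), rpow_sub_one hu.ne', mul_assoc, inv_mul_eq_div]
  rw [setLIntegral_congr_fun hannulus hleft, key,
    setLIntegral_congr_fun measurableSet_Ioo fun u hu => hright u hu.1]

theorem closest_reach_mass_of_annulus_general {α : ℝ} (hα : 0 < α) {x : E} {r : ℝ} (hr : 0 < r)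
    (hrx : r < ‖x‖) :
    IntegrableOn (fun y : E => (‖x‖ ^ 2 - ‖y‖ ^ 2) ^ (α / 2) / (‖x - y‖ ^ finrank ℝ E * ‖y‖ ^ α))
        {y | r < ‖y‖ ∧ ‖y‖ < ‖x‖} ∧
      ∫ y in {y : E | r < ‖y‖ ∧ ‖y‖ < ‖x‖},
          (‖x‖ ^ 2 - ‖y‖ ^ 2) ^ (α / 2) / (‖x - y‖ ^ finrank ℝ E * ‖y‖ ^ α) =
        (π ^ ((finrank ℝ E : ℝ) / 2) / Real.Gamma ((finrank ℝ E : ℝ) / 2)) *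
          ∫ u in Ioo (0 : ℝ) ((‖x‖ ^ 2 / r ^ 2) - 1),
            (u + 1) ^ (-(finrank ℝ E : ℝ) / 2) * u ^ (α / 2 - 1) := by
  have hannulus : MeasurableSet {y : E | r < ‖y‖ ∧ ‖y‖ < ‖x‖} := by measurability
  refine integrable_and_integral_eq_of_lintegral_ofReal_eq
    (Measurable.aestronglyMeasurable (by fun_prop)) ?_ ?_
    (div_nonneg (by positivity) (Real.Gamma_nonneg_of_nonneg (by positivity)))
    (integrableOn_Ioo_add_one_rpow_mul_rpow _ (by linarith) _)
    (lintegral_closest_reach_annulus α hr hrx)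
  · refine ae_restrict_of_forall_mem hannulus fun y ⟨_, hyx⟩ => ?_
    have : 0 ≤ ‖x‖ ^ 2 - ‖y‖ ^ 2 := by nlinarith [norm_nonneg y]
    positivity
  · refine ae_restrict_of_forall_mem measurableSet_Ioo fun u ⟨hu, _⟩ => ?_
    positivity

end ClosestReach

theorem closest_reach_mass_of_annulus
    (d : ℕ) (hd : 2 ≤ d) (α : ℝ) (hα0 : 0 < α) (hα2 : α < 2)
    (x : EuclideanSpace ℝ (Fin d)) (r : ℝ) (hr : 0 < r) (hrx : r < ‖x‖) :
    ∫ y in {y : EuclideanSpace ℝ (Fin d) | r < ‖y‖ ∧ ‖y‖ < ‖x‖},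
        (‖x‖ ^ 2 - ‖y‖ ^ 2) ^ (α / 2) / (‖x - y‖ ^ d * ‖y‖ ^ α)
      = (π ^ ((d : ℝ) / 2) / Real.Gamma ((d : ℝ) / 2)) *
          ∫ u in Ioo (0 : ℝ) ((‖x‖ ^ 2 / r ^ 2) - 1),
            (u + 1) ^ (-(d : ℝ) / 2) * u ^ (α / 2 - 1) := by
  simpa only [finrank_euclideanSpace_fin] using
    (closest_reach_mass_of_annulus_general hα0 hr hrx).2
end

section
/- For every t > 0 and every θ ∈ ℝ^d with |θ| = 1, π^{-d/2} Γ(d/2) ∫_{|y|<e^{-t}} (1 - |y|^2)^{-α/2} |θ - y|^{-d} dy = 2 ∫_t^∞ (1 - e^{-2v})^{-α/2-1} e^{-dv} dv; in particular the left-hand side does not depend on θ. (This identity equates the tail of the excursion-overshoot law of Proposition 5.1 with the tail of the Lévy measure ν of the descending radial ladder height subordinator.) -/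
open MeasureTheory Real Set

/-!
Read in polar coordinates, `‖θ - y‖ ^ (-d)` is up to a constant the volume of
`{z | ‖z‖ * ‖θ - y‖ < 1}`. When `y` has a rotation-invariant law, a reflection exchanging `θ` and
`z / ‖z‖` replaces that set by `{z | ‖z - ‖z‖ • y‖ < 1}`. The map `z ↦ z - ‖z‖ • y` carries the
latter onto the unit ball, and the Jacobian of its inverse is `(1 - ‖y‖ ^ 2)⁻¹` times one plus an
odd function, so the volume is `(1 - ‖y‖ ^ 2)⁻¹` times that of the ball. Thus, against radial
functions on the unit ball, `‖θ - y‖ ^ (-d)` acts as `(1 - ‖y‖ ^ 2)⁻¹`, and the substitution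
`‖y‖ = exp (-v)` finishes.
-/

lemma det_id_sub_smulRight {𝕜 W : Type*} [NontriviallyNormedField 𝕜] [NormedAddCommGroup W]
    [NormedSpace 𝕜 W] [FiniteDimensional 𝕜 W] (L : W →L[𝕜] 𝕜) (w : W) :
    (ContinuousLinearMap.id 𝕜 W - L.smulRight w).det = 1 - L w := by
  have htransvection : ((ContinuousLinearMap.id 𝕜 W - L.smulRight w : W →L[𝕜] W) : W →ₗ[𝕜] W)
      = LinearMap.transvection (-(L : W →ₗ[𝕜] 𝕜)) w := by
    ext
    simp [LinearMap.transvection.apply, sub_eq_add_neg]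
  rw [ContinuousLinearMap.det, htransvection, LinearMap.transvection.det, LinearMap.neg_apply,
    ContinuousLinearMap.coe_coe, sub_eq_add_neg]

lemma setLIntegral_ofReal_one_add_of_odd {G : Type*} [MeasurableSpace G] [InvolutiveNeg G]
    [MeasurableNeg G] {μ : Measure G} [μ.IsNegInvariant] {s : Set G}
    (hs : MeasurableSet s) (hneg : -s = s) {g : G → ℝ} (hg : Measurable g) (hodd : g.Odd)
    (hbound : ∀ v, |g v| ≤ 1) :
    ∫⁻ v in s, ENNReal.ofReal (1 + g v) ∂μ = μ s := by
  have hsymm : ∫⁻ v in s, ENNReal.ofReal (1 - g v) ∂μ = ∫⁻ v in s, ENNReal.ofReal (1 + g v) ∂μ := by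
    have hflip := (Measure.measurePreserving_neg μ).setLIntegral_comp_preimage hs
      (f := fun v => ENNReal.ofReal (1 + g v)) (by fun_prop)
    rw [Set.neg_preimage, hneg] at hflip
    simpa only [hodd _, ← sub_eq_add_neg] using hflip
  have hpair (v : G) : ENNReal.ofReal (1 + g v) + ENNReal.ofReal (1 - g v) = 2 := by
    have := abs_le.1 (hbound v)
    rw [← ENNReal.ofReal_add (by linarith) (by linarith)]
    norm_num
  have hsum : 2 * ∫⁻ v in s, ENNReal.ofReal (1 + g v) ∂μ = 2 * μ s := by
    nth_rw 1 [two_mul, ← hsymm, add_comm]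
    rw [← lintegral_add_left (by fun_prop)]
    simp [hpair]
  exact (ENNReal.mul_right_inj two_ne_zero ENNReal.ofNat_ne_top).1 hsum

section BallShear

variable {V : Type*} [NormedAddCommGroup V] {x : V}

lemma one_sub_norm_sq_pos (hx : ‖x‖ < 1) : 0 < 1 - ‖x‖ ^ 2 := by
  nlinarith [norm_nonneg x]

variable [InnerProductSpace ℝ V]

/-- Half the length of the chord that the line through `x` in the direction `v` cuts out of the unit
ball, scaled by `‖v‖`. -/
noncomputable def halfChord (x v : V) : ℝ :=
  √(inner ℝ x v ^ 2 + (1 - ‖x‖ ^ 2) * ‖v‖ ^ 2)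

/-- The gauge of the unit ball seen from its point `x`: for `‖x‖ < 1`, the unique `N ≥ 0` such that
`‖v + N • x‖ = N`. -/
noncomputable def ballGauge (x v : V) : ℝ :=
  (1 - ‖x‖ ^ 2)⁻¹ * (inner ℝ x v + halfChord x v)

lemma halfChord_neg (x v : V) : halfChord x (-v) = halfChord x v := by
  simp [halfChord]

lemma continuous_halfChord (x : V) : Continuous (halfChord x) := by
  unfold halfChord
  fun_prop

lemma halfChord_sq (hx : ‖x‖ < 1) (v : V) :
    halfChord x v ^ 2 = inner ℝ x v ^ 2 + (1 - ‖x‖ ^ 2) * ‖v‖ ^ 2 := by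
  have := one_sub_norm_sq_pos hx
  exact Real.sq_sqrt (by positivity)

lemma abs_inner_le_halfChord (hx : ‖x‖ < 1) (v : V) : |inner ℝ x v| ≤ halfChord x v := by
  have := one_sub_norm_sq_pos hx
  exact Real.abs_le_sqrt (le_add_of_nonneg_right (by positivity))

lemma abs_inner_div_halfChord_le_one (hx : ‖x‖ < 1) (v : V) :
    |inner ℝ x v / halfChord x v| ≤ 1 := by
  have hle := abs_inner_le_halfChord hx v
  have hnonneg : 0 ≤ halfChord x v := (abs_nonneg _).trans hle
  rw [abs_div, abs_of_nonneg hnonneg]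
  exact div_le_one_of_le₀ hle hnonneg

lemma halfChord_sub_norm_smul (hx : ‖x‖ < 1) (z : V) :
    halfChord x (z - ‖z‖ • x) = ‖z‖ - inner ℝ x z := by
  have hinner : inner ℝ x z ≤ ‖z‖ :=
    (real_inner_le_norm x z).trans (mul_le_of_le_one_left (norm_nonneg z) hx.le)
  rw [halfChord, Real.sqrt_eq_iff_mul_self_eq _ (sub_nonneg.2 hinner), norm_sub_sq_real,
    inner_sub_right, norm_smul, inner_smul_right, inner_smul_right, real_inner_self_eq_norm_sq,
    real_inner_comm x z, norm_norm]
  · ring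
  · have := one_sub_norm_sq_pos hx
    positivity

lemma ballGauge_nonneg (hx : ‖x‖ < 1) (v : V) : 0 ≤ ballGauge x v :=
  mul_nonneg (inv_nonneg.2 (one_sub_norm_sq_pos hx).le)
    (neg_le_iff_add_nonneg'.1 ((neg_le_abs _).trans (abs_inner_le_halfChord hx v)))

lemma norm_add_ballGauge_smul (hx : ‖x‖ < 1) (v : V) :
    ‖v + ballGauge x v • x‖ = ballGauge x v := by
  have hne := (one_sub_norm_sq_pos hx).ne'
  have hroot : halfChord x v = (1 - ‖x‖ ^ 2) * ballGauge x v - inner ℝ x v := by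
    rw [ballGauge, mul_inv_cancel_left₀ hne, add_sub_cancel_left]
  have hquad := halfChord_sq hx v
  rw [hroot] at hquad
  refine (sq_eq_sq₀ (norm_nonneg _) (ballGauge_nonneg hx v)).1 (mul_left_cancel₀ hne ?_)
  rw [norm_add_sq_real, norm_smul, inner_smul_right, real_inner_comm, mul_pow, Real.norm_eq_abs,
    sq_abs]
  linear_combination -hquad

lemma ballGauge_sub_norm_smul (hx : ‖x‖ < 1) (z : V) : ballGauge x (z - ‖z‖ • x) = ‖z‖ := by
  rw [ballGauge, halfChord_sub_norm_smul hx, inner_sub_right, inner_smul_right,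
    real_inner_self_eq_norm_sq, inv_mul_eq_iff_eq_mul₀ (one_sub_norm_sq_pos hx).ne']
  ring

/-- The bijection `z ↦ z - ‖z‖ • x` for `‖x‖ < 1`. It carries a vector of norm `N` to its position
relative to the centre `N • x`, so the preimage of the unit ball is the region whose volume computes
the spherical mean of `‖ω - x‖ ^ (-dim)`. -/
@[simps]
noncomputable def ballShear (hx : ‖x‖ < 1) : V ≃ V where
  toFun z := z - ‖z‖ • x
  invFun v := v + ballGauge x v • x
  left_inv z := by simp only [ballGauge_sub_norm_smul hx, sub_add_cancel]
  right_inv v := by simp only [norm_add_ballGauge_smul hx, add_sub_cancel_right]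

lemma continuous_ballShear (hx : ‖x‖ < 1) : Continuous (ballShear hx) := by
  change Continuous fun z : V => z - ‖z‖ • x
  fun_prop

lemma hasFDerivAt_norm_of_ne_zero {z : V} (hz : z ≠ 0) :
    HasFDerivAt (fun w : V => ‖w‖) (‖z‖⁻¹ • innerSL ℝ z) z := by
  have hsqrt :=
    (hasStrictFDerivAt_norm_sq z).hasFDerivAt.sqrt (pow_ne_zero 2 (norm_ne_zero_iff.2 hz))
  simp only [Real.sqrt_sq (norm_nonneg _)] at hsqrt
  convert! hsqrt using 1
  ext w
  simp
  field_simp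

/-- The derivative of `ballShear` at a nonzero point `z`. -/
noncomputable def ballShearDeriv (x z : V) : V →L[ℝ] V :=
  ContinuousLinearMap.id ℝ V - (‖z‖⁻¹ • innerSL ℝ z).smulRight x

lemma hasFDerivAt_ballShear (hx : ‖x‖ < 1) {z : V} (hz : z ≠ 0) :
    HasFDerivAt (ballShear hx) (ballShearDeriv x z) z :=
  (hasFDerivAt_id z).sub ((hasFDerivAt_norm_of_ne_zero hz).smul_const x)

lemma det_ballShearDeriv [FiniteDimensional ℝ V] (x z : V) :
    (ballShearDeriv x z).det = 1 - ‖z‖⁻¹ * inner ℝ z x :=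
  det_id_sub_smulRight _ x

lemma det_ballShearDeriv_mul_eq_one [FiniteDimensional ℝ V] (hx : ‖x‖ < 1) {z : V} (hz : z ≠ 0) :
    (ballShearDeriv x z).det * ((1 - ‖x‖ ^ 2)⁻¹ *
      (1 + inner ℝ x (ballShear hx z) / halfChord x (ballShear hx z))) = 1 := by
  have hnorm : 0 < ‖z‖ := norm_pos_iff.2 hz
  have hne := (one_sub_norm_sq_pos hx).ne'
  have hinner : inner ℝ x z < ‖z‖ :=
    (real_inner_le_norm x z).trans_lt (mul_lt_of_lt_one_left hnorm hx)
  have hroot := (sub_pos.2 hinner).ne'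
  rw [det_ballShearDeriv, ballShear_apply, halfChord_sub_norm_smul hx, inner_sub_right,
    inner_smul_right, real_inner_self_eq_norm_sq, real_inner_comm x z]
  field_simp
  ring

variable [FiniteDimensional ℝ V] [MeasurableSpace V] [BorelSpace V] [Nontrivial V]

theorem addHaar_preimage_ballShear (μ : Measure V) [μ.IsAddHaarMeasure] (hx : ‖x‖ < 1)
    {B : Set V} (hB : MeasurableSet B) (hneg : -B = B) :
    μ (ballShear hx ⁻¹' B) = ENNReal.ofReal (1 - ‖x‖ ^ 2)⁻¹ * μ B := by
  set g : V → ℝ := fun v => inner ℝ x v / halfChord x v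
  have hg : Measurable g :=
    (by fun_prop : Measurable fun v : V => inner ℝ x v).div (continuous_halfChord x).measurable
  have hodd : g.Odd := fun v => by simp [g, halfChord_neg, neg_div]
  have hjacobian (z : V) (hz : z ≠ 0) :
      ENNReal.ofReal |(ballShearDeriv x z).det| *
        (ENNReal.ofReal (1 - ‖x‖ ^ 2)⁻¹ * ENNReal.ofReal (1 + g (ballShear hx z))) = 1 := by
    have hconst : 0 ≤ (1 - ‖x‖ ^ 2)⁻¹ := inv_nonneg.2 (one_sub_norm_sq_pos hx).le
    have hone_add : 0 ≤ 1 + g (ballShear hx z) :=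
      neg_le_iff_add_nonneg'.1 (neg_le_of_abs_le (abs_inner_div_halfChord_le_one hx _))
    rw [← ENNReal.ofReal_mul hconst, ← ENNReal.ofReal_mul (abs_nonneg _),
      ← abs_of_nonneg (mul_nonneg hconst hone_add), ← abs_mul, det_ballShearDeriv_mul_eq_one hx hz,
      abs_one, ENNReal.ofReal_one]
  have hmeas : MeasurableSet (ballShear hx ⁻¹' B \ {0}) :=
    (hB.preimage (continuous_ballShear hx).measurable).diff (measurableSet_singleton 0)
  have himage : ballShear hx '' (ballShear hx ⁻¹' B \ {0}) = B \ {0} := by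
    rw [image_sdiff (ballShear hx).injective, Equiv.image_preimage, image_singleton]
    simp
  calc μ (ballShear hx ⁻¹' B)
      = ∫⁻ _ in ballShear hx ⁻¹' B \ {0}, 1 ∂μ := by
        rw [setLIntegral_one, measure_sdiff_null (measure_singleton 0)]
    _ = ∫⁻ v in B \ {0}, ENNReal.ofReal (1 - ‖x‖ ^ 2)⁻¹ * ENNReal.ofReal (1 + g v) ∂μ := by
        rw [← himage, lintegral_image_eq_lintegral_abs_det_fderiv_mul μ hmeas
          (fun _ hz => (hasFDerivAt_ballShear hx hz.2).hasFDerivWithinAt)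
          (ballShear hx).injective.injOn]
        exact setLIntegral_congr_fun hmeas fun _ hz => (hjacobian _ hz.2).symm
    _ = ENNReal.ofReal (1 - ‖x‖ ^ 2)⁻¹ * μ B := by
        rw [lintegral_const_mul _ (by fun_prop),
          setLIntegral_congr (sdiff_null_ae_eq_self (measure_singleton 0)),
          setLIntegral_ofReal_one_add_of_odd hB hneg hg hodd (abs_inner_div_halfChord_le_one hx)]

lemma addHaar_norm_sub_norm_smul_lt_one (μ : Measure V) [μ.IsAddHaarMeasure]
    (hx : ‖x‖ < 1) :
    μ {z : V | ‖z - ‖z‖ • x‖ < 1} = ENNReal.ofReal (1 - ‖x‖ ^ 2)⁻¹ * μ (Metric.ball 0 1) := by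
  rw [← addHaar_preimage_ballShear μ hx measurableSet_ball (by simp)]
  congr 1
  ext z
  simp

end BallShear

section RotationInvariant

variable {V : Type*} [NormedAddCommGroup V] [InnerProductSpace ℝ V]
  [MeasurableSpace V] [BorelSpace V] {ν : Measure V} {θ : V}

lemma measure_norm_sub_norm_smul_lt_eq (hν : ∀ R : V ≃ₗᵢ[ℝ] V, MeasurePreserving R ν ν)
    (hθ : ‖θ‖ = 1) (z : V) (r : ℝ) :
    ν {y : V | ‖z - ‖z‖ • y‖ < r} = ν {y : V | ‖z‖ * ‖θ - y‖ < r} := by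
  set R := Submodule.reflection (ℝ ∙ (z - ‖z‖ • θ))ᗮ
  have hRz : R z = ‖z‖ • θ := Submodule.reflection_sub (by simp [norm_smul, hθ])
  have hdist (y : V) : ‖z - ‖z‖ • y‖ = ‖z‖ * ‖θ - R y‖ := by
    rw [← R.norm_map, map_sub, map_smul, hRz, ← smul_sub, norm_smul, norm_norm]
  have hmeas : MeasurableSet {y : V | ‖z‖ * ‖θ - y‖ < r} :=
    (isOpen_lt (by fun_prop) continuous_const).measurableSet
  rw [← (hν R).measure_preimage hmeas.nullMeasurableSet]
  simp only [hdist, preimage_ofPred_eq]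

lemma measurePreserving_restrict_norm_preimage {R : V ≃ₗᵢ[ℝ] V} (hR : MeasurePreserving R ν ν)
    {A : Set ℝ} (hA : MeasurableSet A) :
    MeasurePreserving R (ν.restrict (norm ⁻¹' A)) (ν.restrict (norm ⁻¹' A)) := by
  have hpreimage : R ⁻¹' (norm ⁻¹' A) = norm ⁻¹' A := by
    ext y
    simp only [mem_preimage, R.norm_map]
  simpa only [hpreimage] using hR.restrict_preimage (measurable_norm hA)

variable [FiniteDimensional ℝ V]

lemma addHaar_norm_mul_lt_one (μ : Measure V) [μ.IsAddHaarMeasure] {r : ℝ} (hr : 0 < r) :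
    μ {z : V | ‖z‖ * r < 1}
      = ENNReal.ofReal (r ^ (-(Module.finrank ℝ V : ℝ))) * μ (Metric.ball 0 1) := by
  have hball : {z : V | ‖z‖ * r < 1} = Metric.ball 0 r⁻¹ := by
    ext z
    simp [← lt_div_iff₀ hr]
  rw [hball, Measure.addHaar_ball_of_pos _ _ (inv_pos.2 hr), Real.rpow_neg hr.le,
    Real.rpow_natCast, inv_pow]

lemma lintegral_addHaar_norm_mul_norm_sub_lt_eq [SFinite ν]
    (hν : ∀ R : V ≃ₗᵢ[ℝ] V, MeasurePreserving R ν ν) (hθ : ‖θ‖ = 1)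
    (μ : Measure V) [μ.IsAddHaarMeasure] (r : ℝ) :
    ∫⁻ y, μ {z : V | ‖z‖ * ‖θ - y‖ < r} ∂ν = ∫⁻ y, μ {z : V | ‖z - ‖z‖ • y‖ < r} ∂ν := by
  have hleft : MeasurableSet {p : V × V | ‖p.1‖ * ‖θ - p.2‖ < r} :=
    (isOpen_lt (by fun_prop) continuous_const).measurableSet
  have hright : MeasurableSet {p : V × V | ‖p.1 - ‖p.1‖ • p.2‖ < r} :=
    (isOpen_lt (by fun_prop) continuous_const).measurableSet
  calc ∫⁻ y, μ {z : V | ‖z‖ * ‖θ - y‖ < r} ∂ν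
      = μ.prod ν {p : V × V | ‖p.1‖ * ‖θ - p.2‖ < r} := (Measure.prod_apply_symm hleft).symm
    _ = ∫⁻ z, ν {y : V | ‖z‖ * ‖θ - y‖ < r} ∂μ := Measure.prod_apply hleft
    _ = ∫⁻ z, ν {y : V | ‖z - ‖z‖ • y‖ < r} ∂μ := by
        simp only [measure_norm_sub_norm_smul_lt_eq hν hθ]
    _ = μ.prod ν {p : V × V | ‖p.1 - ‖p.1‖ • p.2‖ < r} := (Measure.prod_apply hright).symm
    _ = ∫⁻ y, μ {z : V | ‖z - ‖z‖ • y‖ < r} ∂ν := Measure.prod_apply_symm hright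

variable [Nontrivial V]

theorem lintegral_norm_sub_rpow_eq [SFinite ν]
    (hν : ∀ R : V ≃ₗᵢ[ℝ] V, MeasurePreserving R ν ν) (hball : ∀ᵐ y ∂ν, ‖y‖ < 1) (hθ : ‖θ‖ = 1) :
    ∫⁻ y, ENNReal.ofReal (‖θ - y‖ ^ (-(Module.finrank ℝ V : ℝ))) ∂ν
      = ∫⁻ y, ENNReal.ofReal (1 - ‖y‖ ^ 2)⁻¹ ∂ν := by
  have hsections := lintegral_addHaar_norm_mul_norm_sub_lt_eq hν hθ volume 1
  have hleft : ∀ᵐ y ∂ν, volume {z : V | ‖z‖ * ‖θ - y‖ < 1}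
      = ENNReal.ofReal (‖θ - y‖ ^ (-(Module.finrank ℝ V : ℝ))) *
        volume (Metric.ball (0 : V) 1) := by
    filter_upwards [hball] with y hy
    have hne : θ ≠ y := by
      rintro rfl
      exact hy.ne hθ
    exact addHaar_norm_mul_lt_one volume (norm_sub_pos_iff.2 hne)
  have hright : ∀ᵐ y ∂ν, volume {z : V | ‖z - ‖z‖ • y‖ < 1}
      = ENNReal.ofReal (1 - ‖y‖ ^ 2)⁻¹ * volume (Metric.ball (0 : V) 1) :=
    hball.mono fun y hy => addHaar_norm_sub_norm_smul_lt_one volume hy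
  rw [lintegral_congr_ae hleft, lintegral_congr_ae hright,
    lintegral_mul_const' _ _ measure_ball_lt_top.ne,
    lintegral_mul_const' _ _ measure_ball_lt_top.ne] at hsections
  exact (ENNReal.mul_left_inj (Metric.measure_ball_pos volume 0 one_pos).ne'
    measure_ball_lt_top.ne).1 hsections

end RotationInvariant

section Bochner

variable {E : Type*} [NormedAddCommGroup E] [NormedSpace ℝ E]

lemma integral_smul_comp_eq_integral_map_withDensity {X Y : Type*} [MeasurableSpace X]
    [MeasurableSpace Y] {μ : Measure X} {k : X → ℝ} (hk : Measurable k) (hk0 : 0 ≤ᵐ[μ] k)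
    {g : X → Y} (hg : Measurable g) {f : Y → E} (hf : StronglyMeasurable f) :
    ∫ x, k x • f (g x) ∂μ
      = ∫ y, f y ∂(μ.withDensity fun x => ENNReal.ofReal (k x)).map g := by
  rw [integral_map hg.aemeasurable hf.aestronglyMeasurable,
    integral_withDensity_eq_integral_toReal_smul (by fun_prop) (by simp)]
  refine integral_congr_ae (hk0.mono fun x hx => ?_)
  simp only [ENNReal.toReal_ofReal hx]

variable {V : Type*} [NormedAddCommGroup V] [InnerProductSpace ℝ V] [FiniteDimensional ℝ V]
  [MeasurableSpace V] [BorelSpace V]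

theorem integral_norm_sub_rpow_smul_eq [Nontrivial V] {ν : Measure V} [SFinite ν]
    (hν : ∀ R : V ≃ₗᵢ[ℝ] V, MeasurePreserving R ν ν) (hball : ∀ᵐ y ∂ν, ‖y‖ < 1)
    {θ : V} (hθ : ‖θ‖ = 1) {f : ℝ → E} (hf : StronglyMeasurable f) :
    ∫ y, ‖θ - y‖ ^ (-(Module.finrank ℝ V : ℝ)) • f ‖y‖ ∂ν
      = ∫ y, (1 - ‖y‖ ^ 2)⁻¹ • f ‖y‖ ∂ν := by
  rw [integral_smul_comp_eq_integral_map_withDensity (by fun_prop)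
      (.of_forall fun y => by positivity) measurable_norm hf,
    integral_smul_comp_eq_integral_map_withDensity (by fun_prop)
      (hball.mono fun y hy => (inv_pos.2 (one_sub_norm_sq_pos hy)).le) measurable_norm hf]
  congr 1
  ext A hA
  have hA' : MeasurableSet (norm ⁻¹' A : Set V) := measurable_norm hA
  rw [Measure.map_apply measurable_norm hA, Measure.map_apply measurable_norm hA,
    withDensity_apply _ hA', withDensity_apply _ hA']
  exact lintegral_norm_sub_rpow_eq (fun R => measurePreserving_restrict_norm_preimage (hν R) hA)
    (ae_restrict_of_ae hball) hθ

lemma integral_comp_exp_neg_Ioi (g : ℝ → E) (t : ℝ) :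
    ∫ v in Ioi t, Real.exp (-v) • g (Real.exp (-v)) = ∫ r in Ioo 0 (Real.exp (-t)), g r := by
  rw [integral_comp_neg_Ioi t fun u => Real.exp u • g (Real.exp u), integral_Iic_eq_integral_Iio,
    ← image_exp_Iio, integral_image_eq_integral_abs_deriv_smul measurableSet_Iio
      (fun u _ => (Real.hasDerivAt_exp u).hasDerivWithinAt) Real.exp_injective.injOn]
  simp only [abs_of_pos (Real.exp_pos _)]

theorem setIntegral_norm_lt_exp_neg [Nontrivial V] (μ : Measure V) [μ.IsAddHaarMeasure]
    (f : ℝ → E) (t : ℝ) :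
    ∫ y in {y : V | ‖y‖ < Real.exp (-t)}, f ‖y‖ ∂μ
      = (Module.finrank ℝ V * μ.real (Metric.ball 0 1)) •
        ∫ v in Ioi t, Real.exp (-(Module.finrank ℝ V) * v) • f (Real.exp (-v)) := by
  have hmeas : MeasurableSet {y : V | ‖y‖ < Real.exp (-t)} :=
    measurable_norm measurableSet_Iio
  have hjacobian (v : ℝ) : Real.exp (-(Module.finrank ℝ V) * v)
      = Real.exp (-v) * Real.exp (-v) ^ (Module.finrank ℝ V - 1) := by
    rw [mul_pow_sub_one Module.finrank_pos.ne', ← Real.exp_nat_mul, mul_neg, neg_mul]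
  calc ∫ y in {y : V | ‖y‖ < Real.exp (-t)}, f ‖y‖ ∂μ
      = ∫ y, (Iio (Real.exp (-t))).indicator f ‖y‖ ∂μ := (integral_indicator hmeas).symm
    _ = (Module.finrank ℝ V * μ.real (Metric.ball 0 1)) •
        ∫ r in Ioo 0 (Real.exp (-t)), r ^ (Module.finrank ℝ V - 1) • f r := by
        rw [integral_fun_norm_addHaar, ← Nat.cast_smul_eq_nsmul ℝ, smul_smul, ← Ioi_inter_Iio,
          ← setIntegral_indicator measurableSet_Iio]
        simp only [indicator_smul_apply]
    _ = _ := by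
        simp only [← integral_comp_exp_neg_Ioi, hjacobian, mul_smul]

end Bochner

lemma pi_rpow_mul_Gamma_mul_finrank_mul_volume_ball (V : Type*) [NormedAddCommGroup V]
    [InnerProductSpace ℝ V] [FiniteDimensional ℝ V] [MeasurableSpace V] [BorelSpace V]
    [Nontrivial V] :
    π ^ (-(Module.finrank ℝ V : ℝ) / 2) * Real.Gamma ((Module.finrank ℝ V : ℝ) / 2) *
      (Module.finrank ℝ V * volume.real (Metric.ball (0 : V) 1)) = 2 := by
  have hn : (0 : ℝ) < Module.finrank ℝ V := Nat.cast_pos.2 Module.finrank_pos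
  have := Real.Gamma_pos_of_pos (half_pos hn)
  have hsqrt : √π ^ Module.finrank ℝ V = π ^ ((Module.finrank ℝ V : ℝ) / 2) := by
    rw [Real.sqrt_eq_rpow, ← Real.rpow_mul_natCast pi_pos.le, one_div_mul_eq_div]
  have hvol : volume.real (Metric.ball (0 : V) 1)
      = √π ^ Module.finrank ℝ V / Real.Gamma (Module.finrank ℝ V / 2 + 1) := by
    rw [Measure.real, InnerProductSpace.volume_ball, ENNReal.ofReal_one, one_pow, one_mul,
      ENNReal.toReal_ofReal (by positivity)]
  rw [hvol, hsqrt, Real.Gamma_add_one (half_pos hn).ne', neg_div, Real.rpow_neg pi_pos.le]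
  field_simp

lemma inv_mul_rpow_one_sub_exp_neg_sq {v : ℝ} (hv : v ≠ 0) (p : ℝ) :
    (1 - Real.exp (-v) ^ 2)⁻¹ * (1 - Real.exp (-v) ^ 2) ^ p
      = (1 - Real.exp (-2 * v)) ^ (p - 1) := by
  have hsq : Real.exp (-v) ^ 2 = Real.exp (-2 * v) := by
    rw [← Real.exp_nat_mul, Nat.cast_ofNat, mul_neg, neg_mul]
  have hne : 1 - Real.exp (-2 * v) ≠ 0 := by
    rw [sub_ne_zero, ne_comm, Ne, Real.exp_eq_one_iff]
    exact mul_ne_zero (by norm_num) hv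
  rw [hsq, Real.rpow_sub_one hne, inv_mul_eq_div]

theorem excursion_overshoot_tail_eq_levy_tail_general {V : Type*} [NormedAddCommGroup V]
    [InnerProductSpace ℝ V] [FiniteDimensional ℝ V] [MeasurableSpace V] [BorelSpace V]
    (α : ℝ) {t : ℝ} (ht : 0 < t) {θ : V} (hθ : ‖θ‖ = 1) :
    π ^ (-(Module.finrank ℝ V : ℝ) / 2) * Real.Gamma ((Module.finrank ℝ V : ℝ) / 2) *
        ∫ y in {y : V | ‖y‖ < Real.exp (-t)},
          (1 - ‖y‖ ^ 2) ^ (-(α / 2)) * ‖θ - y‖ ^ (-(Module.finrank ℝ V : ℝ))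
      = 2 * ∫ v in Ioi t, (1 - Real.exp (-2 * v)) ^ (-(α / 2) - 1) *
          Real.exp (-(Module.finrank ℝ V : ℝ) * v) := by
  have : Nontrivial V := nontrivial_of_ne θ 0 (norm_ne_zero_iff.1 (hθ ▸ one_ne_zero))
  have hball : ∀ᵐ y ∂(volume : Measure V).restrict {y | ‖y‖ < Real.exp (-t)}, ‖y‖ < 1 :=
    (ae_restrict_mem (measurable_norm measurableSet_Iio)).mono fun _ hy =>
      hy.trans (Real.exp_lt_one_iff.2 (neg_neg_of_pos ht))
  have hkernel : ∫ y in {y : V | ‖y‖ < Real.exp (-t)},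
        (1 - ‖y‖ ^ 2) ^ (-(α / 2)) * ‖θ - y‖ ^ (-(Module.finrank ℝ V : ℝ))
      = ∫ y in {y : V | ‖y‖ < Real.exp (-t)}, (1 - ‖y‖ ^ 2)⁻¹ * (1 - ‖y‖ ^ 2) ^ (-(α / 2)) := by
    simp only [mul_comm (_ ^ (-(α / 2))), ← smul_eq_mul (_ ^ (-(Module.finrank ℝ V : ℝ)))]
    exact integral_norm_sub_rpow_smul_eq
      (fun R => measurePreserving_restrict_norm_preimage R.measurePreserving measurableSet_Iio)
      hball hθ (f := fun r => (1 - r ^ 2) ^ (-(α / 2))) (by fun_prop)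
  rw [hkernel, setIntegral_norm_lt_exp_neg volume
      (fun r => (1 - r ^ 2)⁻¹ * (1 - r ^ 2) ^ (-(α / 2))), smul_eq_mul, ← mul_assoc,
    pi_rpow_mul_Gamma_mul_finrank_mul_volume_ball]
  congr 1
  refine setIntegral_congr_fun measurableSet_Ioi fun v hv => ?_
  simp only [smul_eq_mul, inv_mul_rpow_one_sub_exp_neg_sq (ht.trans hv).ne', mul_comm]

theorem excursion_overshoot_tail_eq_levy_tail
    (d : ℕ) (hd : 2 ≤ d) (α : ℝ) (hα0 : 0 < α) (hα2 : α < 2)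
    (t : ℝ) (ht : 0 < t)
    (θ : EuclideanSpace ℝ (Fin d)) (hθ : ‖θ‖ = 1) :
    π ^ (-(d : ℝ) / 2) * Real.Gamma ((d : ℝ) / 2) *
        ∫ y in {y : EuclideanSpace ℝ (Fin d) | ‖y‖ < Real.exp (-t)},
          (1 - ‖y‖ ^ 2) ^ (-(α / 2)) * ‖θ - y‖ ^ (-(d : ℝ))
      = 2 * ∫ v in Ioi t, (1 - Real.exp (-2 * v)) ^ (-(α / 2) - 1) * Real.exp (-(d : ℝ) * v) := by
  simpa only [finrank_euclideanSpace_fin] using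
    excursion_overshoot_tail_eq_levy_tail_general α ht hθ
end

section
/- One has lim_{η→1+} (α / (Γ(α/2) Γ(1-α/2))) · (∫_{log η}^∞ (1 - e^{-2v})^{-α/2-1} e^{-dv} dv) · (∫_0^{η^2-1} (u+1)^{-d/2} u^{α/2-1} du) = 1 / (Γ(1+α/2) Γ(1-α/2)). -/
open MeasureTheory Real Set Filter

open scoped Topology Pointwise

/-!
Near `0` the integrand of the first integral behaves like `2 ^ (-a - 1) * v ^ (-a - 1)` and that of
the second one like `u ^ (a - 1)`, where `a = α / 2`. After rescaling the domains to `(1, ∞)` and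
`(0, 1)`, dominated convergence shows that the two integrals are asymptotic to
`2 ^ (-a - 1) * (log η) ^ (-a) / a` and `(η ^ 2 - 1) ^ a / a`. Since `η ^ 2 - 1 ~ 2 * log η` as
`η → 1`, the divergence of the first cancels the decay of the second, and the product tends to
`1 / (2 * a ^ 2)`.
-/

section Scaling

variable {E : Type*} [NormedAddCommGroup E] [NormedSpace ℝ E]

theorem setIntegral_smul_set_rpow_smul {S : Set ℝ} (hS : MeasurableSet S) (hS₀ : S ⊆ Ioi 0)
    (p : ℝ) (f : ℝ → E) {s : ℝ} (hs : 0 < s) :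
    ∫ u in s • S, u ^ p • f u = s ^ (p + 1) • ∫ w in S, w ^ p • f (s * w) := by
  have hrescale := Measure.setIntegral_comp_smul_of_pos volume (fun u : ℝ => u ^ p • f u) S hs
  rw [Module.finrank_self, pow_one, eq_inv_smul_iff₀ hs.ne'] at hrescale
  rw [← hrescale, rpow_add_one hs.ne', mul_comm, mul_smul]
  congr 1
  rw [← integral_smul]
  refine setIntegral_congr_fun hS fun w hw => ?_
  simp only [smul_eq_mul, mul_rpow hs.le (hS₀ hw).le, mul_smul]

variable [CompleteSpace E]

theorem tendsto_setIntegral_rpow_smul_comp_mul {S : Set ℝ} (hS : MeasurableSet S)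
    (hS₀ : S ⊆ Ioi 0) {p : ℝ} (hp : IntegrableOn (fun w => w ^ p) S) {f : ℝ → E}
    (hf : StronglyMeasurable f) {C : ℝ} (hC : ∀ᶠ s in 𝓝[>] 0, ∀ w ∈ S, ‖f (s * w)‖ ≤ C)
    {L : E} (hL : Tendsto f (𝓝[>] 0) (𝓝 L)) :
    Tendsto (fun s => ∫ w in S, w ^ p • f (s * w)) (𝓝[>] 0) (𝓝 ((∫ w in S, w ^ p) • L)) := by
  rw [← integral_smul_const]
  refine tendsto_integral_filter_of_dominated_convergence (fun w => w ^ p * C) ?_ ?_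
    (hp.mul_const C) ?_
  · refine Eventually.of_forall fun s => StronglyMeasurable.aestronglyMeasurable ?_
    exact (by fun_prop : Measurable fun w : ℝ => w ^ p).stronglyMeasurable.smul
      (hf.comp_measurable (measurable_const_mul s))
  · filter_upwards [hC] with s hs
    filter_upwards [ae_restrict_mem hS] with w hw
    have hwp : 0 ≤ w ^ p := rpow_nonneg (hS₀ hw).le p
    rw [norm_smul, norm_of_nonneg hwp]
    exact mul_le_mul_of_nonneg_left (hs w hw) hwp
  · filter_upwards [ae_restrict_mem hS] with w hw
    have hsw : Tendsto (fun s => s * w) (𝓝[>] 0) (𝓝[>] 0) := by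
      simpa only [zero_mul, id_eq] using
        TendstoNhdsWithinIoi.mul_const (hS₀ hw) (tendsto_id (x := 𝓝[>] (0 : ℝ)))
    exact (hL.comp hsw).const_smul (w ^ p)

theorem tendsto_rpow_smul_integral_Ioi_rpow_smul {a : ℝ} (ha : 0 < a) {f : ℝ → E}
    (hf : StronglyMeasurable f) {C : ℝ} (hC : ∀ v > 0, ‖f v‖ ≤ C) {L : E}
    (hL : Tendsto f (𝓝[>] 0) (𝓝 L)) :
    Tendsto (fun ε => ε ^ a • ∫ v in Ioi ε, v ^ (-a - 1) • f v) (𝓝[>] 0) (𝓝 (a⁻¹ • L)) := by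
  have hexp : -a - 1 < -1 := by linarith
  have hsub : Ioi (1 : ℝ) ⊆ Ioi 0 := Ioi_subset_Ioi zero_le_one
  have hlim := tendsto_setIntegral_rpow_smul_comp_mul measurableSet_Ioi hsub
    (integrableOn_Ioi_rpow_of_lt hexp one_pos) hf (C := C) ?_ hL
  · rw [integral_Ioi_rpow_of_lt hexp one_pos, sub_add_cancel, one_rpow, neg_div_neg_eq,
      one_div] at hlim
    refine hlim.congr' ?_
    filter_upwards [self_mem_nhdsWithin] with ε (hε : 0 < ε)
    have hscale := setIntegral_smul_set_rpow_smul measurableSet_Ioi hsub (-a - 1) f hε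
    rw [LinearOrderedField.smul_Ioi hε, mul_one, sub_add_cancel] at hscale
    rw [hscale, smul_smul, ← rpow_add hε, add_neg_cancel, rpow_zero, one_smul]
  · filter_upwards [self_mem_nhdsWithin] with ε hε w hw
    exact hC _ (mul_pos hε (hsub hw))

theorem tendsto_rpow_neg_smul_integral_Ioo_rpow_smul {a : ℝ} (ha : 0 < a) {f : ℝ → E}
    (hf : StronglyMeasurable f) {L : E} (hL : Tendsto f (𝓝[>] 0) (𝓝 L)) :
    Tendsto (fun s => s ^ (-a) • ∫ u in Ioo 0 s, u ^ (a - 1) • f u) (𝓝[>] 0)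
      (𝓝 (a⁻¹ • L)) := by
  have hexp : -1 < a - 1 := by linarith
  have hsub : Ioo (0 : ℝ) 1 ⊆ Ioi 0 := Ioo_subset_Ioi_self
  have hmass : ∫ w in Ioo (0 : ℝ) 1, w ^ (a - 1) = a⁻¹ := by
    rw [← integral_Ioc_eq_integral_Ioo, ← intervalIntegral.integral_of_le zero_le_one,
      integral_rpow (Or.inl hexp), sub_add_cancel, one_rpow, zero_rpow ha.ne', sub_zero, one_div]
  have hlim := tendsto_setIntegral_rpow_smul_comp_mul measurableSet_Ioo hsub
    ((intervalIntegral.integrableOn_Ioo_rpow_iff one_pos).2 hexp) hf (C := ‖L‖ + 1) ?_ hL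
  · rw [hmass] at hlim
    refine hlim.congr' ?_
    filter_upwards [self_mem_nhdsWithin] with s (hs : 0 < s)
    have hscale := setIntegral_smul_set_rpow_smul measurableSet_Ioo hsub (a - 1) f hs
    rw [LinearOrderedField.smul_Ioo hs, mul_zero, mul_one, sub_add_cancel] at hscale
    rw [hscale, smul_smul, ← rpow_add hs, neg_add_cancel, rpow_zero, one_smul]
  · obtain ⟨r, hr, hbound⟩ := mem_nhdsGT_iff_exists_Ioo_subset.1
      (hL.norm.eventually_le_const (lt_add_one ‖L‖))
    filter_upwards [Ioo_mem_nhdsGT hr] with s hs w hw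
    exact hbound ⟨mul_pos hs.1 hw.1, (mul_lt_of_lt_one_right hs.1 hw.2).trans hs.2⟩

end Scaling

theorem one_sub_exp_neg_mul_pos {c v : ℝ} (hc : 0 < c) (hv : 0 < v) : 0 < 1 - exp (-c * v) :=
  sub_pos.2 <| exp_lt_one_iff.2 <| by simpa only [neg_mul, neg_lt_zero] using mul_pos hc hv

theorem tendsto_div_one_sub_exp_neg_mul {c : ℝ} (hc : c ≠ 0) :
    Tendsto (fun v => v / (1 - exp (-c * v))) (𝓝[>] 0) (𝓝 c⁻¹) := by
  have hderiv : HasDerivAt (fun v => 1 - exp (-c * v)) c 0 := by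
    simpa using (((hasDerivAt_id (0 : ℝ)).const_mul (-c)).exp).const_sub 1
  refine (hderiv.tendsto_slope_zero_right.inv₀ hc).congr fun v => ?_
  simp [div_eq_mul_inv, mul_comm]

theorem div_one_sub_exp_neg_mul_le {c v : ℝ} (hc : 0 < c) (hv : 0 < v) :
    v / (1 - exp (-c * v)) ≤ c⁻¹ + v := by
  have hone : (1 + c * v) * exp (-c * v) ≤ 1 := by
    calc (1 + c * v) * exp (-c * v) ≤ exp (c * v) * exp (-c * v) := by
          gcongr
          linarith [add_one_le_exp (c * v)]
      _ = 1 := by rw [← exp_add, neg_mul, add_neg_cancel, exp_zero]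
  have hfactor : c⁻¹ + v = c⁻¹ * (1 + c * v) := by field_simp
  rw [div_le_iff₀ (one_sub_exp_neg_mul_pos hc hv), hfactor]
  calc v = c⁻¹ * (1 + c * v - 1) := by field_simp; ring
    _ ≤ c⁻¹ * (1 + c * v - (1 + c * v) * exp (-c * v)) := by gcongr
    _ = c⁻¹ * (1 + c * v) * (1 - exp (-c * v)) := by ring

theorem div_one_sub_exp_rpow_mul_exp_le {c δ q v : ℝ} (hc : 0 < c) (hδ : 0 < δ) (hq : 0 < q)
    (hv : 0 < v) :
    (v / (1 - exp (-c * v))) ^ q * exp (-δ * v) ≤ (c⁻¹ + q / δ) ^ q := by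
  have hbase : v / (1 - exp (-c * v)) ≤ (c⁻¹ + q / δ) * exp (δ / q * v) := by
    have hexp := add_one_le_exp (δ / q * v)
    have hone : 1 ≤ exp (δ / q * v) := one_le_exp (by positivity)
    calc v / (1 - exp (-c * v)) ≤ c⁻¹ + v := div_one_sub_exp_neg_mul_le hc hv
      _ = c⁻¹ * 1 + q / δ * (δ / q * v) := by field_simp
      _ ≤ c⁻¹ * exp (δ / q * v) + q / δ * exp (δ / q * v) := by gcongr; linarith
      _ = (c⁻¹ + q / δ) * exp (δ / q * v) := by ring
  have hnonneg : 0 ≤ v / (1 - exp (-c * v)) := (div_pos hv (one_sub_exp_neg_mul_pos hc hv)).le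
  calc (v / (1 - exp (-c * v))) ^ q * exp (-δ * v)
      ≤ ((c⁻¹ + q / δ) * exp (δ / q * v)) ^ q * exp (-δ * v) := by gcongr
    _ = (c⁻¹ + q / δ) ^ q * (exp (δ * v) * exp (-δ * v)) := by
        rw [mul_rpow (by positivity) (exp_pos _).le, ← exp_mul,
          show δ / q * v * q = δ * v by field_simp, mul_assoc]
    _ = (c⁻¹ + q / δ) ^ q := by rw [← exp_add, neg_mul, add_neg_cancel, exp_zero, mul_one]

theorem tendsto_rpow_mul_integral_Ioi_one_sub_exp_rpow {a c δ : ℝ} (ha : 0 < a) (hc : 0 < c)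
    (hδ : 0 < δ) :
    Tendsto (fun ε => ε ^ a * ∫ v in Ioi ε, (1 - exp (-c * v)) ^ (-a - 1) * exp (-δ * v))
      (𝓝[>] 0) (𝓝 (a⁻¹ * c⁻¹ ^ (a + 1))) := by
  let f (v : ℝ) : ℝ := (v / (1 - exp (-c * v))) ^ (a + 1) * exp (-δ * v)
  have hf : StronglyMeasurable f := Measurable.stronglyMeasurable (by fun_prop)
  have hbound : ∀ v > 0, ‖f v‖ ≤ (c⁻¹ + (a + 1) / δ) ^ (a + 1) := fun v hv => by
    have hpos := div_pos hv (one_sub_exp_neg_mul_pos hc hv)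
    rw [norm_of_nonneg (by positivity)]
    exact div_one_sub_exp_rpow_mul_exp_le hc hδ (by linarith) hv
  have hlim : Tendsto f (𝓝[>] 0) (𝓝 (c⁻¹ ^ (a + 1))) := by
    have hexp : Tendsto (fun v => exp (-δ * v)) (𝓝[>] 0) (𝓝 1) := by
      have hcont : Continuous fun v => exp (-δ * v) := by fun_prop
      simpa using (hcont.tendsto 0).mono_left nhdsWithin_le_nhds
    simpa only [mul_one] using ((tendsto_div_one_sub_exp_neg_mul hc.ne').rpow_const
      (p := a + 1) (Or.inl (inv_ne_zero hc.ne'))).mul hexp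
  refine (tendsto_rpow_smul_integral_Ioi_rpow_smul ha hf hbound hlim).congr' ?_
  filter_upwards [self_mem_nhdsWithin] with ε (hε : 0 < ε)
  rw [smul_eq_mul]
  congr 1
  refine setIntegral_congr_fun measurableSet_Ioi fun v hv => ?_
  have hv₀ : 0 < v := hε.trans hv
  have hpos := one_sub_exp_neg_mul_pos hc hv₀
  have hne : v ^ (a + 1) ≠ 0 := (rpow_pos_of_pos hv₀ _).ne'
  simp only [f, smul_eq_mul]
  rw [div_rpow hv₀.le hpos.le, ← neg_add', rpow_neg hv₀.le, rpow_neg hpos.le]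
  field_simp

theorem tendsto_rpow_neg_mul_integral_Ioo_add_one_rpow {a : ℝ} (ha : 0 < a) (b : ℝ) :
    Tendsto (fun s => s ^ (-a) * ∫ u in Ioo 0 s, (u + 1) ^ b * u ^ (a - 1)) (𝓝[>] 0)
      (𝓝 a⁻¹) := by
  have hf : StronglyMeasurable fun u : ℝ => (u + 1) ^ b :=
    Measurable.stronglyMeasurable (by fun_prop)
  have hlim : Tendsto (fun u : ℝ => (u + 1) ^ b) (𝓝[>] 0) (𝓝 1) := by
    have hcont : ContinuousAt (fun u : ℝ => (u + 1) ^ b) 0 :=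
      ContinuousAt.rpow_const (by fun_prop) (Or.inl (by norm_num))
    simpa using hcont.tendsto.mono_left nhdsWithin_le_nhds
  simpa only [smul_eq_mul, mul_one, mul_comm] using
    tendsto_rpow_neg_smul_integral_Ioo_rpow_smul ha hf hlim

theorem tendsto_log_nhdsGT_one : Tendsto log (𝓝[>] 1) (𝓝[>] 0) := by
  refine tendsto_nhdsWithin_iff.2
    ⟨?_, eventually_mem_nhdsWithin.mono fun η hη => log_pos hη⟩
  simpa using (continuousAt_log one_ne_zero).tendsto.mono_left nhdsWithin_le_nhds

theorem tendsto_sq_sub_one_nhdsGT_one :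
    Tendsto (fun η : ℝ => η ^ 2 - 1) (𝓝[>] 1) (𝓝[>] 0) := by
  refine tendsto_nhdsWithin_iff.2
    ⟨?_, eventually_mem_nhdsWithin.mono fun η (hη : 1 < η) =>
      sub_pos.2 (one_lt_pow₀ hη two_ne_zero : 1 < η ^ 2)⟩
  have hcont : Continuous fun η : ℝ => η ^ 2 - 1 := by fun_prop
  simpa using (hcont.tendsto 1).mono_left nhdsWithin_le_nhds

theorem tendsto_sq_sub_one_div_log :
    Tendsto (fun η : ℝ => (η ^ 2 - 1) / log η) (𝓝[>] 1) (𝓝 2) := by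
  have hslope_sq := hasDerivAt_iff_tendsto_slope.1 (hasDerivAt_pow 2 (1 : ℝ))
  have hslope_log := hasDerivAt_iff_tendsto_slope.1 (hasDerivAt_log (one_ne_zero (α := ℝ)))
  have hquot : Tendsto (slope (fun η : ℝ => η ^ 2) 1 / slope log 1) (𝓝[>] 1) (𝓝 2) := by
    simpa using (hslope_sq.div hslope_log (by norm_num)).mono_left (nhdsGT_le_nhdsNE 1)
  refine hquot.congr' ?_
  filter_upwards [self_mem_nhdsWithin] with η (hη : 1 < η)
  simp only [Pi.div_apply, slope_def_field, one_pow, log_one, sub_zero]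
  exact div_div_div_cancel_right₀ (sub_pos.2 hη).ne' _ _

theorem tendsto_integral_Ioi_log_mul_integral_Ioo_sq_sub_one {a δ : ℝ} (ha : 0 < a) (hδ : 0 < δ)
    (b : ℝ) :
    Tendsto (fun η : ℝ =>
        (∫ v in Ioi (log η), (1 - exp (-2 * v)) ^ (-a - 1) * exp (-δ * v)) *
          ∫ u in Ioo 0 (η ^ 2 - 1), (u + 1) ^ b * u ^ (a - 1))
      (𝓝[>] 1) (𝓝 (1 / (2 * a ^ 2))) := by
  have htail := (tendsto_rpow_mul_integral_Ioi_one_sub_exp_rpow ha two_pos hδ).comp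
    tendsto_log_nhdsGT_one
  have hescape := (tendsto_rpow_neg_mul_integral_Ioo_add_one_rpow ha b).comp
    tendsto_sq_sub_one_nhdsGT_one
  have hratio := tendsto_sq_sub_one_div_log.rpow_const (p := a) (Or.inl two_ne_zero)
  have hconst : a⁻¹ * 2⁻¹ ^ (a + 1) * a⁻¹ * 2 ^ a = 1 / (2 * a ^ 2) := by
    have htwo : (2 : ℝ)⁻¹ ^ (a + 1) * 2 ^ a = 2⁻¹ := by
      rw [rpow_add_one (by norm_num), inv_rpow zero_le_two, mul_right_comm,
        inv_mul_cancel₀ (by positivity), one_mul]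
    calc a⁻¹ * 2⁻¹ ^ (a + 1) * a⁻¹ * 2 ^ a = a⁻¹ * a⁻¹ * (2⁻¹ ^ (a + 1) * 2 ^ a) := by ring
      _ = 1 / (2 * a ^ 2) := by rw [htwo]; field_simp
  rw [← hconst]
  refine ((htail.mul hescape).mul hratio).congr' ?_
  filter_upwards [self_mem_nhdsWithin] with η (hη : 1 < η)
  have hlog : 0 < log η := log_pos hη
  have hsq : 0 < η ^ 2 - 1 := sub_pos.2 (one_lt_pow₀ hη two_ne_zero)
  have hlog_rpow := (rpow_pos_of_pos hlog a).ne'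
  have hsq_rpow := (rpow_pos_of_pos hsq a).ne'
  simp only [Function.comp_apply]
  generalize (∫ v in Ioi (log η), (1 - exp (-2 * v)) ^ (-a - 1) * exp (-δ * v)) = tail
  generalize (∫ u in Ioo 0 (η ^ 2 - 1), (u + 1) ^ b * u ^ (a - 1)) = escape
  rw [div_rpow hsq.le hlog.le, rpow_neg hsq.le]
  field_simp

theorem levy_tail_times_escape_prob_limit_general {α δ : ℝ} (hα : 0 < α)
    (hα_pole : ∀ m : ℕ, 1 - α / 2 ≠ -m) (hδ : 0 < δ) (b : ℝ) :
    Tendsto (fun η : ℝ =>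
        (α / (Gamma (α / 2) * Gamma (1 - α / 2))) *
          (∫ v in Ioi (log η), (1 - exp (-2 * v)) ^ (-(α / 2) - 1) * exp (-δ * v)) *
          (∫ u in Ioo (0 : ℝ) (η ^ 2 - 1), (u + 1) ^ b * u ^ (α / 2 - 1)))
      (𝓝[>] 1) (𝓝 (1 / (Gamma (1 + α / 2) * Gamma (1 - α / 2)))) := by
  have ha : 0 < α / 2 := half_pos hα
  have hconst : α / (Gamma (α / 2) * Gamma (1 - α / 2)) * (1 / (2 * (α / 2) ^ 2)) =
      1 / (Gamma (1 + α / 2) * Gamma (1 - α / 2)) := by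
    have hΓ : Gamma (α / 2) ≠ 0 := (Gamma_pos_of_pos ha).ne'
    have hΓ' : Gamma (1 - α / 2) ≠ 0 := Gamma_ne_zero hα_pole
    rw [add_comm 1, Gamma_add_one ha.ne', div_mul_div_comm,
      div_eq_div_iff (mul_ne_zero (mul_ne_zero hΓ hΓ') (by positivity))
        (mul_ne_zero (mul_ne_zero ha.ne' hΓ) hΓ')]
    ring
  simpa only [hconst, mul_assoc] using
    (tendsto_integral_Ioi_log_mul_integral_Ioo_sq_sub_one ha hδ b).const_mul
      (α / (Gamma (α / 2) * Gamma (1 - α / 2)))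

theorem levy_tail_times_escape_prob_limit
    (d : ℕ) (hd : 2 ≤ d) (α : ℝ) (hα0 : 0 < α) (hα2 : α < 2) :
    Tendsto (fun η : ℝ =>
        (α / (Real.Gamma (α / 2) * Real.Gamma (1 - α / 2))) *
          (∫ v in Ioi (Real.log η), (1 - Real.exp (-2 * v)) ^ (-(α / 2) - 1) * Real.exp (-(d : ℝ) * v)) *
          (∫ u in Ioo (0 : ℝ) (η ^ 2 - 1), (u + 1) ^ (-(d : ℝ) / 2) * u ^ (α / 2 - 1)))
      (nhdsWithin 1 (Ioi 1))
      (nhds (1 / (Real.Gamma (1 + α / 2) * Real.Gamma (1 - α / 2)))) :=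
  levy_tail_times_escape_prob_limit_general hα0
    (fun m => by linarith [m.cast_nonneg (α := ℝ)]) (Nat.cast_pos.2 (two_pos.trans_le hd)) _
end

section
/- Let r > 0 and set D = Γ(d/2) / (Γ((d-α)/2) Γ(α/2)). For 0 < s ≤ ρ put P(ρ,s) = D ∫_0^{(ρ^2/s^2)-1} (u+1)^{-d/2} u^{α/2-1} du. Then lim_{δ→0+} sup_{ρ ∈ (r-δ, r]} | (ρ^2 - (r-δ)^2)^{-α/2} r^α P(ρ, r-δ) − 2D/α | = 0. (This is Lemma 5.2, with P(ρ,s) being the Blumenthal–Getoor–Ray expression for the probability, starting from radius ρ, of never entering the ball of radius s.) -/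
open MeasureTheory Real Set Filter

/-!
Put `a = α / 2` and `T = ρ² / s² - 1`. Since `ρ² - s² = s² T`, the normalising factor
`(ρ² - s²) ^ (-a) * r ^ (2 * a)` equals `(r / s) ^ (2 * a) * T ^ (-a)`. As `(s, ρ) → (r, r)` with
`s < ρ`, the first factor tends to `1` and `T → 0⁺`, while `T ^ (-a) ∫₀ᵀ u ^ (a - 1) f u du`
tends to `f(0⁺) / a`, because the probability measures `a T ^ (-a) u ^ (a - 1) du` on `(0, T)`
concentrate at `0`. This joint limit in `(s, ρ)` gives uniformity in `ρ ∈ (s, r]`.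
-/

open scoped Topology

lemma sq_sub_sq_rpow_neg_mul_rpow {r s ρ : ℝ} (a : ℝ) (hr : 0 ≤ r) (hs : 0 < s) (hρ : s ≤ ρ) :
    (ρ ^ 2 - s ^ 2) ^ (-a) * r ^ (2 * a) = (r / s) ^ (2 * a) * (ρ ^ 2 / s ^ 2 - 1) ^ (-a) := by
  have hsq : ρ ^ 2 - s ^ 2 = s ^ 2 * (ρ ^ 2 / s ^ 2 - 1) := by field_simp
  have hT : 0 ≤ ρ ^ 2 / s ^ 2 - 1 := by
    rw [sub_nonneg, one_le_div (by positivity)]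
    gcongr
  have hspow : (s ^ 2) ^ (-a) = (s ^ (2 * a))⁻¹ := by
    rw [rpow_neg (by positivity), rpow_mul hs.le, rpow_two]
  rw [hsq, mul_rpow (by positivity) hT, hspow, div_rpow hr hs.le]
  ring

lemma eventually_nhdsWithin_lt_fst_pos_and_lt {r : ℝ} (hr : 0 < r) :
    ∀ᶠ p : ℝ × ℝ in 𝓝[{p | p.1 < p.2}] (r, r), 0 < p.1 ∧ p.1 < p.2 :=
  ((continuousAt_fst.tendsto.eventually_const_lt hr).filter_mono nhdsWithin_le_nhds).and
    self_mem_nhdsWithin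

lemma tendsto_sq_div_sq_sub_one {r : ℝ} (hr : 0 < r) :
    Tendsto (fun p : ℝ × ℝ => p.2 ^ 2 / p.1 ^ 2 - 1) (𝓝[{p | p.1 < p.2}] (r, r)) (𝓝[>] 0) := by
  refine tendsto_nhdsWithin_iff.2 ⟨?_, ?_⟩
  · have hcont : ContinuousAt (fun p : ℝ × ℝ => p.2 ^ 2 / p.1 ^ 2 - 1) (r, r) :=
      ((by fun_prop : ContinuousAt (fun p : ℝ × ℝ => p.2 ^ 2) (r, r)).div (by fun_prop)
        (by positivity)).sub_const 1
    simpa [hr.ne'] using hcont.tendsto.mono_left nhdsWithin_le_nhds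
  · filter_upwards [eventually_nhdsWithin_lt_fst_pos_and_lt hr] with p ⟨hp, hlt⟩
    rw [mem_Ioi, sub_pos, one_lt_div (by positivity)]
    exact pow_lt_pow_left₀ hlt hp.le two_ne_zero

lemma rpow_neg_mul_integral_rpow_sub_one {a T : ℝ} (ha : 0 < a) (hT : 0 < T) :
    T ^ (-a) * ∫ u in (0 : ℝ)..T, u ^ (a - 1) = a⁻¹ := by
  rw [integral_rpow (Or.inl (by linarith)), sub_add_cancel, zero_rpow ha.ne', sub_zero,
    mul_div_assoc', ← rpow_add hT, neg_add_cancel, rpow_zero, one_div]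

section KernelLimit

variable {E : Type*} [NormedAddCommGroup E] [NormedSpace ℝ E] [CompleteSpace E]
  {a : ℝ} {f : ℝ → E} {L : E}

lemma norm_rpow_neg_smul_integral_rpow_smul_sub_le {T ε : ℝ} (ha : 0 < a) (hT : 0 < T)
    (hf : AEStronglyMeasurable f (volume.restrict (Ioc 0 T)))
    (hε : ∀ u ∈ Ioc 0 T, ‖f u - L‖ ≤ ε) :
    ‖T ^ (-a) • (∫ u in (0 : ℝ)..T, u ^ (a - 1) • f u) - a⁻¹ • L‖ ≤ a⁻¹ * ε := by
  have hweight : IntervalIntegrable (fun u : ℝ => u ^ (a - 1)) volume 0 T :=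
    intervalIntegral.intervalIntegrable_rpow' (by linarith)
  have hbound : ∀ u ∈ Ioc 0 T, ‖u ^ (a - 1) • (f u - L)‖ ≤ u ^ (a - 1) * ε := fun u hu => by
    rw [norm_smul, norm_of_nonneg (rpow_nonneg hu.1.le _)]
    exact mul_le_mul_of_nonneg_left (hε u hu) (rpow_nonneg hu.1.le _)
  have hdiff : IntervalIntegrable (fun u => u ^ (a - 1) • (f u - L)) volume 0 T := by
    refine (hweight.mul_const ε).mono_fun' ?_ ?_ <;> rw [uIoc_of_le hT.le]
    · exact (by fun_prop : Measurable fun u : ℝ => u ^ (a - 1)).aestronglyMeasurable.smul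
        (hf.sub aestronglyMeasurable_const)
    · exact (ae_restrict_mem measurableSet_Ioc).mono hbound
  have hsplit : ∫ u in (0 : ℝ)..T, u ^ (a - 1) • f u =
      (∫ u in (0 : ℝ)..T, u ^ (a - 1) • (f u - L)) + (∫ u in (0 : ℝ)..T, u ^ (a - 1)) • L := by
    rw [← intervalIntegral.integral_smul_const,
      ← intervalIntegral.integral_add hdiff ⟨hweight.1.smul_const L, hweight.2.smul_const L⟩]
    simp only [← smul_add, sub_add_cancel]
  rw [hsplit, smul_add, smul_smul, rpow_neg_mul_integral_rpow_sub_one ha hT, add_sub_cancel_right,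
    norm_smul, norm_of_nonneg (rpow_nonneg hT.le _)]
  calc T ^ (-a) * ‖∫ u in (0 : ℝ)..T, u ^ (a - 1) • (f u - L)‖
      ≤ T ^ (-a) * ∫ u in (0 : ℝ)..T, u ^ (a - 1) * ε := by
        gcongr
        exact intervalIntegral.norm_integral_le_of_norm_le hT.le (ae_of_all _ hbound)
          (hweight.mul_const ε)
    _ = a⁻¹ * ε := by
        rw [intervalIntegral.integral_mul_const, ← mul_assoc,
          rpow_neg_mul_integral_rpow_sub_one ha hT]

lemma tendsto_rpow_neg_smul_integral_rpow_smul (ha : 0 < a)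
    (hmeas : StronglyMeasurableAtFilter f (𝓝[>] 0)) (hf : Tendsto f (𝓝[>] 0) (𝓝 L)) :
    Tendsto (fun T : ℝ => T ^ (-a) • ∫ u in (0 : ℝ)..T, u ^ (a - 1) • f u)
      (𝓝[>] 0) (𝓝 (a⁻¹ • L)) := by
  refine Metric.nhds_basis_closedBall.tendsto_right_iff.2 fun ε hε => ?_
  obtain ⟨S, hS, hfS⟩ := hmeas
  have hnear : ∀ᶠ u in 𝓝[>] (0 : ℝ), ‖f u - L‖ ≤ a * ε := by
    simpa only [mem_closedBall_iff_norm] using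
      hf.eventually_mem (Metric.closedBall_mem_nhds L (mul_pos ha hε))
  obtain ⟨η, hη, hsub⟩ := mem_nhdsGT_iff_exists_Ioo_subset.1 (inter_mem hS hnear)
  filter_upwards [Ioo_mem_nhdsGT hη] with T hT
  have hIoc : Ioc 0 T ⊆ Ioo 0 η := fun u hu => ⟨hu.1, hu.2.trans_lt hT.2⟩
  rw [mem_closedBall_iff_norm]
  calc ‖T ^ (-a) • (∫ u in (0 : ℝ)..T, u ^ (a - 1) • f u) - a⁻¹ • L‖
      ≤ a⁻¹ * (a * ε) := norm_rpow_neg_smul_integral_rpow_smul_sub_le ha hT.1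
        (hfS.mono_set fun u hu => (hsub (hIoc hu)).1) fun u hu => (hsub (hIoc hu)).2
    _ = ε := inv_mul_cancel_left₀ ha.ne' ε

lemma tendsto_sq_sub_sq_rpow_neg_mul_rpow_smul_integral {r : ℝ} (ha : 0 < a) (hr : 0 < r)
    (hmeas : StronglyMeasurableAtFilter f (𝓝[>] 0)) (hf : Tendsto f (𝓝[>] 0) (𝓝 L)) :
    Tendsto (fun p : ℝ × ℝ => ((p.2 ^ 2 - p.1 ^ 2) ^ (-a) * r ^ (2 * a)) •
        ∫ u in (0 : ℝ)..(p.2 ^ 2 / p.1 ^ 2 - 1), u ^ (a - 1) • f u)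
      (𝓝[{p | p.1 < p.2}] (r, r)) (𝓝 (a⁻¹ • L)) := by
  have hratio : Tendsto (fun p : ℝ × ℝ => (r / p.1) ^ (2 * a))
      (𝓝[{p | p.1 < p.2}] (r, r)) (𝓝 1) := by
    have hcont : ContinuousAt (fun p : ℝ × ℝ => (r / p.1) ^ (2 * a)) (r, r) :=
      (continuousAt_const.div continuousAt_fst hr.ne').rpow_const (Or.inr (by positivity))
    simpa [hr.ne'] using hcont.tendsto.mono_left nhdsWithin_le_nhds
  have hprod := hratio.smul
    ((tendsto_rpow_neg_smul_integral_rpow_smul ha hmeas hf).comp (tendsto_sq_div_sq_sub_one hr))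
  rw [one_smul] at hprod
  refine hprod.congr' ?_
  filter_upwards [eventually_nhdsWithin_lt_fst_pos_and_lt hr] with p ⟨hp, hlt⟩
  rw [sq_sub_sq_rpow_neg_mul_rpow a hr.le hp hlt.le, mul_smul, Function.comp_apply]

end KernelLimit

lemma tendsto_iSup_Ioc_dist_of_tendsto_nhdsWithin_lt {X : Type*} [PseudoMetricSpace X]
    {F : ℝ × ℝ → X} {L : X} {r : ℝ} (hF : Tendsto F (𝓝[{p | p.1 < p.2}] (r, r)) (𝓝 L)) :
    Tendsto (fun δ : ℝ => ⨆ ρ : Ioc (r - δ) r, dist (F (r - δ, ρ)) L) (𝓝[>] 0) (𝓝 0) := by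
  refine Metric.nhds_basis_closedBall.tendsto_right_iff.2 fun ε hε => ?_
  obtain ⟨η, hη, hball⟩ := Metric.mem_nhdsWithin_iff.1 (hF (Metric.closedBall_mem_nhds L hε))
  filter_upwards [Ioo_mem_nhdsGT hη] with δ hδ
  rw [Metric.mem_closedBall, dist_zero_right,
    norm_of_nonneg (Real.iSup_nonneg fun _ => dist_nonneg)]
  refine Real.iSup_le (fun ρ => hball ⟨?_, ρ.2.1⟩) hε.le
  rw [Metric.mem_ball, Prod.dist_eq, max_lt_iff, Real.dist_eq, Real.dist_eq, abs_lt, abs_lt]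
  refine ⟨⟨?_, ?_⟩, ?_, ?_⟩ <;> dsimp only <;> linarith [hδ.1, hδ.2, ρ.2.1, ρ.2.2]

lemma tendsto_normalized_escape_probability {d α r c : ℝ} {P : ℝ → ℝ → ℝ} (hα : 0 < α) (hr : 0 < r)
    (hP : ∀ ρ s : ℝ, 0 < s → s ≤ ρ →
      P ρ s = c * ∫ u in Ioo (0 : ℝ) ((ρ ^ 2 / s ^ 2) - 1),
        (u + 1) ^ (-d / 2) * u ^ (α / 2 - 1)) :
    Tendsto (fun p : ℝ × ℝ => (p.2 ^ 2 - p.1 ^ 2) ^ (-(α / 2)) * r ^ α * P p.2 p.1)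
      (𝓝[{p | p.1 < p.2}] (r, r)) (𝓝 (2 * c / α)) := by
  have hkernel : Tendsto (fun u : ℝ => (u + 1) ^ (-d / 2)) (𝓝[>] 0) (𝓝 1) := by
    have hcont : ContinuousAt (fun u : ℝ => (u + 1) ^ (-d / 2)) 0 :=
      (by fun_prop : ContinuousAt (fun u : ℝ => u + 1) 0).rpow_const (by simp)
    simpa using hcont.tendsto.mono_left nhdsWithin_le_nhds
  have hmeas : StronglyMeasurableAtFilter (fun u : ℝ => (u + 1) ^ (-d / 2)) (𝓝[>] 0) :=
    (by fun_prop : Measurable fun u : ℝ => (u + 1) ^ (-d / 2)).stronglyMeasurable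
      |>.stronglyMeasurableAtFilter
  have hlim := (tendsto_sq_sub_sq_rpow_neg_mul_rpow_smul_integral (half_pos hα) hr hmeas
    hkernel).const_mul c
  have hvalue : c * ((α / 2)⁻¹ • 1) = 2 * c / α := by
    rw [inv_div, smul_eq_mul]
    ring
  rw [hvalue] at hlim
  refine hlim.congr' ?_
  filter_upwards [eventually_nhdsWithin_lt_fst_pos_and_lt hr,
    (tendsto_sq_div_sq_sub_one hr).eventually self_mem_nhdsWithin] with p ⟨hp, hlt⟩ hT
  rw [hP p.2 p.1 hp hlt.le, ← integral_Ioc_eq_integral_Ioo,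
    ← intervalIntegral.integral_of_le (le_of_lt hT), mul_div_cancel₀ α two_ne_zero]
  simp only [smul_eq_mul, mul_comm (_ ^ (α / 2 - 1))]
  ring

theorem escape_probability_asymptotics_general
    (d α : ℝ) (hα : 0 < α) (r : ℝ) (hr : 0 < r) (c : ℝ) (P : ℝ → ℝ → ℝ)
    (hP : ∀ ρ s : ℝ, 0 < s → s ≤ ρ →
      P ρ s = c * ∫ u in Ioo (0 : ℝ) ((ρ ^ 2 / s ^ 2) - 1),
        (u + 1) ^ (-d / 2) * u ^ (α / 2 - 1)) :
    Tendsto (fun δ : ℝ =>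
        ⨆ ρ : Ioc (r - δ) r,
          |((ρ : ℝ) ^ 2 - (r - δ) ^ 2) ^ (-(α / 2)) * r ^ α * P (ρ : ℝ) (r - δ) - 2 * c / α|)
      (𝓝[>] 0) (𝓝 0) := by
  simpa only [Real.dist_eq] using
    tendsto_iSup_Ioc_dist_of_tendsto_nhdsWithin_lt (tendsto_normalized_escape_probability hα hr hP)

theorem escape_probability_asymptotics
    (d : ℕ) (hd : 2 ≤ d) (α : ℝ) (hα0 : 0 < α) (hα2 : α < 2)
    (r : ℝ) (hr : 0 < r)
    (D : ℝ) (hD : D = Real.Gamma ((d : ℝ) / 2) /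
      (Real.Gamma (((d : ℝ) - α) / 2) * Real.Gamma (α / 2)))
    (P : ℝ → ℝ → ℝ)
    (hP : ∀ ρ s : ℝ, 0 < s → s ≤ ρ →
      P ρ s = D * ∫ u in Ioo (0 : ℝ) ((ρ ^ 2 / s ^ 2) - 1),
        (u + 1) ^ (-(d : ℝ) / 2) * u ^ (α / 2 - 1)) :
    Tendsto (fun δ : ℝ =>
        ⨆ ρ : Ioc (r - δ) r,
          |((ρ : ℝ) ^ 2 - (r - δ) ^ 2) ^ (-(α / 2)) * r ^ α * P (ρ : ℝ) (r - δ) - 2 * D / α|)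
      (nhdsWithin 0 (Ioi 0)) (nhds 0) :=
  escape_probability_asymptotics_general d α hα0 r hr D P hP
end

section
/- For all real numbers s, ρ with 0 < s ≤ ρ, ∫_0^{(ρ^2/s^2)-1} (1 - (1+u)^{-d/2}) u^{α/2-1} du ≤ (1 - s^d/ρ^d) · (2/α) · (ρ^2 - s^2)^{α/2} · s^{-α}. (This is the key estimate, inequality (5.4) in the proof of Lemma 5.2.) -/
open MeasureTheory Real Set

/-!
The factor `1 - (1 + u) ^ (-d / 2)` increases with `u`, so it is at most its value at the right
endpoint `u = ρ ^ 2 / s ^ 2 - 1`, namely `1 - s ^ d / ρ ^ d`. What remains is the integral of the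
weight `u ^ (α / 2 - 1)`, which is explicit.
-/

theorem setIntegral_mul_le_of_monotoneOn {X : Type*} [TopologicalSpace X]
    [ConditionallyCompleteLinearOrder X] [OrderTopology X] [MeasurableSpace X] [BorelSpace X]
    {μ : Measure X} {S : Set X} {a b : X} {f g : X → ℝ} (hf : MonotoneOn f S)
    (ha : IsLeast S a) (hb : IsGreatest S b) (hS : MeasurableSet S) (hg : IntegrableOn g S μ)
    (hg_nonneg : ∀ x ∈ S, 0 ≤ g x) :
    ∫ x in S, f x * g x ∂μ ≤ f b * ∫ x in S, g x ∂μ := by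
  rw [← integral_const_mul]
  exact setIntegral_mono_on (hg.mul_of_top_right (hf.memLp_top ha hb hS)) (hg.const_mul _) hS
    fun x hx ↦ mul_le_mul_of_nonneg_right (hf hx hb.1 (hb.2 hx)) (hg_nonneg x hx)

theorem monotoneOn_one_sub_one_add_rpow {r : ℝ} (hr : r ≤ 0) :
    MonotoneOn (fun u : ℝ ↦ 1 - (1 + u) ^ r) (Ioi (-1)) := fun _ hu _ _ huv ↦
  sub_le_sub_left
    (rpow_le_rpow_of_nonpos (neg_lt_iff_pos_add'.1 hu) (add_le_add_right huv 1) hr) 1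

theorem integrableOn_Icc_rpow {r a b : ℝ} (hr : -1 < r) :
    IntegrableOn (fun u : ℝ ↦ u ^ r) (Icc a b) := by
  rw [integrableOn_Icc_iff_integrableOn_Ioc]
  exact (intervalIntegral.intervalIntegrable_rpow' hr).1

theorem setIntegral_Icc_zero_rpow_sub_one {p T : ℝ} (hp : 0 < p) (hT : 0 ≤ T) :
    ∫ u in Icc 0 T, u ^ (p - 1) = T ^ p / p := by
  rw [integral_Icc_eq_integral_Ioc, ← intervalIntegral.integral_of_le hT,
    integral_rpow (Or.inl (by linarith)), sub_add_cancel, zero_rpow hp.ne', sub_zero]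

theorem setIntegral_one_sub_one_add_rpow_mul_rpow_le {r p T : ℝ} (hr : r ≤ 0) (hp : 0 < p)
    (hT : 0 ≤ T) :
    ∫ u in Ioo 0 T, (1 - (1 + u) ^ r) * u ^ (p - 1) ≤ (1 - (1 + T) ^ r) * (T ^ p / p) := by
  rw [← integral_Icc_eq_integral_Ioo, ← setIntegral_Icc_zero_rpow_sub_one hp hT]
  have hmono : MonotoneOn (fun u : ℝ ↦ 1 - (1 + u) ^ r) (Icc 0 T) :=
    (monotoneOn_one_sub_one_add_rpow hr).mono fun u hu ↦ neg_one_lt_zero.trans_le hu.1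
  exact setIntegral_mul_le_of_monotoneOn hmono (isLeast_Icc hT) (isGreatest_Icc hT)
    measurableSet_Icc (integrableOn_Icc_rpow (by linarith)) fun u hu ↦ rpow_nonneg hu.1 _

theorem sq_rpow_half {x : ℝ} (hx : 0 ≤ x) (p : ℝ) : (x ^ 2) ^ (p / 2) = x ^ p := by
  rw [rpow_div_two_eq_sqrt p (sq_nonneg x), sqrt_sq hx]

theorem sq_div_sq_rpow_neg_half {x y : ℝ} (hx : 0 ≤ x) (hy : 0 ≤ y) (p : ℝ) :
    (x ^ 2 / y ^ 2) ^ (-p / 2) = y ^ p / x ^ p := by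
  rw [← div_pow, sq_rpow_half (div_nonneg hx hy), rpow_neg_eq_inv_rpow, inv_div, div_rpow hy hx]

theorem sq_div_sq_sub_one_rpow_half {x y : ℝ} (hy : 0 < y) (hyx : y ≤ x) (p : ℝ) :
    (x ^ 2 / y ^ 2 - 1) ^ (p / 2) = (x ^ 2 - y ^ 2) ^ (p / 2) * y ^ (-p) := by
  have hsub : 0 ≤ x ^ 2 - y ^ 2 := sub_nonneg.2 (pow_le_pow_left₀ hy.le hyx 2)
  rw [div_sub_one (pow_pos hy 2).ne', div_rpow hsub (sq_nonneg y), sq_rpow_half hy.le,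
    rpow_neg hy.le, div_eq_mul_inv]

theorem key_estimate_escape_probability_general {d α s ρ : ℝ} (hd : 0 ≤ d) (hα : 0 < α)
    (hs : 0 < s) (hsρ : s ≤ ρ) :
    ∫ u in Ioo 0 (ρ ^ 2 / s ^ 2 - 1), (1 - (1 + u) ^ (-d / 2)) * u ^ (α / 2 - 1)
      ≤ (1 - s ^ d / ρ ^ d) * (2 / α) * (ρ ^ 2 - s ^ 2) ^ (α / 2) * s ^ (-α) := by
  have hT : 0 ≤ ρ ^ 2 / s ^ 2 - 1 :=
    sub_nonneg.2 ((one_le_div (pow_pos hs 2)).2 (pow_le_pow_left₀ hs.le hsρ 2))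
  calc ∫ u in Ioo 0 (ρ ^ 2 / s ^ 2 - 1), (1 - (1 + u) ^ (-d / 2)) * u ^ (α / 2 - 1)
      ≤ (1 - (1 + (ρ ^ 2 / s ^ 2 - 1)) ^ (-d / 2)) *
          ((ρ ^ 2 / s ^ 2 - 1) ^ (α / 2) / (α / 2)) :=
        setIntegral_one_sub_one_add_rpow_mul_rpow_le (by linarith) (half_pos hα) hT
    _ = (1 - s ^ d / ρ ^ d) * ((ρ ^ 2 - s ^ 2) ^ (α / 2) * s ^ (-α) / (α / 2)) := by
        rw [add_sub_cancel, sq_div_sq_rpow_neg_half (hs.le.trans hsρ) hs.le,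
          sq_div_sq_sub_one_rpow_half hs hsρ]
    _ = (1 - s ^ d / ρ ^ d) * (2 / α) * (ρ ^ 2 - s ^ 2) ^ (α / 2) * s ^ (-α) := by
        field_simp

theorem key_estimate_escape_probability
    (d : ℕ) (hd : 2 ≤ d) (α : ℝ) (hα0 : 0 < α) (hα2 : α < 2)
    (s ρ : ℝ) (hs : 0 < s) (hsρ : s ≤ ρ) :
    ∫ u in Ioo (0 : ℝ) ((ρ ^ 2 / s ^ 2) - 1),
        (1 - (1 + u) ^ (-(d : ℝ) / 2)) * u ^ (α / 2 - 1)
      ≤ (1 - s ^ d / ρ ^ d) * (2 / α) * (ρ ^ 2 - s ^ 2) ^ (α / 2) * s ^ (-α) := by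
  simpa only [rpow_natCast] using
    key_estimate_escape_probability_general d.cast_nonneg hα0 hs hsρ
end

section
/- For every r > 0, lim_{δ→0+} (1/δ) ∫_{r-δ}^{r} ( (ρ^2 - (r-δ)^2) / (r^2 - ρ^2) )^{α/2} dρ = Γ(1-α/2) Γ(1+α/2). -/
open MeasureTheory Real Set Filter

open Topology

/-!
Let `φ ρ = ρ ^ 2`, or any function strictly differentiable at `r` with nonzero derivative, and
put `a = α / 2`. After the substitution `ρ = r - δ + δ * t` the integrand is `(t / (1 - t)) ^ a`
times the `a`-th power of the quotient of the slopes of `φ` over `[r - δ, ρ]` and `[ρ, r]`. Strict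
differentiability makes both slopes tend to `φ' r ≠ 0`, so their quotient tends to `1`, uniformly
in `t`, as `δ → 0+`. What remains in the limit is Euler's integral of `t ^ a * (1 - t) ^ (-a)` over
`(0, 1)`, which is `B(1 + a, 1 - a)`.
-/

section BetaIntegral

lemma ofReal_rpow_mul_one_sub_rpow {t : ℝ} (ht : t ∈ Icc (0 : ℝ) 1) (u v : ℝ) :
    ((t ^ (u - 1) * (1 - t) ^ (v - 1) : ℝ) : ℂ) =
      (t : ℂ) ^ ((u : ℂ) - 1) * (1 - (t : ℂ)) ^ ((v : ℂ) - 1) := by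
  rw [Complex.ofReal_mul, Complex.ofReal_cpow ht.1, Complex.ofReal_cpow (sub_nonneg.2 ht.2)]
  push_cast
  rfl

variable {u v : ℝ}

lemma integrableOn_rpow_mul_one_sub_rpow (hu : 0 < u) (hv : 0 < v) :
    IntegrableOn (fun t : ℝ => t ^ (u - 1) * (1 - t) ^ (v - 1)) (Ioo 0 1) := by
  have hconv := (intervalIntegrable_iff_integrableOn_Ioo_of_le zero_le_one).1
    (Complex.betaIntegral_convergent (u := u) (v := v) hu hv)
  refine IntegrableOn.congr_fun (Integrable.re hconv) (fun t ht => ?_) measurableSet_Ioo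
  rw [← ofReal_rpow_mul_one_sub_rpow (Ioo_subset_Icc_self ht)]
  exact Complex.ofReal_re _

lemma integral_rpow_mul_one_sub_rpow (hu : 0 < u) (hv : 0 < v) :
    ∫ t in Ioo (0 : ℝ) 1, t ^ (u - 1) * (1 - t) ^ (v - 1) = ProbabilityTheory.beta u v := by
  have hbeta : Complex.betaIntegral u v =
      ((∫ t in Ioo (0 : ℝ) 1, t ^ (u - 1) * (1 - t) ^ (v - 1) : ℝ) : ℂ) := by
    rw [Complex.betaIntegral, intervalIntegral.integral_of_le zero_le_one,
      integral_Ioc_eq_integral_Ioo, ← integral_complex_ofReal]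
    exact setIntegral_congr_fun measurableSet_Ioo fun t ht =>
      (ofReal_rpow_mul_one_sub_rpow (Ioo_subset_Icc_self ht) u v).symm
  rw [ProbabilityTheory.beta_eq_betaIntegralReal u v hu hv, hbeta, Complex.ofReal_re]

lemma div_one_sub_rpow_eq {t : ℝ} (ht : t ∈ Icc (0 : ℝ) 1) (a : ℝ) :
    (t / (1 - t)) ^ a = t ^ ((1 + a) - 1) * (1 - t) ^ ((1 - a) - 1) := by
  have h : 0 ≤ 1 - t := sub_nonneg.2 ht.2
  rw [div_rpow ht.1 h, div_eq_mul_inv, ← rpow_neg h, add_sub_cancel_left, sub_sub_cancel_left]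

variable {a : ℝ}

lemma integrableOn_div_one_sub_rpow (ha : -1 < a) (ha' : a < 1) :
    IntegrableOn (fun t : ℝ => (t / (1 - t)) ^ a) (Ioo 0 1) :=
  (integrableOn_rpow_mul_one_sub_rpow (u := 1 + a) (v := 1 - a) (by linarith)
    (by linarith)).congr_fun
      (fun _ ht => (div_one_sub_rpow_eq (Ioo_subset_Icc_self ht) a).symm) measurableSet_Ioo

lemma integral_div_one_sub_rpow (ha : -1 < a) (ha' : a < 1) :
    ∫ t in Ioo (0 : ℝ) 1, (t / (1 - t)) ^ a = Gamma (1 - a) * Gamma (1 + a) := by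
  rw [setIntegral_congr_fun measurableSet_Ioo
      fun t ht => div_one_sub_rpow_eq (Ioo_subset_Icc_self ht) a,
    integral_rpow_mul_one_sub_rpow (by linarith) (by linarith), ProbabilityTheory.beta,
    add_add_sub_cancel, one_add_one_eq_two, Gamma_two, div_one, mul_comm]

end BetaIntegral

section Integration

variable {E : Type*} [NormedAddCommGroup E] [NormedSpace ℝ E]

lemma inv_smul_integral_Ioo_sub (f : ℝ → E) (r : ℝ) {δ : ℝ} (hδ : 0 < δ) :
    δ⁻¹ • ∫ ρ in Ioo (r - δ) r, f ρ = ∫ t in Ioo (0 : ℝ) 1, f (r - δ + δ * t) := by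
  have h := intervalIntegral.integral_comp_add_mul (a := 0) (b := 1) f hδ.ne' (r - δ)
  rw [mul_zero, add_zero, mul_one, sub_add_cancel] at h
  rw [← integral_Ioc_eq_integral_Ioo, ← integral_Ioc_eq_integral_Ioo,
    ← intervalIntegral.integral_of_le (by linarith),
    ← intervalIntegral.integral_of_le zero_le_one, h]

lemma tendsto_setIntegral_smul_of_tendstoUniformlyOn {X ι : Type*} [MeasurableSpace X]
    {μ : Measure X} {s : Set X} {l : Filter ι} [l.IsCountablyGenerated] {w : ι → X → ℝ} {c : ℝ}
    {g : X → E} (hs : MeasurableSet s) (hg : IntegrableOn g s μ)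
    (hw : TendstoUniformlyOn w (fun _ => c) l s)
    (hw_meas : ∀ᶠ i in l, AEStronglyMeasurable (w i) (μ.restrict s)) :
    Tendsto (fun i => ∫ x in s, w i x • g x ∂μ) l (𝓝 (c • ∫ x in s, g x ∂μ)) := by
  rw [← integral_smul]
  refine tendsto_integral_filter_of_dominated_convergence (fun x => (|c| + 1) * ‖g x‖)
    (hw_meas.mono fun i hi => hi.smul hg.aestronglyMeasurable) ?_ (hg.norm.const_mul _) ?_
  · filter_upwards [Metric.tendstoUniformlyOn_iff.1 hw 1 one_pos] with i hi
    refine ae_restrict_of_forall_mem hs fun x hx => ?_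
    have hwc : |w i x| ≤ |c| + 1 := by
      have hdist : |w i x - c| < 1 := by simpa only [abs_sub_comm, Real.dist_eq] using hi x hx
      linarith [abs_sub_abs_le_abs_sub (w i x) c]
    rw [norm_smul, Real.norm_eq_abs]
    gcongr
  · exact ae_restrict_of_forall_mem hs fun x hx => (hw.tendsto_at hx).smul_const (g x)

end Integration

lemma sub_div_sub_eq_mul_slope_div_slope {𝕜 : Type*} [Field 𝕜] (f : 𝕜 → 𝕜) (x y z : 𝕜) :
    (f y - f x) / (f z - f y) = (y - x) / (z - y) * (slope f x y / slope f y z) := by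
  rw [← vsub_eq_sub (f y), ← vsub_eq_sub (f z), ← sub_smul_slope, ← sub_smul_slope f y z,
    smul_eq_mul, smul_eq_mul, mul_div_mul_comm]

lemma tendsto_slope_of_hasStrictDerivAt {𝕜 F ι : Type*} [NontriviallyNormedField 𝕜]
    [NormedAddCommGroup F] [NormedSpace 𝕜 F] {f : 𝕜 → F} {f' : F} {x : 𝕜} {l : Filter ι}
    {u v : ι → 𝕜} (hf : HasStrictDerivAt f f' x) (hu : Tendsto u l (𝓝 x))
    (hv : Tendsto v l (𝓝 x)) (huv : ∀ᶠ i in l, u i ≠ v i) :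
    Tendsto (fun i => slope f (u i) (v i)) l (𝓝 f') := by
  have h := (hasDerivAtFilter_iff_tendsto.1 hf).comp (hv.prodMk_nhds hu)
  rw [tendsto_iff_norm_sub_tendsto_zero]
  refine h.congr' (huv.mono fun i hi => ?_)
  have hne : v i - u i ≠ 0 := sub_ne_zero.2 hi.symm
  simp only [Function.comp_apply]
  rw [← norm_inv, ← norm_smul, smul_sub, inv_smul_smul₀ hne, slope_def_module]

/-- The slope of `φ` over `[r - δ, ρ]` divided by its slope over `[ρ, r]`, at the point
`ρ = r - δ + δ * t` which divides `[r - δ, r]` in the ratio `t : 1 - t`. -/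
noncomputable def slopeRatio (φ : ℝ → ℝ) (r δ t : ℝ) : ℝ :=
  slope φ (r - δ) (r - δ + δ * t) / slope φ (r - δ + δ * t) r

section SlopeRatio

variable {φ : ℝ → ℝ} {φ' r δ t : ℝ}

lemma sub_add_mul_mem_Ioo (hδ : 0 < δ) (ht : t ∈ Ioo (0 : ℝ) 1) :
    r - δ + δ * t ∈ Ioo (r - δ) r := by
  have hpos : 0 < δ * t := mul_pos hδ ht.1
  have hlt : δ * t < δ := mul_lt_of_lt_one_right hδ ht.2
  constructor <;> linarith

lemma sub_div_sub_eq_mul_slopeRatio (hδ : δ ≠ 0) :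
    (φ (r - δ + δ * t) - φ (r - δ)) / (φ r - φ (r - δ + δ * t)) =
      t / (1 - t) * slopeRatio φ r δ t := by
  rw [sub_div_sub_eq_mul_slope_div_slope, slopeRatio, add_sub_cancel_left,
    show r - (r - δ + δ * t) = δ * (1 - t) by ring, mul_div_mul_left _ _ hδ]

lemma tendstoUniformlyOn_slopeRatio (hφ : HasStrictDerivAt φ φ' r) (hφ' : φ' ≠ 0) :
    TendstoUniformlyOn (slopeRatio φ r) (fun _ => 1) (𝓝[>] 0) (Ioo 0 1) := by
  rw [← tendsto_prod_principal_iff]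
  have hmem : ∀ᶠ p : ℝ × ℝ in 𝓝[>] 0 ×ˢ 𝓟 (Ioo 0 1), r - p.1 + p.1 * p.2 ∈ Ioo (r - p.1) r :=
    mem_of_superset (prod_mem_prod self_mem_nhdsWithin (mem_principal_self _))
      fun _ hp => sub_add_mul_mem_Ioo hp.1 hp.2
  have hleft : Tendsto (fun p : ℝ × ℝ => r - p.1) (𝓝[>] 0 ×ˢ 𝓟 (Ioo 0 1)) (𝓝 r) := by
    have hfst : Tendsto Prod.fst (𝓝[>] (0 : ℝ) ×ˢ 𝓟 (Ioo (0 : ℝ) 1)) (𝓝 0) :=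
      tendsto_fst.mono_right nhdsWithin_le_nhds
    simpa only [sub_zero] using hfst.const_sub r
  have hmid : Tendsto (fun p : ℝ × ℝ => r - p.1 + p.1 * p.2) (𝓝[>] 0 ×ˢ 𝓟 (Ioo 0 1)) (𝓝 r) :=
    tendsto_of_tendsto_of_tendsto_of_le_of_le' hleft tendsto_const_nhds
      (hmem.mono fun _ h => h.1.le) (hmem.mono fun _ h => h.2.le)
  have hslope_left := tendsto_slope_of_hasStrictDerivAt hφ hleft hmid (hmem.mono fun _ h => h.1.ne)
  have hslope_right := tendsto_slope_of_hasStrictDerivAt hφ hmid tendsto_const_nhds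
    (hmem.mono fun _ h => h.2.ne)
  exact div_self hφ' ▸ hslope_left.div hslope_right hφ'

lemma eventually_slopeRatio_nonneg (hφ : HasStrictDerivAt φ φ' r) (hφ' : φ' ≠ 0) :
    ∀ᶠ δ in 𝓝[>] 0, ∀ t ∈ Ioo (0 : ℝ) 1, 0 ≤ slopeRatio φ r δ t :=
  eventually_prod_principal_iff.1 <|
    (tendsto_prod_principal_iff.2 (tendstoUniformlyOn_slopeRatio hφ hφ')).eventually_const_le
      one_pos

lemma tendstoUniformlyOn_slopeRatio_rpow (hφ : HasStrictDerivAt φ φ' r) (hφ' : φ' ≠ 0) (a : ℝ) :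
    TendstoUniformlyOn (fun δ t => slopeRatio φ r δ t ^ a) (fun _ => 1) (𝓝[>] 0) (Ioo 0 1) := by
  have h := (tendsto_prod_principal_iff.2 (tendstoUniformlyOn_slopeRatio hφ hφ')).rpow_const
    (p := a) (Or.inl one_ne_zero)
  rw [one_rpow] at h
  exact tendsto_prod_principal_iff.1 h

lemma eventually_aemeasurable_slopeRatio (hφ : HasStrictDerivAt φ φ' r) :
    ∀ᶠ δ in 𝓝[>] 0, AEMeasurable (slopeRatio φ r δ) (volume.restrict (Ioo 0 1)) := by
  obtain ⟨K, s, hs, hLip⟩ := hφ.hasStrictFDerivAt.exists_lipschitzOnWith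
  obtain ⟨b, hb, hbs⟩ := exists_Ioc_subset_of_mem_nhds hs (exists_lt r)
  filter_upwards [Ioo_mem_nhdsGT (sub_pos.2 hb)] with δ hδ
  have hmaps : MapsTo (fun t => r - δ + δ * t) (Ioo 0 1) s := fun t ht =>
    have hρ := sub_add_mul_mem_Ioo (r := r) hδ.1 ht
    hbs ⟨by linarith [hρ.1, hδ.2], hρ.2.le⟩
  have hφρ : AEMeasurable (fun t => φ (r - δ + δ * t)) (volume.restrict (Ioo 0 1)) :=
    (hLip.continuousOn.comp (by fun_prop) hmaps).aemeasurable measurableSet_Ioo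
  unfold slopeRatio
  simp only [slope_def_field]
  exact ((hφρ.sub_const _).div (by fun_prop)).div ((hφρ.const_sub _).div (by fun_prop))

end SlopeRatio

theorem ratio_integral_limit_beta_general {φ : ℝ → ℝ} {φ' r a : ℝ}
    (hφ : HasStrictDerivAt φ φ' r) (hφ' : φ' ≠ 0) (ha : -1 < a) (ha' : a < 1) :
    Tendsto
      (fun δ : ℝ => (1 / δ) * ∫ ρ in Ioo (r - δ) r, ((φ ρ - φ (r - δ)) / (φ r - φ ρ)) ^ a)
      (𝓝[>] 0) (𝓝 (Gamma (1 - a) * Gamma (1 + a))) := by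
  have hlim := tendsto_setIntegral_smul_of_tendstoUniformlyOn measurableSet_Ioo
    (integrableOn_div_one_sub_rpow ha ha') (tendstoUniformlyOn_slopeRatio_rpow hφ hφ' a)
    ((eventually_aemeasurable_slopeRatio hφ).mono fun _ h =>
      (h.pow_const a).aestronglyMeasurable)
  rw [one_smul, integral_div_one_sub_rpow ha ha'] at hlim
  refine hlim.congr' ?_
  filter_upwards [self_mem_nhdsWithin, eventually_slopeRatio_nonneg hφ hφ'] with δ hδ hnonneg
  rw [one_div, ← smul_eq_mul, inv_smul_integral_Ioo_sub _ r hδ]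
  refine setIntegral_congr_fun measurableSet_Ioo fun t ht => ?_
  rw [smul_eq_mul, sub_div_sub_eq_mul_slopeRatio hδ.ne',
    mul_rpow (div_nonneg ht.1.le (sub_nonneg.2 ht.2.le)) (hnonneg t ht), mul_comm]

theorem ratio_integral_limit_beta
    (α : ℝ) (hα0 : 0 < α) (hα2 : α < 2) (r : ℝ) (hr : 0 < r) :
    Tendsto (fun δ : ℝ =>
        (1 / δ) * ∫ ρ in Ioo (r - δ) r,
          ((ρ ^ 2 - (r - δ) ^ 2) / (r ^ 2 - ρ ^ 2)) ^ (α / 2))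
      (nhdsWithin 0 (Ioi 0))
      (nhds (Real.Gamma (1 - α / 2) * Real.Gamma (1 + α / 2))) :=
  ratio_integral_limit_beta_general (hasStrictDerivAt_pow 2 r) (by positivity)
    (by linarith) (by linarith)
end

section
/- Let r > 0, set D = Γ(d/2) / (Γ((d-α)/2) Γ(α/2)) and, for 0 < s ≤ ρ, P(ρ,s) = D ∫_0^{(ρ^2/s^2)-1} (u+1)^{-d/2} u^{α/2-1} du. Then lim_{δ→0+} (1/δ) ∫_{r-δ}^{r} P(ρ, r-δ) · (r^2 - ρ^2)^{-α/2} dρ = (2/α) D Γ(1-α/2) Γ(1+α/2) r^{-α}. (This is the limit (5.7) computed in the proof of Theorem 1.1.) -/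
open MeasureTheory Real Set Filter

/-!
The inner integral over `(0, M)` is `M ^ a / a` times a Beta-weighted mean of its kernel, with
`a = α / 2`, and this mean extends continuously to `M = 0`. Since `M = ρ² / s² - 1` and `r² - ρ²`
factor through `ρ - s` and `r - ρ`, the outer integrand is `(ρ - s) ^ a * (r - ρ) ^ (-a)` times a
function of `(s, ρ)` continuous up to the corner `(r, r)`. The outer integral is thus again a Beta
mean, rescaled to `(s, r)`; its sample points collapse to `r` as `s` increases to `r`, so that only
the corner value of the continuous factor survives.
-/

lemma continuousOn_setIntegral_of_isCompact {X Y E : Type*} [TopologicalSpace X]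
    [TopologicalSpace Y] [T2Space Y] [MeasurableSpace Y] [OpensMeasurableSpace Y]
    [NormedAddCommGroup E] [NormedSpace ℝ E] {μ : Measure Y} [IsFiniteMeasureOnCompacts μ]
    {f : X → Y → E} {s : Set X} {K : Set Y} (hK : IsCompact K)
    (hf : ContinuousOn (Function.uncurry f) (s ×ˢ K)) :
    ContinuousOn (fun x => ∫ y in K, f x y ∂μ) s := by
  have : CompactSpace K := isCompact_iff_compactSpace.mp hK
  have : IsFiniteMeasureOnCompacts (μ.comap ((↑) : K → Y)) :=
    .comap' μ continuous_subtype_val (.subtype_coe hK.measurableSet)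
  simp_rw [← integral_subtype_comap hK.measurableSet]
  refine continuousOn_integral_of_compact_support (f := fun x (y : K) => f x y)
    isCompact_univ ?_ (by simp)
  exact hf.comp (f := fun z : X × K => (z.1, (z.2 : Y))) (by fun_prop) fun z hz => ⟨hz.1, z.2.2⟩

section BetaLaw

open ProbabilityTheory

variable {p q : ℝ}

lemma beta_mul_integral_betaMeasure (hp : 0 < p) (hq : 0 < q) (f : ℝ → ℝ) :
    beta p q * ∫ t, f t ∂betaMeasure p q =
      ∫ t in Ioo 0 1, t ^ (p - 1) * (1 - t) ^ (q - 1) * f t := by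
  rw [betaMeasure, integral_withDensity_eq_integral_toReal_smul (by unfold betaPDF; fun_prop)
    (ae_of_all _ fun t => by simp [betaPDF]), ← integral_const_mul,
    ← integral_indicator measurableSet_Ioo]
  congr 1 with t
  by_cases ht : 0 < t ∧ t < 1
  · have hbeta := (beta_pos hp hq).ne'
    rw [indicator_of_mem (mem_Ioo.mpr ht), betaPDF,
      ENNReal.toReal_ofReal (betaPDFReal_pos ht.1 ht.2 hp hq).le, betaPDFReal, if_pos ht,
      smul_eq_mul]
    field_simp
  · rw [indicator_of_notMem (mt mem_Ioo.mp ht), betaPDF, betaPDFReal, if_neg ht]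
    simp

lemma restrict_Icc_betaMeasure : (betaMeasure p q).restrict (Icc 0 1) = betaMeasure p q := by
  rw [betaMeasure, restrict_withDensity measurableSet_Icc,
    ← withDensity_indicator measurableSet_Icc]
  congr 1 with t
  refine indicator_apply_eq_self.mpr fun ht => ?_
  rw [betaPDF_eq, if_neg fun h => ht ⟨h.1.le, h.2.le⟩, ENNReal.ofReal_zero]

lemma continuousOn_integral_betaMeasure {X : Type*} [TopologicalSpace X] (hp : 0 < p) (hq : 0 < q)
    {f : X → ℝ → ℝ} {s : Set X} (hf : ContinuousOn (Function.uncurry f) (s ×ˢ Icc 0 1)) :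
    ContinuousOn (fun x => ∫ t, f x t ∂betaMeasure p q) s := by
  have := isProbabilityMeasureBeta hp hq
  rw [← restrict_Icc_betaMeasure]
  exact continuousOn_setIntegral_of_isCompact isCompact_Icc hf

lemma setIntegral_rpow_mul_rpow_mul_eq_integral_betaMeasure (hp : 0 < p) (hq : 0 < q)
    (f : ℝ → ℝ) {s r : ℝ} (hsr : s < r) :
    ∫ x in Ioo s r, (x - s) ^ (p - 1) * (r - x) ^ (q - 1) * f x =
      (r - s) ^ (p + q - 1) * (beta p q * ∫ t, f (s + (r - s) * t) ∂betaMeasure p q) := by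
  have hδ : 0 < r - s := sub_pos.mpr hsr
  have hsubst := intervalIntegral.smul_integral_comp_add_mul (a := 0) (b := 1)
    (fun x => (x - s) ^ (p - 1) * (r - x) ^ (q - 1) * f x) (r - s) s
  rw [mul_zero, add_zero, mul_one, add_sub_cancel, smul_eq_mul,
    intervalIntegral.integral_of_le hsr.le, intervalIntegral.integral_of_le zero_le_one,
    integral_Ioc_eq_integral_Ioo, integral_Ioc_eq_integral_Ioo] at hsubst
  rw [← hsubst, beta_mul_integral_betaMeasure hp hq, ← integral_const_mul, ← integral_const_mul]
  refine setIntegral_congr_fun measurableSet_Ioo fun t ht => ?_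
  have hleft : s + (r - s) * t - s = (r - s) * t := by ring
  have hright : r - (s + (r - s) * t) = (r - s) * (1 - t) := by ring
  have hscale : (r - s) ^ (p + q - 1) = (r - s) * (r - s) ^ (p - 1) * (r - s) ^ (q - 1) := by
    rw [← rpow_one_add' hδ.le (by simpa using hp.ne'), ← rpow_add hδ]
    ring_nf
  simp only [hleft, hright, hscale, mul_rpow hδ.le ht.1.le, mul_rpow hδ.le (sub_pos.mpr ht.2).le]
  ring

lemma tendsto_setIntegral_rpow_mul_rpow_mul (hp : 0 < p) (hq : 0 < q) {f : ℝ → ℝ → ℝ} {c r : ℝ}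
    (hc : c < r) (hf : ContinuousOn (Function.uncurry f) {z | z.1 ∈ Ioc c r ∧ z.2 ∈ Icc z.1 r}) :
    Tendsto (fun s => (r - s) ^ (1 - p - q) *
        ∫ x in Ioo s r, (x - s) ^ (p - 1) * (r - x) ^ (q - 1) * f s x)
      (nhdsWithin r (Iio r)) (nhds (beta p q * f r r)) := by
  have := isProbabilityMeasureBeta hp hq
  have hcont : ContinuousOn (fun s => ∫ t, f s (s + (r - s) * t) ∂betaMeasure p q) (Ioc c r) := by
    refine continuousOn_integral_betaMeasure hp hq (hf.comp
      (f := fun z : ℝ × ℝ => (z.1, z.1 + (r - z.1) * z.2)) (by fun_prop) ?_)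
    rintro ⟨s, t⟩ ⟨hs, ht⟩
    exact ⟨hs, by nlinarith [hs.2, ht.1], by nlinarith [hs.2, ht.2]⟩
  have hmean : Tendsto (fun s => ∫ t, f s (s + (r - s) * t) ∂betaMeasure p q)
      (nhdsWithin r (Iio r)) (nhds (f r r)) := by
    have h := (hcont r ⟨hc, le_rfl⟩).mono_of_mem_nhdsWithin (mem_of_superset
      (Ioo_mem_nhdsLT hc) Ioo_subset_Ioc_self)
    simpa only [ContinuousWithinAt, sub_self, zero_mul, add_zero, integral_const, probReal_univ,
      one_smul] using h
  refine (hmean.const_mul (beta p q)).congr' ?_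
  filter_upwards [self_mem_nhdsWithin] with s hs
  have hexp : 1 - p - q + (p + q - 1) = 0 := by ring
  rw [setIntegral_rpow_mul_rpow_mul_eq_integral_betaMeasure hp hq _ hs, ← mul_assoc,
    ← rpow_add (sub_pos.mpr hs), hexp, rpow_zero, one_mul]

lemma beta_one_right {a : ℝ} (ha : 0 < a) : beta a 1 = 1 / a := by
  rw [beta, Gamma_one, Gamma_add_one ha.ne']
  have := (Gamma_pos_of_pos ha).ne'
  field_simp

/-- The mean of `w` over `(0, x)` with respect to the probability density `a * u ^ (a - 1) / x ^ a`.
Pulling it back to `(0, 1)`, where the density is that of the Beta law with parameters `a` and `1`,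
makes it meaningful at `x = 0`. -/
noncomputable def rpowWeightedMean (a : ℝ) (w : ℝ → ℝ) (x : ℝ) : ℝ :=
  ∫ t, w (x * t) ∂betaMeasure a 1

variable {a : ℝ} {w : ℝ → ℝ}

lemma setIntegral_mul_rpow_eq_rpowWeightedMean (ha : 0 < a) {x : ℝ} (hx : 0 < x) :
    ∫ u in Ioo 0 x, w u * u ^ (a - 1) = x ^ a / a * rpowWeightedMean a w x := by
  have h := setIntegral_rpow_mul_rpow_mul_eq_integral_betaMeasure ha one_pos w hx
  simp only [sub_zero, sub_self, rpow_zero, mul_one, zero_add, add_sub_cancel_right,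
    beta_one_right ha] at h
  simp only [mul_comm (w _), h, rpowWeightedMean]
  ring

lemma rpowWeightedMean_zero (ha : 0 < a) : rpowWeightedMean a w 0 = w 0 := by
  have := isProbabilityMeasureBeta ha one_pos
  simp [rpowWeightedMean]

lemma continuousOn_rpowWeightedMean (ha : 0 < a) (hw : ContinuousOn w (Ici 0)) :
    ContinuousOn (rpowWeightedMean a w) (Ici 0) :=
  continuousOn_integral_betaMeasure ha one_pos <|
    hw.comp (f := fun z : ℝ × ℝ => z.1 * z.2) (by fun_prop) fun _ hz => mul_nonneg hz.1 hz.2.1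

/-- The factor of `(∫ u in 0..x ^ 2 / s ^ 2 - 1, w u * u ^ (a - 1)) * (r ^ 2 - x ^ 2) ^ (-a)` that
is left after removing the endpoint singularities `(x - s) ^ a * (r - x) ^ (-a)`. It is jointly
continuous in the inner radius `s` and the radius `x`, up to and including `s = x = r`. -/
noncomputable def boundaryFactor (a : ℝ) (w : ℝ → ℝ) (r s x : ℝ) : ℝ :=
  rpowWeightedMean a w (x ^ 2 / s ^ 2 - 1) * (((x + s) / s ^ 2) ^ a * (r + x) ^ (-a)) / a

lemma setIntegral_mul_sq_sub_sq_rpow_eq (ha : 0 < a) {r s x : ℝ} (hs : 0 < s)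
    (hx : x ∈ Ioo s r) :
    (∫ u in Ioo 0 (x ^ 2 / s ^ 2 - 1), w u * u ^ (a - 1)) * (r ^ 2 - x ^ 2) ^ (-a) =
      (x - s) ^ a * (r - x) ^ (-a) * boundaryFactor a w r s x := by
  have hxs : 0 < x - s := sub_pos.mpr hx.1
  have hrx : 0 < r - x := sub_pos.mpr hx.2
  have hx0 : 0 < x := hs.trans hx.1
  have hr : 0 < r := hx0.trans hx.2
  have hinner : x ^ 2 / s ^ 2 - 1 = (x - s) * ((x + s) / s ^ 2) := by field_simp; ring
  have houter : r ^ 2 - x ^ 2 = (r - x) * (r + x) := by ring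
  have hpos : 0 < x ^ 2 / s ^ 2 - 1 := by rw [hinner]; positivity
  rw [setIntegral_mul_rpow_eq_rpowWeightedMean ha hpos, boundaryFactor, houter,
    mul_rpow hrx.le (by positivity)]
  nth_rw 1 [hinner]
  rw [mul_rpow hxs.le (by positivity)]
  ring

lemma continuousOn_boundaryFactor (ha : 0 < a) (hw : ContinuousOn w (Ici 0)) {r : ℝ} (hr : 0 < r) :
    ContinuousOn (Function.uncurry (boundaryFactor a w r))
      {z | z.1 ∈ Ioc 0 r ∧ z.2 ∈ Icc z.1 r} := by
  set S : Set (ℝ × ℝ) := {z | z.1 ∈ Ioc 0 r ∧ z.2 ∈ Icc z.1 r}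
  have hne : ∀ z ∈ S, z.1 ^ 2 ≠ 0 := fun z hz => pow_ne_zero 2 hz.1.1.ne'
  have hmean : ContinuousOn (fun z : ℝ × ℝ => rpowWeightedMean a w (z.2 ^ 2 / z.1 ^ 2 - 1)) S := by
    refine (continuousOn_rpowWeightedMean ha hw).comp (by fun_prop (disch := assumption)) ?_
    intro z hz
    exact sub_nonneg.mpr <| (one_le_div (pow_pos hz.1.1 2)).mpr <|
      pow_le_pow_left₀ hz.1.1.le hz.2.1 2
  have hinner : ContinuousOn (fun z : ℝ × ℝ => ((z.2 + z.1) / z.1 ^ 2) ^ a) S :=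
    ContinuousOn.rpow_const (by fun_prop (disch := assumption)) fun _ _ => .inr ha.le
  have houter : ContinuousOn (fun z : ℝ × ℝ => (r + z.2) ^ (-a)) S := by
    refine ContinuousOn.rpow_const (by fun_prop) fun z hz => .inl ?_
    exact (add_pos hr (hz.1.1.trans_le hz.2.1)).ne'
  exact (hmean.mul (hinner.mul houter)).div_const a

lemma boundaryFactor_self (ha : 0 < a) {r : ℝ} (hr : 0 < r) :
    boundaryFactor a w r r r = w 0 / a * r ^ (-(2 * a)) := by
  have hr2 : (r + r) / r ^ 2 = (r + r) * r ^ (-2 : ℝ) := by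
    rw [rpow_neg hr.le, rpow_two, div_eq_mul_inv]
  have h : ((r + r) / r ^ 2) ^ a * (r + r) ^ (-a) = r ^ (-(2 * a)) := by
    rw [hr2, mul_rpow (by positivity) (by positivity), ← rpow_mul hr.le, mul_right_comm,
      ← rpow_add (by positivity), add_neg_cancel, rpow_zero, one_mul, neg_mul]
  rw [boundaryFactor, h, div_self (by positivity), sub_self, rpowWeightedMean_zero ha]
  ring

lemma tendsto_setIntegral_mul_sq_sub_sq_rpow (ha0 : 0 < a) (ha1 : a < 1)
    (hw : ContinuousOn w (Ici 0)) {r : ℝ} (hr : 0 < r) :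
    Tendsto (fun s => (r - s)⁻¹ * ∫ x in Ioo s r,
        (∫ u in Ioo 0 (x ^ 2 / s ^ 2 - 1), w u * u ^ (a - 1)) * (r ^ 2 - x ^ 2) ^ (-a))
      (nhdsWithin r (Iio r))
      (nhds (Gamma (1 + a) * Gamma (1 - a) * (w 0 / a * r ^ (-(2 * a))))) := by
  have h := tendsto_setIntegral_rpow_mul_rpow_mul (p := 1 + a) (q := 1 - a) (by linarith)
    (by linarith) hr (continuousOn_boundaryFactor ha0 hw hr)
  have htwo : 1 + a + (1 - a) = 2 := by ring
  rw [beta, htwo, Gamma_two, div_one, boundaryFactor_self ha0 hr] at h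
  refine h.congr' ?_
  filter_upwards [Ioo_mem_nhdsLT hr] with s hs
  have hexp : 1 - (1 + a) - (1 - a) = -1 := by ring
  rw [hexp, rpow_neg_one]
  congr 1
  refine setIntegral_congr_fun measurableSet_Ioo fun x hx => ?_
  simp only [setIntegral_mul_sq_sub_sq_rpow_eq ha0 hs.1 hx, add_sub_cancel_left,
    sub_sub_cancel_left]

end BetaLaw

theorem escape_probability_boundary_limit_general {α : ℝ} (hα0 : 0 < α) (hα2 : α < 2)
    {r : ℝ} (hr : 0 < r) {w : ℝ → ℝ} (hw : ContinuousOn w (Ici 0)) {P : ℝ → ℝ → ℝ}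
    (hP : ∀ ρ s : ℝ, 0 < s → s ≤ ρ →
      P ρ s = ∫ u in Ioo (0 : ℝ) (ρ ^ 2 / s ^ 2 - 1), w u * u ^ (α / 2 - 1)) :
    Tendsto (fun δ : ℝ =>
        (1 / δ) * ∫ ρ in Ioo (r - δ) r, P ρ (r - δ) * (r ^ 2 - ρ ^ 2) ^ (-(α / 2)))
      (nhdsWithin 0 (Ioi 0))
      (nhds ((2 / α) * w 0 * Gamma (1 - α / 2) * Gamma (1 + α / 2) * r ^ (-α))) := by
  have hshift : Tendsto (fun δ : ℝ => r - δ) (nhdsWithin 0 (Ioi 0)) (nhdsWithin r (Iio r)) := by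
    refine tendsto_nhdsWithin_iff.mpr ⟨?_, ?_⟩
    · exact (Continuous.tendsto' (by fun_prop) _ _ (sub_zero r)).mono_left nhdsWithin_le_nhds
    · filter_upwards [self_mem_nhdsWithin] with δ hδ using sub_lt_self r hδ
  have hlim :=
    (tendsto_setIntegral_mul_sq_sub_sq_rpow (half_pos hα0) (by linarith) hw hr).comp hshift
  have hvalue : Gamma (1 + α / 2) * Gamma (1 - α / 2) * (w 0 / (α / 2) * r ^ (-(2 * (α / 2)))) =
      2 / α * w 0 * Gamma (1 - α / 2) * Gamma (1 + α / 2) * r ^ (-α) := by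
    rw [mul_div_cancel₀ α two_ne_zero]
    ring
  rw [hvalue] at hlim
  refine hlim.congr' ?_
  filter_upwards [Ioo_mem_nhdsGT hr] with δ hδ
  rw [Function.comp_apply, sub_sub_cancel, one_div]
  congr 1
  refine setIntegral_congr_fun measurableSet_Ioo fun ρ hρ => ?_
  simp only [hP ρ (r - δ) (sub_pos.mpr hδ.2) hρ.1.le]

theorem escape_probability_boundary_limit
    (d : ℕ) (hd : 2 ≤ d) (α : ℝ) (hα0 : 0 < α) (hα2 : α < 2)
    (r : ℝ) (hr : 0 < r)
    (D : ℝ) (hD : D = Real.Gamma ((d : ℝ) / 2) /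
      (Real.Gamma (((d : ℝ) - α) / 2) * Real.Gamma (α / 2)))
    (P : ℝ → ℝ → ℝ)
    (hP : ∀ ρ s : ℝ, 0 < s → s ≤ ρ →
      P ρ s = D * ∫ u in Ioo (0 : ℝ) ((ρ ^ 2 / s ^ 2) - 1),
        (u + 1) ^ (-(d : ℝ) / 2) * u ^ (α / 2 - 1)) :
    Tendsto (fun δ : ℝ =>
        (1 / δ) * ∫ ρ in Ioo (r - δ) r, P ρ (r - δ) * (r ^ 2 - ρ ^ 2) ^ (-(α / 2)))
      (nhdsWithin 0 (Ioi 0))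
      (nhds ((2 / α) * D * Real.Gamma (1 - α / 2) * Real.Gamma (1 + α / 2) * r ^ (-α))) := by
  have hw : ContinuousOn (fun u : ℝ => D * (u + 1) ^ (-(d : ℝ) / 2)) (Ici 0) := by
    refine continuousOn_const.mul (ContinuousOn.rpow_const (by fun_prop) fun u hu => .inl ?_)
    exact (add_pos_of_nonneg_of_pos hu one_pos).ne'
  simpa using escape_probability_boundary_limit_general hα0 hα2 hr hw
    (by simpa only [mul_assoc, integral_const_mul] using hP)
end

section
/- Let K denote inversion through the unit sphere, Kx = x/|x|^2 for x ∈ ℝ^d \ {0}, and for a, b ∈ ℝ^d with a ≠ b define h(a,b) = 2^{-α} π^{-d/2} (Γ(d/2)/Γ(α/2)^2) |a-b|^{α-d} ∫_0^{(1-|a|^2)(1-|b|^2)/|a-b|^2} (u+1)^{-d/2} u^{α/2-1} du. Then for all x, z ∈ ℝ^d with |x| > 1, |z| > 1 and x ≠ z, one has (|x|^{α-d}/|z|^{α-d}) · (|z|^{2α}/|z|^{2d}) · h(Kx, Kz) = 2^{-α} π^{-d/2} (Γ(d/2)/Γ(α/2)^2) |x-z|^{α-d} ∫_0^{(|x|^2-1)(|z|^2-1)/|x-z|^2}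 (u+1)^{-d/2} u^{α/2-1} du; in particular |Kx - Kz| = |x-z|/(|x||z|) and (1-|Kx|^2)(1-|Kz|^2)/|Kx-Kz|^2 = (|x|^2-1)(|z|^2-1)/|x-z|^2. (This is the content of Lemma 6.1, transforming the resolvent density inside the unit ball into the resolvent density outside it via the Riesz–Bogdan–Żak transform.) -/
open MeasureTheory Real Set

/-- Inversion through the unit sphere: `K x = x / |x|²`. -/
noncomputable def sphereInversion {d : ℕ} (x : EuclideanSpace ℝ (Fin d)) :
    EuclideanSpace ℝ (Fin d) :=
  (‖x‖ ^ 2)⁻¹ • x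

/-- The resolvent density `h(a,b)` of the stable process killed on exiting the unit ball. -/
noncomputable def ballResolvent (d : ℕ) (α : ℝ) (a b : EuclideanSpace ℝ (Fin d)) : ℝ :=
  2 ^ (-α) * π ^ (-(d : ℝ) / 2) * (Real.Gamma ((d : ℝ) / 2) / Real.Gamma (α / 2) ^ 2) *
    ‖a - b‖ ^ (α - (d : ℝ)) *
    ∫ u in Ioo (0 : ℝ) ((1 - ‖a‖ ^ 2) * (1 - ‖b‖ ^ 2) / ‖a - b‖ ^ 2),
      (u + 1) ^ (-(d : ℝ) / 2) * u ^ (α / 2 - 1)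

/-!
The formula defining `h` makes sense off the unit ball, and there it is already the exterior
density: the upper limit of the integral does not change when both factors `1 - |·|²` change sign.
So the claim is that `h` is covariant under the inversion `K`. The upper limit is invariant under
`K`, because `|K x - K z| = |x - z| / (|x| |z|)` scales its numerator and its denominator by the
same factor, and the prefactor `|x - z| ^ (α - d)` picks up `(|x| |z|) ^ (d - α)`, which the powers
of `|x|` and `|z|` in the transform cancel.
-/

section Inversion

variable {d : ℕ}

theorem sphereInversion_eq_inversion (x : EuclideanSpace ℝ (Fin d)) :
    sphereInversion x = EuclideanGeometry.inversion 0 1 x := by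
  simp [sphereInversion, EuclideanGeometry.inversion]

theorem norm_sphereInversion (x : EuclideanSpace ℝ (Fin d)) :
    ‖sphereInversion x‖ = ‖x‖⁻¹ := by
  simpa [sphereInversion_eq_inversion] using
    EuclideanGeometry.dist_inversion_center (0 : EuclideanSpace ℝ (Fin d)) x 1

variable {x z : EuclideanSpace ℝ (Fin d)}

theorem norm_sphereInversion_sub_sphereInversion (hx : x ≠ 0) (hz : z ≠ 0) :
    ‖sphereInversion x - sphereInversion z‖ = ‖x - z‖ / (‖x‖ * ‖z‖) := by
  simpa [sphereInversion_eq_inversion, dist_eq_norm, div_eq_inv_mul] using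
    EuclideanGeometry.dist_inversion_inversion hx hz 1

theorem one_sub_norm_sq_mul_div_norm_sub_sq_sphereInversion (hx : x ≠ 0) (hz : z ≠ 0) :
    (1 - ‖sphereInversion x‖ ^ 2) * (1 - ‖sphereInversion z‖ ^ 2) /
        ‖sphereInversion x - sphereInversion z‖ ^ 2
      = (1 - ‖x‖ ^ 2) * (1 - ‖z‖ ^ 2) / ‖x - z‖ ^ 2 := by
  have hx' : ‖x‖ ≠ 0 := norm_ne_zero_iff.2 hx
  have hz' : ‖z‖ ≠ 0 := norm_ne_zero_iff.2 hz
  rw [norm_sphereInversion, norm_sphereInversion,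
    norm_sphereInversion_sub_sphereInversion hx hz]
  field_simp
  ring

theorem ballResolvent_sphereInversion (α : ℝ) (hx : x ≠ 0) (hz : z ≠ 0) :
    (‖x‖ * ‖z‖) ^ (α - (d : ℝ)) * ballResolvent d α (sphereInversion x) (sphereInversion z)
      = ballResolvent d α x z := by
  have hpos : 0 < ‖x‖ * ‖z‖ := mul_pos (norm_pos_iff.2 hx) (norm_pos_iff.2 hz)
  have hprefactor : (‖x‖ * ‖z‖) ^ (α - (d : ℝ)) *
      ‖sphereInversion x - sphereInversion z‖ ^ (α - (d : ℝ)) = ‖x - z‖ ^ (α - (d : ℝ)) := by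
    rw [← mul_rpow hpos.le (norm_nonneg _), norm_sphereInversion_sub_sphereInversion hx hz,
      mul_div_cancel₀ _ hpos.ne']
  rw [ballResolvent, one_sub_norm_sq_mul_div_norm_sub_sq_sphereInversion hx hz, ballResolvent,
    ← hprefactor]
  ring

end Inversion

theorem rpow_sub_div_mul_rpow_two_mul_div_pow {r s : ℝ} (hr : 0 ≤ r) (hs : 0 < s) (α : ℝ)
    (d : ℕ) :
    r ^ (α - (d : ℝ)) / s ^ (α - (d : ℝ)) * (s ^ (2 * α) / s ^ (2 * d))
      = (r * s) ^ (α - (d : ℝ)) := by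
  have hweight : s ^ (2 * α) / s ^ (2 * d) = s ^ (α - (d : ℝ)) * s ^ (α - (d : ℝ)) := by
    rw [← rpow_natCast s (2 * d), ← rpow_sub hs, ← rpow_add hs]
    congr 1
    push_cast
    ring
  have hs' : s ^ (α - (d : ℝ)) ≠ 0 := (rpow_pos_of_pos hs _).ne'
  rw [hweight, mul_rpow hr hs.le]
  field_simp

theorem riesz_bogdan_zak_resolvent_transform_general
    (d : ℕ) (α : ℝ) (hα0 : 0 < α)
    (x z : EuclideanSpace ℝ (Fin d)) (hx : x ≠ 0) (hz : z ≠ 0) (hxz : x ≠ z) :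
    (‖x‖ ^ (α - (d : ℝ)) / ‖z‖ ^ (α - (d : ℝ))) * (‖z‖ ^ (2 * α) / ‖z‖ ^ (2 * d)) *
        ballResolvent d α (sphereInversion x) (sphereInversion z)
      = 2 ^ (-α) * π ^ (-(d : ℝ) / 2) *
          (Real.Gamma ((d : ℝ) / 2) / Real.Gamma (α / 2) ^ 2) * ‖x - z‖ ^ (α - (d : ℝ)) *
          ∫ u in Ioo (0 : ℝ) ((‖x‖ ^ 2 - 1) * (‖z‖ ^ 2 - 1) / ‖x - z‖ ^ 2),
            (u + 1) ^ (-(d : ℝ) / 2) * u ^ (α / 2 - 1)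
    ∧ ‖sphereInversion x - sphereInversion z‖ = ‖x - z‖ / (‖x‖ * ‖z‖)
    ∧ (1 - ‖sphereInversion x‖ ^ 2) * (1 - ‖sphereInversion z‖ ^ 2) /
          ‖sphereInversion x - sphereInversion z‖ ^ 2
        = (‖x‖ ^ 2 - 1) * (‖z‖ ^ 2 - 1) / ‖x - z‖ ^ 2 := by
  have hsign : (1 - ‖x‖ ^ 2) * (1 - ‖z‖ ^ 2) = (‖x‖ ^ 2 - 1) * (‖z‖ ^ 2 - 1) := by ring
  refine ⟨?_, norm_sphereInversion_sub_sphereInversion hx hz, ?_⟩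
  · rw [rpow_sub_div_mul_rpow_two_mul_div_pow (norm_nonneg x) (norm_pos_iff.2 hz),
      ballResolvent_sphereInversion α hx hz, ballResolvent, hsign]
  · rw [one_sub_norm_sq_mul_div_norm_sub_sq_sphereInversion hx hz, hsign]

theorem riesz_bogdan_zak_resolvent_transform
    (d : ℕ) (hd : 2 ≤ d) (α : ℝ) (hα0 : 0 < α) (hα2 : α < 2)
    (x z : EuclideanSpace ℝ (Fin d)) (hx : 1 < ‖x‖) (hz : 1 < ‖z‖) (hxz : x ≠ z) :
    (‖x‖ ^ (α - (d : ℝ)) / ‖z‖ ^ (α - (d : ℝ))) * (‖z‖ ^ (2 * α) / ‖z‖ ^ (2 * d)) *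
        ballResolvent d α (sphereInversion x) (sphereInversion z)
      = 2 ^ (-α) * π ^ (-(d : ℝ) / 2) *
          (Real.Gamma ((d : ℝ) / 2) / Real.Gamma (α / 2) ^ 2) * ‖x - z‖ ^ (α - (d : ℝ)) *
          ∫ u in Ioo (0 : ℝ) ((‖x‖ ^ 2 - 1) * (‖z‖ ^ 2 - 1) / ‖x - z‖ ^ 2),
            (u + 1) ^ (-(d : ℝ) / 2) * u ^ (α / 2 - 1)
    ∧ ‖sphereInversion x - sphereInversion z‖ = ‖x - z‖ / (‖x‖ * ‖z‖)
    ∧ (1 - ‖sphereInversion x‖ ^ 2) * (1 - ‖sphereInversion z‖ ^ 2) /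
          ‖sphereInversion x - sphereInversion z‖ ^ 2
        = (‖x‖ ^ 2 - 1) * (‖z‖ ^ 2 - 1) / ‖x - z‖ ^ 2 := by
  exact riesz_bogdan_zak_resolvent_transform_general d α hα0 x z
    (norm_pos_iff.1 (one_pos.trans hx)) (norm_pos_iff.1 (one_pos.trans hz)) hxz
end
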